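/- arXiv:1411.5033 — 8 statements merged into one kernel-verified Lean document; each statement's English description precedes it below -/
import Mathlib

section
/- For every t ≥ 0 one has the exact energy balance ‖u(t,·)‖²_{L²(ℝ)} + β‖∂ₓu(t,·)‖²_{L²(ℝ)} + 2ε∫₀ᵗ‖∂ₓu(s,·)‖²_{L²(ℝ)} ds + 2βε∫₀ᵗ‖∂ₓ²u(s,·)‖²_{L²(ℝ)} ds = ‖u(0,·)‖²_{L²(ℝ)} + β‖∂ₓu(0,·)‖²_{L²(ℝ)}. -/
open MeasureTheory

namespace KS

/-- Directional derivative of a function of `(t, x)`. -/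
noncomputable def D (v : ℝ × ℝ) (f : ℝ × ℝ → ℝ) : ℝ × ℝ → ℝ := fun p => fderiv ℝ f p v

theorem D_smooth {v : ℝ × ℝ} {f : ℝ × ℝ → ℝ} (hf : ContDiff ℝ (⊤ : ℕ∞) f) :
    ContDiff ℝ (⊤ : ℕ∞) (D v f) := by
  unfold D
  exact (hf.fderiv_right (m := (⊤ : ℕ∞)) (by simp)).clm_apply contDiff_const

theorem hasDerivAt_x {f : ℝ × ℝ → ℝ} (hf : ContDiff ℝ (⊤ : ℕ∞) f) (t x : ℝ) :
    HasDerivAt (fun y => f (t, y)) (D (0, 1) f (t, x)) x := by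
  have h1 : HasFDerivAt f (fderiv ℝ f (t, x)) (t, x) :=
    (hf.differentiable (by simp) (t, x)).hasFDerivAt
  exact h1.comp_hasDerivAt x ((hasDerivAt_const x t).prodMk (hasDerivAt_id x))

theorem hasDerivAt_t {f : ℝ × ℝ → ℝ} (hf : ContDiff ℝ (⊤ : ℕ∞) f) (t x : ℝ) :
    HasDerivAt (fun s => f (s, x)) (D (1, 0) f (t, x)) t := by
  have h1 : HasFDerivAt f (fderiv ℝ f (t, x)) (t, x) :=
    (hf.differentiable (by simp) (t, x)).hasFDerivAt
  exact h1.comp_hasDerivAt t ((hasDerivAt_id t).prodMk (hasDerivAt_const t x))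

theorem D_comm {f : ℝ × ℝ → ℝ} (hf : ContDiff ℝ (⊤ : ℕ∞) f) (v w : ℝ × ℝ) (p : ℝ × ℝ) :
    D v (D w f) p = D w (D v f) p := by
  have hd : DifferentiableAt ℝ (fderiv ℝ f) p :=
    (hf.fderiv_right (m := (⊤ : ℕ∞)) (by simp)).differentiable (by simp) p
  have key : ∀ a b : ℝ × ℝ, D a (D b f) p = fderiv ℝ (fderiv ℝ f) p a b := by
    intro a b
    unfold D
    rw [fderiv_clm_apply hd (differentiableAt_const b)]
    simp
  rw [key, key]
  have hs : IsSymmSndFDerivAt ℝ f p :=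
    (hf.contDiffAt (x := p)).isSymmSndFDerivAt (by
      rw [minSmoothness_of_isRCLikeNormedField]
      exact WithTop.coe_le_coe.mpr le_top)
  exact hs.eq v w

theorem D_zero {f : ℝ × ℝ → ℝ} {R : ℝ} (h : ∀ p : ℝ × ℝ, R < |p.2| → f p = 0) (v : ℝ × ℝ) :
    ∀ p : ℝ × ℝ, R < |p.2| → D v f p = 0 := by
  intro p hp
  have ho : {q : ℝ × ℝ | R < |q.2|} ∈ nhds p :=
    (isOpen_lt continuous_const (by fun_prop)).mem_nhds hp
  have : f =ᶠ[nhds p] fun _ => (0 : ℝ) := by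
    filter_upwards [ho] with q hq using h q hq
  unfold D
  rw [this.fderiv_eq]
  simp

theorem int_eq {g : ℝ → ℝ} {R : ℝ} (h : ∀ x, R < |x| → g x = 0) :
    (∫ x : ℝ, g x) = ∫ x in (-(R + 1))..(R + 1), g x := by
  symm
  apply intervalIntegral.integral_eq_integral_of_support_subset
  intro x hx
  have : |x| ≤ R := by
    by_contra hc
    exact hx (h x (not_le.mp hc))
  have := abs_le.mp this
  constructor <;> linarith [this.1, this.2]

end KS

open KS in
/-- Energy balance for the Kudryashov–Sinelshchikov equation with the
energy-preserving parameter choice `B = 2A/3`, `C = -A/3`. -/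
theorem stmt_0
    (A ε β : ℝ) (hA : A ≠ 0) (hε : 0 < ε) (hβ : 0 < β)
    (u : ℝ → ℝ → ℝ)
    (hu : ContDiff ℝ (⊤ : ℕ∞) (Function.uncurry u))
    (hsupp : ∃ R > (0:ℝ), ∀ t x : ℝ, R ≤ |x| → u t x = 0)
    (hPDE : ∀ t : ℝ, 0 ≤ t → ∀ x : ℝ,
      deriv (fun τ => u τ x) t
        + A * u t x * deriv (u t) x
        + β * deriv (deriv (deriv (u t))) x
        - (2 * A / 3) * β * deriv (fun y => u t y * deriv (deriv (u t)) y) x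
        - (-(A / 3)) * β * deriv (u t) x * deriv (deriv (u t)) x
        - ε * deriv (deriv (u t)) x = 0) :
    ∀ t : ℝ, 0 ≤ t →
      (∫ x : ℝ, (u t x) ^ 2) + β * (∫ x : ℝ, (deriv (u t) x) ^ 2)
        + 2 * ε * (∫ s in (0:ℝ)..t, ∫ x : ℝ, (deriv (u s) x) ^ 2)
        + 2 * β * ε * (∫ s in (0:ℝ)..t, ∫ x : ℝ, (deriv (deriv (u s)) x) ^ 2)
      = (∫ x : ℝ, (u 0 x) ^ 2) + β * (∫ x : ℝ, (deriv (u 0) x) ^ 2) := by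
  obtain ⟨R, hR, hsupp⟩ := hsupp
  intro t ht
  obtain ⟨f, hfdef⟩ : ∃ f, f = Function.uncurry u := ⟨_, rfl⟩
  have hf : ContDiff ℝ (⊤ : ℕ∞) f := hfdef ▸ hu
  have hfu : ∀ s x, u s x = f (s, x) := fun s x => by rw [hfdef]; rfl
  obtain ⟨f1, hf1d⟩ : ∃ g, g = D (0, 1) f := ⟨_, rfl⟩
  obtain ⟨f2, hf2d⟩ : ∃ g, g = D (0, 1) f1 := ⟨_, rfl⟩
  obtain ⟨f3, hf3d⟩ : ∃ g, g = D (0, 1) f2 := ⟨_, rfl⟩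
  obtain ⟨ft, hftd⟩ : ∃ g, g = D (1, 0) f := ⟨_, rfl⟩
  obtain ⟨ftx, hftxd⟩ : ∃ g, g = D (0, 1) ft := ⟨_, rfl⟩
  have hf1 : ContDiff ℝ (⊤ : ℕ∞) f1 := hf1d ▸ D_smooth hf
  have hf2 : ContDiff ℝ (⊤ : ℕ∞) f2 := hf2d ▸ D_smooth hf1
  have hf3 : ContDiff ℝ (⊤ : ℕ∞) f3 := hf3d ▸ D_smooth hf2
  have hft : ContDiff ℝ (⊤ : ℕ∞) ft := hftd ▸ D_smooth hf
  have hftx : ContDiff ℝ (⊤ : ℕ∞) ftx := hftxd ▸ D_smooth hft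
  have d0 : ∀ s x, HasDerivAt (fun y => f (s, y)) (f1 (s, x)) x :=
    fun s x => hf1d ▸ hasDerivAt_x hf s x
  have d1 : ∀ s x, HasDerivAt (fun y => f1 (s, y)) (f2 (s, x)) x :=
    fun s x => hf2d ▸ hasDerivAt_x hf1 s x
  have d2 : ∀ s x, HasDerivAt (fun y => f2 (s, y)) (f3 (s, x)) x :=
    fun s x => hf3d ▸ hasDerivAt_x hf2 s x
  have dt : ∀ s x, HasDerivAt (fun y => ft (s, y)) (ftx (s, x)) x :=
    fun s x => hftxd ▸ hasDerivAt_x hft s x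
  have e0 : ∀ s x, HasDerivAt (fun r => f (r, x)) (ft (s, x)) s :=
    fun s x => hftd ▸ hasDerivAt_t hf s x
  have e1 : ∀ s x, HasDerivAt (fun r => f1 (r, x)) (ftx (s, x)) s := by
    intro s x
    have h := hasDerivAt_t hf1 s x
    rw [hf1d, D_comm hf, ← hftd, ← hftxd, ← hf1d] at h
    exact h
  have z0 : ∀ p : ℝ × ℝ, R < |p.2| → f p = 0 := by
    intro p hp
    rw [hfdef]
    exact hsupp p.1 p.2 hp.le
  have z1 : ∀ p : ℝ × ℝ, R < |p.2| → f1 p = 0 := hf1d ▸ D_zero z0 _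
  have z2 : ∀ p : ℝ × ℝ, R < |p.2| → f2 p = 0 := hf2d ▸ D_zero z1 _
  have zt : ∀ p : ℝ × ℝ, R < |p.2| → ft p = 0 := hftd ▸ D_zero z0 _
  have u0 : ∀ s, u s = fun x => f (s, x) := fun s => funext (hfu s)
  have u1 : ∀ s, deriv (u s) = fun x => f1 (s, x) := by
    intro s; rw [u0]; funext x; exact (d0 s x).deriv
  have u2 : ∀ s, deriv (deriv (u s)) = fun x => f2 (s, x) := by
    intro s; rw [u1]; funext x; exact (d1 s x).deriv
  have u3 : ∀ s, deriv (deriv (deriv (u s))) = fun x => f3 (s, x) := by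
    intro s; rw [u2]; funext x; exact (d2 s x).deriv
  have pde : ∀ s, 0 ≤ s → ∀ x, ft (s, x) + A * f (s, x) * f1 (s, x) + β * f3 (s, x)
      - (2 * A / 3) * β * (f1 (s, x) * f2 (s, x) + f (s, x) * f3 (s, x))
      - (-(A / 3)) * β * f1 (s, x) * f2 (s, x) - ε * f2 (s, x) = 0 := by
    intro s hs x
    have h := hPDE s hs x
    have a1 : deriv (fun τ => u τ x) s = ft (s, x) := by
      simp only [hfu]; exact (e0 s x).deriv
    have a2 : deriv (fun y => u s y * deriv (deriv (u s)) y) x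
        = f1 (s, x) * f2 (s, x) + f (s, x) * f3 (s, x) := by
      rw [u2]; simp only [hfu]; exact ((d0 s x).mul (d2 s x)).deriv
    rw [a1, a2, u3, u2, u1] at h
    simpa only [hfu] using h
  have cf := hf.continuous
  have cf1 := hf1.continuous
  have cf2 := hf2.continuous
  have cf3 := hf3.continuous
  have cft := hft.continuous
  have cftx := hftx.continuous
  clear hPDE
  -- rewrite everything as interval integrals
  have i0 : ∀ s, (∫ x : ℝ, (u s x) ^ 2) = ∫ x in (-(R + 1))..(R + 1), f (s, x) ^ 2 := by
    intro s; simp only [hfu]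
    exact int_eq fun x hx => by simp [z0 (s, x) hx]
  have i1 : ∀ s, (∫ x : ℝ, (deriv (u s) x) ^ 2)
      = ∫ x in (-(R + 1))..(R + 1), f1 (s, x) ^ 2 := by
    intro s; simp only [u1]
    exact int_eq fun x hx => by simp [z1 (s, x) hx]
  have i2 : ∀ s, (∫ x : ℝ, (deriv (deriv (u s)) x) ^ 2)
      = ∫ x in (-(R + 1))..(R + 1), f2 (s, x) ^ 2 := by
    intro s; simp only [u2]
    exact int_eq fun x hx => by simp [z2 (s, x) hx]
  simp only [i0, i1, i2]
  obtain ⟨a, ha⟩ : ∃ a, a = -(R + 1) := ⟨_, rfl⟩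
  obtain ⟨b, hb⟩ : ∃ b, b = R + 1 := ⟨_, rfl⟩
  rw [← ha, ← hb]
  have hza : R < |a| := by
    rw [ha, abs_neg, abs_of_pos (by linarith)]; linarith
  have hzb : R < |b| := by
    rw [hb, abs_of_pos (by linarith)]; linarith
  -- pointwise-in-time identity
  have main : ∀ s, 0 ≤ s →
      (∫ x in a..b, (2 * f (s, x) * ft (s, x) + β * (2 * f1 (s, x) * ftx (s, x))))
      = -(2 * ε * (∫ x in a..b, f1 (s, x) ^ 2) + 2 * β * ε * ∫ x in a..b, f2 (s, x) ^ 2) := by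
    intro s hs
    have hF : ∀ x, HasDerivAt (fun y => 2 * β * (f1 (s, y) * ft (s, y))
        - 2 * A / 3 * f (s, y) ^ 3 - 2 * β * (f (s, y) * f2 (s, y)) + β * f1 (s, y) ^ 2
        + 4 * A / 3 * β * (f (s, y) ^ 2 * f2 (s, y)) + β ^ 2 * f2 (s, y) ^ 2
        - 2 * A / 3 * β ^ 2 * (f (s, y) * f2 (s, y) ^ 2)
        + 2 * ε * (f (s, y) * f1 (s, y)))
        ((2 * f (s, x) * ft (s, x) + β * (2 * f1 (s, x) * ftx (s, x)))
          + (2 * ε * f1 (s, x) ^ 2 + 2 * β * ε * f2 (s, x) ^ 2)) x := by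
      intro x
      have h := ((((((((d1 s x).mul (dt s x)).const_mul (2 * β)).sub
        (((d0 s x).pow 3).const_mul (2 * A / 3))).sub
        (((d0 s x).mul (d2 s x)).const_mul (2 * β))).add
        (((d1 s x).pow 2).const_mul β)).add
        ((((d0 s x).pow 2).mul (d2 s x)).const_mul (4 * A / 3 * β))).add
        (((d2 s x).pow 2).const_mul (β ^ 2))).sub
        (((d0 s x).mul ((d2 s x).pow 2)).const_mul (2 * A / 3 * β ^ 2)) |>.add
        (((d0 s x).mul (d1 s x)).const_mul (2 * ε))
      refine h.congr_deriv ?_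
      simp only [Pi.pow_apply]
      have hp := pde s hs x
      push_cast
      linear_combination (-2 * (f (s, x) - β * f2 (s, x))) * hp
    have hint := intervalIntegral.integral_eq_sub_of_hasDerivAt (a := a) (b := b)
      (fun x _ => hF x) (Continuous.intervalIntegrable (by fun_prop) _ _)
    rw [intervalIntegral.integral_add (Continuous.intervalIntegrable (by fun_prop) _ _)
      (Continuous.intervalIntegrable (by fun_prop) _ _),
      intervalIntegral.integral_add (μ := volume) (f := fun x => 2 * ε * f1 (s, x) ^ 2)
      (Continuous.intervalIntegrable (by fun_prop) _ _)
      (Continuous.intervalIntegrable (by fun_prop) _ _),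
      intervalIntegral.integral_const_mul, intervalIntegral.integral_const_mul] at hint
    simp only [z0 (s, a) hza, z0 (s, b) hzb, z1 (s, a) hza, z1 (s, b) hzb,
      z2 (s, a) hza, z2 (s, b) hzb] at hint
    linarith
  -- integrate in time and swap
  have swap : (∫ s in (0:ℝ)..t, ∫ x in a..b,
      (2 * f (s, x) * ft (s, x) + β * (2 * f1 (s, x) * ftx (s, x))))
      = ∫ x in a..b, ∫ s in (0:ℝ)..t,
      (2 * f (s, x) * ft (s, x) + β * (2 * f1 (s, x) * ftx (s, x))) := by
    have hab : a ≤ b := by linarith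
    simp only [intervalIntegral.integral_of_le ht, intervalIntegral.integral_of_le hab]
    apply integral_integral_swap
    rw [Measure.prod_restrict, ← Measure.volume_eq_prod]
    have hK : IsCompact (Set.Icc 0 t ×ˢ Set.Icc a b) := isCompact_Icc.prod isCompact_Icc
    refine IntegrableOn.mono_set (t := Set.Icc 0 t ×ˢ Set.Icc a b) ?_
      (Set.prod_mono Set.Ioc_subset_Icc_self Set.Ioc_subset_Icc_self)
    refine ContinuousOn.integrableOn_compact hK (Continuous.continuousOn ?_)
    unfold Function.uncurry
    fun_prop
  have inner : ∀ x, (∫ s in (0:ℝ)..t,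
      (2 * f (s, x) * ft (s, x) + β * (2 * f1 (s, x) * ftx (s, x))))
      = (f (t, x) ^ 2 + β * f1 (t, x) ^ 2) - (f (0, x) ^ 2 + β * f1 (0, x) ^ 2) := by
    intro x
    refine intervalIntegral.integral_eq_sub_of_hasDerivAt
      (f := fun s => f (s, x) ^ 2 + β * f1 (s, x) ^ 2) (fun s _ => ?_)
      (Continuous.intervalIntegrable (by fun_prop) _ _)
    have h := ((e0 s x).pow 2).add (((e1 s x).pow 2).const_mul β)
    refine h.congr_deriv ?_
    push_cast
    ring
  have lhs : (∫ s in (0:ℝ)..t, ∫ x in a..b,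
      (2 * f (s, x) * ft (s, x) + β * (2 * f1 (s, x) * ftx (s, x))))
      = ∫ s in (0:ℝ)..t, -(2 * ε * (∫ x in a..b, f1 (s, x) ^ 2)
        + 2 * β * ε * ∫ x in a..b, f2 (s, x) ^ 2) := by
    apply intervalIntegral.integral_congr
    intro s hs
    rw [Set.uIcc_of_le ht] at hs
    exact main s hs.1
  have c1 : Continuous fun s => ∫ x in a..b, f1 (s, x) ^ 2 :=
    intervalIntegral.continuous_parametric_intervalIntegral_of_continuous' (by fun_prop) _ _
  have c2 : Continuous fun s => ∫ x in a..b, f2 (s, x) ^ 2 :=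
    intervalIntegral.continuous_parametric_intervalIntegral_of_continuous' (by fun_prop) _ _
  rw [lhs, intervalIntegral.integral_neg,
    intervalIntegral.integral_add (μ := volume)
      (f := fun s => 2 * ε * ∫ x in a..b, f1 (s, x) ^ 2)
      (g := fun s => 2 * β * ε * ∫ x in a..b, f2 (s, x) ^ 2)
      ((continuous_const.mul c1).intervalIntegrable _ _)
      ((continuous_const.mul c2).intervalIntegrable _ _),
    intervalIntegral.integral_const_mul, intervalIntegral.integral_const_mul] at swap
  simp only [inner] at swap
  rw [intervalIntegral.integral_sub (Continuous.intervalIntegrable (by fun_prop) _ _)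
      (Continuous.intervalIntegrable (by fun_prop) _ _),
    intervalIntegral.integral_add (Continuous.intervalIntegrable (by fun_prop) _ _)
      (Continuous.intervalIntegrable (by fun_prop) _ _),
    intervalIntegral.integral_add (Continuous.intervalIntegrable (by fun_prop) _ _)
      (Continuous.intervalIntegrable (by fun_prop) _ _),
    intervalIntegral.integral_const_mul, intervalIntegral.integral_const_mul] at swap
  linarith
end

section
/- If C₀ > 0 satisfies ‖u(0,·)‖²_{L²(ℝ)} + β‖∂ₓu(0,·)‖²_{L²(ℝ)} ≤ C₀, then for every t ≥ 0, ‖u(t,·)‖²_{L²(ℝ)} + β‖∂ₓu(t,·)‖²_{L²(ℝ)} + 2ε∫₀ᵗ‖∂ₓu(s,·)‖²_{L²(ℝ)} ds + 2βε∫₀ᵗ‖∂ₓ²u(s,·)‖²_{L²(ℝ)} ds ≤ C₀. -/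
open MeasureTheory

/-- directional derivative of a function on the plane -/
noncomputable def ksD (e : ℝ × ℝ) (f : ℝ × ℝ → ℝ) : ℝ × ℝ → ℝ := fun p => fderiv ℝ f p e

lemma ksD_contDiff (e : ℝ × ℝ) {f : ℝ × ℝ → ℝ} (hf : ContDiff ℝ (⊤ : ℕ∞) f) :
    ContDiff ℝ (⊤ : ℕ∞) (ksD e f) :=
  (hf.fderiv_right (m := ((⊤ : ℕ∞) : WithTop ℕ∞)) (by simp)).clm_apply contDiff_const

lemma ksD_x {f : ℝ × ℝ → ℝ} (hf : ContDiff ℝ (⊤ : ℕ∞) f) (t x : ℝ) :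
    HasDerivAt (fun y => f (t, y)) (ksD (0, 1) f (t, x)) x := by
  have h1 : HasFDerivAt f (fderiv ℝ f (t, x)) (t, x) :=
    (hf.differentiable (by simp) (t, x)).hasFDerivAt
  have h2 : HasDerivAt (fun y : ℝ => (t, y)) ((0 : ℝ), (1 : ℝ)) x :=
    (hasDerivAt_const x t).prodMk (hasDerivAt_id x)
  exact h1.comp_hasDerivAt x h2

lemma ksD_t {f : ℝ × ℝ → ℝ} (hf : ContDiff ℝ (⊤ : ℕ∞) f) (t x : ℝ) :
    HasDerivAt (fun s => f (s, x)) (ksD (1, 0) f (t, x)) t := by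
  have h1 : HasFDerivAt f (fderiv ℝ f (t, x)) (t, x) :=
    (hf.differentiable (by simp) (t, x)).hasFDerivAt
  have h2 : HasDerivAt (fun y : ℝ => (y, x)) ((1 : ℝ), (0 : ℝ)) t :=
    (hasDerivAt_id t).prodMk (hasDerivAt_const t x)
  exact h1.comp_hasDerivAt t h2

lemma ksD_comm {f : ℝ × ℝ → ℝ} (hf : ContDiff ℝ (⊤ : ℕ∞) f) (a b : ℝ × ℝ) (p : ℝ × ℝ) :
    ksD a (ksD b f) p = ksD b (ksD a f) p := by
  have hd : DifferentiableAt ℝ (fderiv ℝ f) p :=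
    ((hf.fderiv_right (m := ((⊤ : ℕ∞) : WithTop ℕ∞)) (by simp)).differentiable (by simp)) p
  have key : ∀ c d : ℝ × ℝ, ksD c (ksD d f) p = fderiv ℝ (fderiv ℝ f) p c d := by
    intro c d
    have := (hd.hasFDerivAt.clm_apply (hasFDerivAt_const d p)).fderiv
    unfold ksD
    rw [this]
    simp
  rw [key, key]
  exact (hf.contDiffAt.isSymmSndFDerivAt (by
    rw [minSmoothness_of_isRCLikeNormedField]
    exact WithTop.coe_le_coe.2 (le_top : (2 : ℕ∞) ≤ ⊤))) a b

lemma ks_swap {f : ℝ × ℝ → ℝ} (hf : Continuous f) (a b c d : ℝ) :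
    ∫ x in a..b, ∫ y in c..d, f (x, y) = ∫ y in c..d, ∫ x in a..b, f (x, y) := by
  apply intervalIntegral_intervalIntegral_swap (F := fun x y => f (x, y))
  have : IntegrableOn f (Set.uIcc a b ×ˢ Set.uIcc c d) :=
    hf.continuousOn.integrableOn_compact (isCompact_uIcc.prod isCompact_uIcc)
  exact this.mono_set (Set.prod_mono Set.uIoc_subset_uIcc Set.uIoc_subset_uIcc)

lemma ksD_zero {f : ℝ × ℝ → ℝ} (hf : ContDiff ℝ (⊤ : ℕ∞) f) {R : ℝ}
    (h : ∀ t x : ℝ, R < |x| → f (t, x) = 0) :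
    ∀ t x : ℝ, R < |x| → ksD (0, 1) f (t, x) = 0 := by
  intro t x hx
  have h0 : (fun y => f (t, y)) =ᶠ[nhds x] fun _ => 0 := by
    filter_upwards [(isOpen_lt continuous_const continuous_abs).mem_nhds hx] with y hy
    exact h t y hy
  exact (ksD_x hf t x).unique ((hasDerivAt_const x (0 : ℝ)).congr_of_eventuallyEq h0)

lemma ks_int {g : ℝ → ℝ} {R : ℝ} (h : ∀ x : ℝ, R < |x| → g x = 0) :
    ∫ x : ℝ, (g x) ^ 2 = ∫ x in (-(R + 1))..(R + 1), (g x) ^ 2 := by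
  rw [intervalIntegral.integral_eq_integral_of_support_subset]
  intro x hx
  have : ¬ R < |x| := fun h' => hx (by simp [h x h'])
  have := abs_le.1 (not_lt.1 this)
  constructor <;> linarith

/-- A priori `L²` estimate for the Kudryashov–Sinelshchikov equation with the
energy-preserving parameter choice `B = 2A/3`, `C = -A/3`. -/
theorem stmt_1
    (A ε β C₀ : ℝ) (hA : A ≠ 0) (hε : 0 < ε) (hβ : 0 < β) (hC₀pos : 0 < C₀)
    (u : ℝ → ℝ → ℝ)
    (hu : ContDiff ℝ (⊤ : ℕ∞) (Function.uncurry u))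
    (hsupp : ∃ R > (0:ℝ), ∀ t x : ℝ, R ≤ |x| → u t x = 0)
    (hPDE : ∀ t : ℝ, 0 ≤ t → ∀ x : ℝ,
      deriv (fun τ => u τ x) t
        + A * u t x * deriv (u t) x
        + β * deriv (deriv (deriv (u t))) x
        - (2 * A / 3) * β * deriv (fun y => u t y * deriv (deriv (u t)) y) x
        - (-(A / 3)) * β * deriv (u t) x * deriv (deriv (u t)) x
        - ε * deriv (deriv (u t)) x = 0)
    (hC₀ : (∫ x : ℝ, (u 0 x) ^ 2) + β * (∫ x : ℝ, (deriv (u 0) x) ^ 2) ≤ C₀) :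
    ∀ t : ℝ, 0 ≤ t →
      (∫ x : ℝ, (u t x) ^ 2) + β * (∫ x : ℝ, (deriv (u t) x) ^ 2)
        + 2 * ε * (∫ s in (0:ℝ)..t, ∫ x : ℝ, (deriv (u s) x) ^ 2)
        + 2 * β * ε * (∫ s in (0:ℝ)..t, ∫ x : ℝ, (deriv (deriv (u s)) x) ^ 2)
      ≤ C₀ := by
  obtain ⟨R, hR, hs⟩ := hsupp
  set f : ℝ × ℝ → ℝ := Function.uncurry u with hfdef
  have hf : ContDiff ℝ (⊤ : ℕ∞) f := hu
  obtain ⟨v, hv⟩ : ∃ v, v = ksD (0, 1) f := ⟨_, rfl⟩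
  obtain ⟨w, hw⟩ : ∃ w, w = ksD (0, 1) v := ⟨_, rfl⟩
  obtain ⟨z, hz⟩ : ∃ z, z = ksD (0, 1) w := ⟨_, rfl⟩
  obtain ⟨p, hp⟩ : ∃ p, p = ksD (1, 0) f := ⟨_, rfl⟩
  obtain ⟨q, hq⟩ : ∃ q, q = ksD (0, 1) p := ⟨_, rfl⟩
  have sv : ContDiff ℝ (⊤ : ℕ∞) v := hv ▸ ksD_contDiff _ hf
  have sw : ContDiff ℝ (⊤ : ℕ∞) w := hw ▸ ksD_contDiff _ sv
  have sz : ContDiff ℝ (⊤ : ℕ∞) z := hz ▸ ksD_contDiff _ sw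
  have sp : ContDiff ℝ (⊤ : ℕ∞) p := hp ▸ ksD_contDiff _ hf
  have sq' : ContDiff ℝ (⊤ : ℕ∞) q := hq ▸ ksD_contDiff _ sp
  have dfx : ∀ t x, HasDerivAt (fun y => f (t, y)) (v (t, x)) x := hv ▸ ksD_x hf
  have dvx : ∀ t x, HasDerivAt (fun y => v (t, y)) (w (t, x)) x := hw ▸ ksD_x sv
  have dwx : ∀ t x, HasDerivAt (fun y => w (t, y)) (z (t, x)) x := hz ▸ ksD_x sw
  have dpx : ∀ t x, HasDerivAt (fun y => p (t, y)) (q (t, x)) x := hq ▸ ksD_x sp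
  have dft : ∀ t x, HasDerivAt (fun y => f (y, x)) (p (t, x)) t := hp ▸ ksD_t hf
  have hqe : ksD (1, 0) v = q := by
    rw [hv, hq, hp]
    funext r
    exact ksD_comm hf _ _ r
  have dvt : ∀ t x, HasDerivAt (fun y => v (y, x)) (q (t, x)) t := hqe ▸ ksD_t sv
  have f0 : ∀ t x : ℝ, R < |x| → f (t, x) = 0 := fun t x h => hs t x h.le
  have v0 : ∀ t x : ℝ, R < |x| → v (t, x) = 0 := hv ▸ ksD_zero hf f0
  have w0 : ∀ t x : ℝ, R < |x| → w (t, x) = 0 := hw ▸ ksD_zero sv v0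
  have e1 : ∀ t, deriv (u t) = fun x => v (t, x) := fun t => funext fun x => (dfx t x).deriv
  have e2 : ∀ t, deriv (fun x => v (t, x)) = fun x => w (t, x) :=
    fun t => funext fun x => (dvx t x).deriv
  have e3 : ∀ t, deriv (fun x => w (t, x)) = fun x => z (t, x) :=
    fun t => funext fun x => (dwx t x).deriv
  have e0 : ∀ t x, u t x = f (t, x) := fun _ _ => rfl
  have e4 : ∀ t x, deriv (fun τ => f (τ, x)) t = p (t, x) := fun t x => (dft t x).deriv
  have e5 : ∀ t x, deriv (fun y => f (t, y) * w (t, y)) x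
      = v (t, x) * w (t, x) + f (t, x) * z (t, x) :=
    fun t x => ((dfx t x).mul (dwx t x)).deriv
  simp only [e1, e2, e3, e0, e4, e5] at hPDE hC₀ ⊢
  clear_value f
  intro t ht
  have cf := hf.continuous
  have cv := sv.continuous
  have cw := sw.continuous
  have cz := sz.continuous
  have cp := sp.continuous
  have cq := sq'.continuous
  simp only [fun s => ks_int (f0 s), fun s => ks_int (v0 s), fun s => ks_int (w0 s)] at hC₀ ⊢
  obtain ⟨S, hS⟩ : ∃ S, S = R + 1 := ⟨_, rfl⟩
  rw [← hS] at hC₀ ⊢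
  have hS1 : R < |S| := by rw [hS]; exact lt_of_lt_of_le (by linarith) (le_abs_self _)
  have hS2 : R < |-S| := by rwa [abs_neg]
  -- time derivative of the energy density
  let g : ℝ × ℝ → ℝ := fun r => 2 * f r * p r + β * (2 * v r * q r)
  have cg : Continuous g := by fun_prop
  have ftc_t : ∀ x, ∫ s in (0:ℝ)..t, g (s, x)
      = (f (t, x) ^ 2 + β * v (t, x) ^ 2) - (f (0, x) ^ 2 + β * v (0, x) ^ 2) := by
    intro x
    apply intervalIntegral.integral_eq_sub_of_hasDerivAt
      (f := fun s => f (s, x) ^ 2 + β * v (s, x) ^ 2)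
    · intro s _
      refine (((dft s x).pow 2).add (((dvt s x).pow 2).const_mul β)).congr_deriv ?_
      simp [g]
    · exact (cg.comp (by fun_prop : Continuous fun s : ℝ => (s, x))).intervalIntegrable _ _
  have ftc_x : ∀ s ∈ Set.uIcc 0 t, ∫ x in (-S)..S,
      (g (s, x) + 2 * ε * v (s, x) ^ 2 + 2 * β * ε * w (s, x) ^ 2) = 0 := by
    intro s hs'
    rw [Set.uIcc_of_le ht] at hs'
    have := intervalIntegral.integral_eq_sub_of_hasDerivAt (a := -S) (b := S)
      (f := fun x => 2 * β * (v (s, x) * p (s, x)) - (2 * A / 3) * f (s, x) ^ 3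
        - 2 * β * (f (s, x) * w (s, x)) + β * v (s, x) ^ 2
        + (4 * A / 3) * β * (f (s, x) ^ 2 * w (s, x)) + β ^ 2 * w (s, x) ^ 2
        - (2 * β ^ 2 * A / 3) * (f (s, x) * w (s, x) ^ 2) + 2 * ε * (f (s, x) * v (s, x)))
      (f' := fun x => g (s, x) + 2 * ε * v (s, x) ^ 2 + 2 * β * ε * w (s, x) ^ 2) ?_ ?_
    · rw [this]
      simp [f0 s S hS1, f0 s _ hS2, v0 s S hS1, v0 s _ hS2, w0 s S hS1, w0 s _ hS2]
    · intro x _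
      have F := dfx s x
      have V := dvx s x
      have W := dwx s x
      have P := dpx s x
      refine HasDerivAt.congr_deriv (((((((((V.mul P).const_mul (2 * β)).sub ((F.pow 3).const_mul (2 * A / 3))).sub
        ((F.mul W).const_mul (2 * β))).add ((V.pow 2).const_mul β)).add
        (((F.pow 2).mul W).const_mul ((4 * A / 3) * β))).add ((W.pow 2).const_mul (β ^ 2))).sub
        ((F.mul (W.pow 2)).const_mul (2 * β ^ 2 * A / 3))).add
        ((F.mul V).const_mul (2 * ε))) ?_
      have E := hPDE s hs'.1 x
      simp [g]
      linear_combination (-2 * f (s, x) + 2 * β * w (s, x)) * E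
    · apply Continuous.intervalIntegrable
      fun_prop
  have ii : ∀ h : ℝ × ℝ → ℝ, Continuous h → ∀ s, IntervalIntegrable (fun x => h (s, x)) volume (-S) S :=
    fun h hh s => (hh.comp (by fun_prop : Continuous fun x : ℝ => (s, x))).intervalIntegrable _ _
  have cI : ∀ h : ℝ × ℝ → ℝ, Continuous h →
      IntervalIntegrable (fun s => ∫ x in (-S)..S, h (s, x)) volume 0 t := by
    intro h hh
    apply Continuous.intervalIntegrable
    exact intervalIntegral.continuous_parametric_intervalIntegral_of_continuous' (f := fun s x => h (s, x)) hh _ _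
  have cf2 : Continuous fun r => f r ^ 2 := by fun_prop
  have cv2 : Continuous fun r => v r ^ 2 := by fun_prop
  have cw2 : Continuous fun r => w r ^ 2 := by fun_prop
  have split_x : ∀ s ∈ Set.uIcc 0 t, ∫ x in (-S)..S, g (s, x)
      = -(2 * ε * ∫ x in (-S)..S, v (s, x) ^ 2) - 2 * β * ε * ∫ x in (-S)..S, w (s, x) ^ 2 := by
    intro s hs'
    have h := ftc_x s hs'
    rw [intervalIntegral.integral_add (((ii g cg s)).add ((ii _ cv2 s).const_mul _))
      ((ii _ cw2 s).const_mul _), intervalIntegral.integral_add (ii g cg s)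
      ((ii _ cv2 s).const_mul _), intervalIntegral.integral_const_mul,
      intervalIntegral.integral_const_mul] at h
    linarith
  have L : ∫ s in (0:ℝ)..t, ∫ x in (-S)..S, g (s, x)
      = -(2 * ε * ∫ s in (0:ℝ)..t, ∫ x in (-S)..S, v (s, x) ^ 2)
        - 2 * β * ε * ∫ s in (0:ℝ)..t, ∫ x in (-S)..S, w (s, x) ^ 2 := by
    rw [intervalIntegral.integral_congr split_x, intervalIntegral.integral_sub
      (by exact ((cI _ cv2).const_mul _).neg) ((cI _ cw2).const_mul _), intervalIntegral.integral_neg,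
      intervalIntegral.integral_const_mul, intervalIntegral.integral_const_mul]
  rw [ks_swap cg] at L
  simp only [ftc_t] at L
  rw [intervalIntegral.integral_sub ((ii _ cf2 t).add ((ii _ cv2 t).const_mul _))
      ((ii _ cf2 0).add ((ii _ cv2 0).const_mul _)),
    intervalIntegral.integral_add (ii _ cf2 t) ((ii _ cv2 t).const_mul _),
    intervalIntegral.integral_add (ii _ cf2 0) ((ii _ cv2 0).const_mul _),
    intervalIntegral.integral_const_mul, intervalIntegral.integral_const_mul] at L
  linarith
end

section
/- If C₀ > 0 satisfies ‖u(0,·)‖²_{L²(ℝ)} + β‖∂ₓu(0,·)‖²_{L²(ℝ)} ≤ C₀, then for every t ≥ 0 and every x ∈ ℝ one has u(t,x)⁴ ≤ 4C₀²/β; equivalently, ‖u(t,·)‖_{L^∞(ℝ)} ≤ √2 · C₀^{1/2} · β^{−1/4}. -/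
open MeasureTheory

namespace KS
/-- partial derivative in the second variable -/
noncomputable def Dx (f : ℝ → ℝ → ℝ) : ℝ → ℝ → ℝ := fun t x => deriv (f t) x
/-- partial derivative in the first variable -/
noncomputable def Dt (f : ℝ → ℝ → ℝ) : ℝ → ℝ → ℝ := fun t x => deriv (fun τ => f τ x) t
/-- smoothness -/
def Sm (f : ℝ → ℝ → ℝ) : Prop := ContDiff ℝ (⊤ : ℕ∞) (Function.uncurry f)

lemma hasDx {f} (hf : Sm f) (t x : ℝ) :
    HasDerivAt (f t) (fderiv ℝ (Function.uncurry f) (t, x) (0, 1)) x := by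
  have h1 : HasFDerivAt (Function.uncurry f) (fderiv ℝ (Function.uncurry f) (t, x)) (t, x) :=
    (hf.differentiable (by simp) (t, x)).hasFDerivAt
  have h2 : HasDerivAt (fun y : ℝ => (t, y)) ((0 : ℝ), (1 : ℝ)) x :=
    (hasDerivAt_const x t).prodMk (hasDerivAt_id x)
  exact h1.comp_hasDerivAt x h2

lemma hasDt {f} (hf : Sm f) (t x : ℝ) :
    HasDerivAt (fun τ => f τ x) (fderiv ℝ (Function.uncurry f) (t, x) (1, 0)) t := by
  have h1 : HasFDerivAt (Function.uncurry f) (fderiv ℝ (Function.uncurry f) (t, x)) (t, x) :=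
    (hf.differentiable (by simp) (t, x)).hasFDerivAt
  have h2 : HasDerivAt (fun y : ℝ => (y, x)) ((1 : ℝ), (0 : ℝ)) t :=
    (hasDerivAt_id t).prodMk (hasDerivAt_const t x)
  exact h1.comp_hasDerivAt t h2

lemma Dx_eq {f} (hf : Sm f) : 
    Function.uncurry (Dx f) = fun p => fderiv ℝ (Function.uncurry f) p (0, 1) := by
  ext ⟨t, x⟩; exact (hasDx hf t x).deriv

lemma Dt_eq {f} (hf : Sm f) : 
    Function.uncurry (Dt f) = fun p => fderiv ℝ (Function.uncurry f) p (1, 0) := by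
  ext ⟨t, x⟩; exact (hasDt hf t x).deriv

lemma Sm.Dx {f} (hf : Sm f) : Sm (Dx f) := by
  unfold Sm; rw [Dx_eq hf]
  exact (hf.fderiv_right (m := (⊤ : ℕ∞)) (by simp)).clm_apply contDiff_const

lemma Sm.Dt {f} (hf : Sm f) : Sm (Dt f) := by
  unfold Sm; rw [Dt_eq hf]
  exact (hf.fderiv_right (m := (⊤ : ℕ∞)) (by simp)).clm_apply contDiff_const

lemma Sm.hx {f} (hf : Sm f) (t x : ℝ) : HasDerivAt (f t) (KS.Dx f t x) x :=
  (hasDx hf t x).differentiableAt.hasDerivAt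

lemma Sm.ht {f} (hf : Sm f) (t x : ℝ) : HasDerivAt (fun τ => f τ x) (KS.Dt f t x) t :=
  (hasDt hf t x).differentiableAt.hasDerivAt

lemma Sm.cx {f} (hf : Sm f) (t : ℝ) : Continuous (f t) :=
  (ContDiff.continuous hf).comp (by fun_prop : Continuous fun x : ℝ => (t, x))

lemma Sm.ct {f} (hf : Sm f) (x : ℝ) : Continuous (fun t => f t x) :=
  (ContDiff.continuous hf).comp (by fun_prop : Continuous fun t : ℝ => (t, x))

lemma swap {f} (hf : Sm f) (t x : ℝ) : Dt (Dx f) t x = Dx (Dt f) t x := by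
  have hd : DifferentiableAt ℝ (fderiv ℝ (Function.uncurry f)) (t, x) :=
    ((hf.fderiv_right (m := (⊤ : ℕ∞)) (by simp)).differentiable (by simp)) _
  have h1 : Dt (Dx f) t x = fderiv ℝ (fderiv ℝ (Function.uncurry f)) (t, x) (1, 0) (0, 1) := by
    have := congrFun (Dt_eq hf.Dx) (t, x)
    rw [Dx_eq hf, fderiv_clm_apply hd (by fun_prop)] at this
    simpa using this
  have h2 : Dx (Dt f) t x = fderiv ℝ (fderiv ℝ (Function.uncurry f)) (t, x) (0, 1) (1, 0) := by
    have := congrFun (Dx_eq hf.Dt) (t, x)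
    rw [Dt_eq hf, fderiv_clm_apply hd (by fun_prop)] at this
    simpa using this
  rw [h1, h2]
  exact (hf.contDiffAt.isSymmSndFDerivAt (by simp; exact WithTop.coe_le_coe.2 (le_top (a := (2 : ℕ∞))))).eq _ _

lemma van {f : ℝ → ℝ → ℝ} {R : ℝ} (h : ∀ t x, R < |x| → f t x = 0) :
    ∀ t x, R < |x| → Dx f t x = 0 := by
  intro t x hx
  have : f t =ᶠ[nhds x] fun _ => 0 := by
    filter_upwards [(isOpen_lt continuous_const continuous_abs).mem_nhds hx] with y hy
    exact h t y hy
  show deriv (f t) x = 0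
  rw [this.deriv_eq]; simp

lemma energy_ineq {e F : ℝ → ℝ → ℝ} (he : Sm e) (hF : Sm F) {T a b : ℝ} (hT : 0 ≤ T) (hab : a ≤ b)
    (h : ∀ t, 0 ≤ t → ∀ x, Dt e t x ≤ Dx F t x)
    (ha : ∀ t, F t a = 0) (hb : ∀ t, F t b = 0) :
    ∫ x in a..b, e T x ≤ ∫ x in a..b, e 0 x := by
  have h1 : ∫ x in a..b, (e T x - e 0 x) = ∫ x in a..b, ∫ t in (0:ℝ)..T, Dt e t x := by
    congr 1; ext x
    rw [intervalIntegral.integral_eq_sub_of_hasDerivAt (f := fun t => e t x)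
      (fun t _ => he.ht t x) ((he.Dt.ct x).intervalIntegrable _ _)]
  have h2 : ∫ x in a..b, ∫ t in (0:ℝ)..T, Dt e t x = ∫ t in (0:ℝ)..T, ∫ x in a..b, Dt e t x := by
    symm
    rw [intervalIntegral_intervalIntegral_swap]
    exact (Continuous.integrableOn_Icc (ContDiff.continuous he.Dt)
      (a := (min 0 T, min a b)) (b := (max 0 T, max a b))).mono_set (by
        rw [← Set.Icc_prod_Icc]
        exact Set.prod_mono Set.Ioc_subset_Icc_self Set.Ioc_subset_Icc_self)
  have h3 : ∫ t in (0:ℝ)..T, ∫ x in a..b, Dt e t x ≤ ∫ t in (0:ℝ)..T, (0:ℝ) := by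
    apply intervalIntegral.integral_mono_on hT
    · apply Continuous.intervalIntegrable
      exact intervalIntegral.continuous_parametric_intervalIntegral_of_continuous'
        (ContDiff.continuous he.Dt) _ _
    · simp
    · intro t ht
      calc _ ≤ ∫ x in a..b, Dx F t x := by
            apply intervalIntegral.integral_mono_on hab
              ((he.Dt.cx t).intervalIntegrable _ _) ((hF.Dx.cx t).intervalIntegrable _ _)
            intro x _; exact h t ht.1 x
        _ = 0 := by
            rw [intervalIntegral.integral_eq_sub_of_hasDerivAt (f := F t)
              (fun x _ => hF.hx t x) ((hF.Dx.cx t).intervalIntegrable _ _), ha, hb, sub_zero]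
  rw [intervalIntegral.integral_sub ((he.cx T).intervalIntegrable _ _) 
    ((he.cx 0).intervalIntegrable _ _)] at h1
  simp at h3
  linarith

end KS

/-- `L^∞` bound `‖u(t,·)‖_∞ ≤ √2 C₀^{1/2} β^{-1/4}` for solutions of the
Kudryashov–Sinelshchikov equation with the energy-preserving parameter choice. -/
theorem stmt_2
    (A ε β C₀ : ℝ) (hA : A ≠ 0) (hε : 0 < ε) (hβ : 0 < β) (hC₀pos : 0 < C₀)
    (u : ℝ → ℝ → ℝ)
    (hu : ContDiff ℝ (⊤ : ℕ∞) (Function.uncurry u))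
    (hsupp : ∃ R > (0:ℝ), ∀ t x : ℝ, R ≤ |x| → u t x = 0)
    (hPDE : ∀ t : ℝ, 0 ≤ t → ∀ x : ℝ,
      deriv (fun τ => u τ x) t
        + A * u t x * deriv (u t) x
        + β * deriv (deriv (deriv (u t))) x
        - (2 * A / 3) * β * deriv (fun y => u t y * deriv (deriv (u t)) y) x
        - (-(A / 3)) * β * deriv (u t) x * deriv (deriv (u t)) x
        - ε * deriv (deriv (u t)) x = 0)
    (hC₀ : (∫ x : ℝ, (u 0 x) ^ 2) + β * (∫ x : ℝ, (deriv (u 0) x) ^ 2) ≤ C₀) :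
    ∀ t : ℝ, 0 ≤ t → ∀ x : ℝ,
      (u t x) ^ 4 ≤ 4 * C₀ ^ 2 / β ∧
      |u t x| ≤ Real.sqrt 2 * Real.sqrt C₀ * β ^ (-(1/4 : ℝ)) := by
  obtain ⟨R, hR, hs⟩ := hsupp
  have hu : KS.Sm u := hu
  have v0 : ∀ t x, R < |x| → u t x = 0 := fun t x h => hs t x h.le
  have v1 := KS.van v0
  have v2 := KS.van v1
  have s1 := hu.Dx
  have s2 := s1.Dx
  have s3 := s2.Dx
  have st := hu.Dt
  let e : ℝ → ℝ → ℝ := fun t x => (u t x) ^ 2 + β * (KS.Dx u t x) ^ 2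
  let F : ℝ → ℝ → ℝ := fun t x =>
    -(2 * A / 3) * (u t x) ^ 3 - 2 * β * (u t x * KS.Dx (KS.Dx u) t x) + β * (KS.Dx u t x) ^ 2
      + (4 * A / 3) * β * ((u t x) ^ 2 * KS.Dx (KS.Dx u) t x) + 2 * ε * (u t x * KS.Dx u t x)
      + β ^ 2 * (KS.Dx (KS.Dx u) t x) ^ 2
      - (2 * A / 3) * β ^ 2 * (u t x * (KS.Dx (KS.Dx u) t x) ^ 2)
      + 2 * β * (KS.Dx u t x * KS.Dt u t x)
  have he : KS.Sm e := by
    unfold KS.Sm at *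
    exact (hu.pow 2).add (contDiff_const.mul (s1.pow 2))
  have hF : KS.Sm F := by
    unfold KS.Sm at *
    exact ((((((((contDiff_const.mul (hu.pow 3)).sub (contDiff_const.mul (hu.mul s2))).add
      (contDiff_const.mul (s1.pow 2))).add (contDiff_const.mul ((hu.pow 2).mul s2))).add
      (contDiff_const.mul (hu.mul s1))).add (contDiff_const.mul (s2.pow 2))).sub
      (contDiff_const.mul (hu.mul (s2.pow 2)))).add (contDiff_const.mul (s1.mul st)))
  have hFv : ∀ t x, R < |x| → F t x = 0 := by
    intro t x h
    simp [F, v0 t x h, v1 t x h, v2 t x h]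
  have key : ∀ t, 0 ≤ t → ∀ x, KS.Dt e t x ≤ KS.Dx F t x := by
    intro t ht x
    have d0 := hu.hx t x
    have d1 := s1.hx t x
    have d2 := s2.hx t x
    have dt := st.hx t x
    have h1 : KS.Dt e t x = 2 * u t x * KS.Dt u t x
        + β * (2 * KS.Dx u t x * KS.Dx (KS.Dt u) t x) := by
      have := ((hu.ht t x).pow 2).add (((s1.ht t x).pow 2).const_mul β)
      rw [KS.swap hu] at this
      refine this.deriv.trans ?_
      simp
    have h2 := (((((((((d0.pow 3).const_mul (-(2 * A / 3))).sub
      ((d0.mul d2).const_mul (2 * β))).add ((d1.pow 2).const_mul β)).add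
      (((d0.pow 2).mul d2).const_mul ((4 * A / 3) * β))).add
      ((d0.mul d1).const_mul (2 * ε))).add ((d2.pow 2).const_mul (β ^ 2))).sub
      ((d0.mul (d2.pow 2)).const_mul ((2 * A / 3) * β ^ 2))).add
      ((d1.mul dt).const_mul (2 * β))).deriv
    have h2' : KS.Dx F t x = _ := h2
    have hp := hPDE t ht x
    have h3 : deriv (fun y => u t y * deriv (deriv (u t)) y) x = _ := (d0.mul d2).deriv
    rw [h3] at hp
    change KS.Dt u t x + A * u t x * KS.Dx u t x + β * KS.Dx (KS.Dx (KS.Dx u)) t x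
      - (2 * A / 3) * β * (KS.Dx u t x * KS.Dx (KS.Dx u) t x
        + u t x * KS.Dx (KS.Dx (KS.Dx u)) t x)
      - (-(A / 3)) * β * KS.Dx u t x * KS.Dx (KS.Dx u) t x
      - ε * KS.Dx (KS.Dx u) t x = 0 at hp
    rw [h1, h2']
    simp only [Pi.pow_apply, Nat.cast_ofNat, Nat.add_one_sub_one, pow_one, Nat.reduceSub]
    have hut : KS.Dt u t x = -(A * u t x * KS.Dx u t x + β * KS.Dx (KS.Dx (KS.Dx u)) t x
      - (2 * A / 3) * β * (KS.Dx u t x * KS.Dx (KS.Dx u) t x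
        + u t x * KS.Dx (KS.Dx (KS.Dx u)) t x)
      - (-(A / 3)) * β * KS.Dx u t x * KS.Dx (KS.Dx u) t x
      - ε * KS.Dx (KS.Dx u) t x) := by linarith
    rw [hut]
    have hpos : 0 ≤ 2 * ε * ((KS.Dx u t x) ^ 2 + β * (KS.Dx (KS.Dx u) t x) ^ 2) := by positivity
    rw [← sub_nonneg]
    refine hpos.trans (le_of_eq ?_)
    ring
  intro t ht x
  have hL : ∀ s : ℝ, R + 1 ≤ |s| → R < |s| := fun s h => by linarith
  have hb : R < |R + 1| := by rw [abs_of_pos (by linarith)]; linarith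
  have ha : R < |-(R + 1)| := by rw [abs_neg]; exact hb
  have hE := KS.energy_ineq he hF ht (a := -(R + 1)) (b := R + 1) (by linarith) key
    (fun t => hFv t _ ha) (fun t => hFv t _ hb)
  have hsub : ∀ f : ℝ → ℝ, (∀ x, R < |x| → f x = 0) →
      ∫ x in (-(R + 1))..(R + 1), f x = ∫ x, f x := by
    intro f hf
    apply intervalIntegral.integral_eq_integral_of_support_subset
    intro y hy
    have : |y| ≤ R := by
      by_contra h
      exact hy (hf y (not_le.1 h))
    have := abs_le.1 this
    constructor <;> linarith
  have hE0 : ∫ x in (-(R + 1))..(R + 1), e 0 x ≤ C₀ := by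
    have i1 : IntervalIntegrable (fun x => (u 0 x) ^ 2) volume (-(R + 1)) (R + 1) :=
      ((hu.cx 0).pow 2).intervalIntegrable _ _
    have i2 : IntervalIntegrable (fun x => β * (KS.Dx u 0 x) ^ 2) volume (-(R + 1)) (R + 1) :=
      (((s1.cx 0).pow 2).const_mul β).intervalIntegrable _ _
    have : ∫ x in (-(R + 1))..(R + 1), e 0 x = _ := intervalIntegral.integral_add i1 i2
    rw [this, intervalIntegral.integral_const_mul, hsub _ (fun x h => by simp [v0 0 x h]),
      hsub _ (fun x h => by simp [v1 0 x h])]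
    exact hC₀
  have hq : 0 < √β := Real.sqrt_pos.2 hβ
  have hqq : √β ^ 2 = β := Real.sq_sqrt hβ.le
  have main : √β * (u t x) ^ 2 ≤ C₀ := by
    by_cases hx : R < |x|
    · simp [v0 t x hx, hC₀pos.le]
    have hx := abs_le.1 (not_lt.1 hx)
    have hd : ∀ y, HasDerivAt (fun y => √β * (u t y) ^ 2)
        (√β * (2 * u t y * KS.Dx u t y)) y := fun y => by
      simpa using ((hu.hx t y).pow 2).const_mul (√β)
    have hc : Continuous fun y => √β * (2 * u t y * KS.Dx u t y) :=
      ((continuous_const.mul (hu.cx t)).mul (s1.cx t)).const_mul _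
    have h1 := intervalIntegral.integral_eq_sub_of_hasDerivAt (a := -(R + 1)) (b := x)
      (fun y _ => hd y) (hc.intervalIntegrable _ _)
    rw [v0 t _ ha] at h1
    have h2 : ∫ y in (-(R + 1))..x, √β * (2 * u t y * KS.Dx u t y)
        ≤ ∫ y in (-(R + 1))..x, e t y := by
      apply intervalIntegral.integral_mono_on (by linarith) (hc.intervalIntegrable _ _)
        ((he.cx t).intervalIntegrable _ _)
      intro y _
      have := sq_nonneg (u t y - √β * KS.Dx u t y)
      simp only [e]
      nlinarith
    have h3 : ∫ y in (-(R + 1))..x, e t y ≤ ∫ y in (-(R + 1))..(R + 1), e t y := by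
      apply intervalIntegral.integral_mono_interval le_rfl (by linarith) (by linarith)
      · exact Filter.Eventually.of_forall fun y => by simp only [e, Pi.zero_apply]; positivity
      · exact (he.cx t).intervalIntegrable _ _
    have hz : √β * (0 : ℝ) ^ 2 = 0 := by simp
    linarith
  constructor
  · rw [le_div_iff₀ hβ]
    have h0 : 0 ≤ √β * (u t x) ^ 2 := by positivity
    have h1 : (√β * (u t x) ^ 2) ^ 2 ≤ C₀ ^ 2 := pow_le_pow_left₀ h0 main 2
    rw [mul_pow, hqq] at h1
    nlinarith [sq_nonneg C₀]
  · apply abs_le_of_sq_le_sq _ (by positivity)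
    have hr : (β ^ (-(1/4 : ℝ))) ^ 2 = (√β)⁻¹ := by
      rw [← Real.rpow_natCast, ← Real.rpow_mul hβ.le, Real.sqrt_eq_rpow, ← Real.rpow_neg hβ.le]
      norm_num
    rw [mul_pow, mul_pow, hr, Real.sq_sqrt (by norm_num), Real.sq_sqrt hC₀pos.le,
      ← div_eq_mul_inv, le_div_iff₀ hq]
    linarith
end

section
/- Let f : ℝ → ℝ be a smooth function with compact support and let A, B, C, β, ε be real numbers. Then ∫_ℝ (f − β f'') · (A f f' + β f''' − Bβ (f f'')' − Cβ f' f'' − ε f'') dx = −β(A − B + C) ∫_ℝ f f' f'' dx + (β²/2)(B + 2C) ∫_ℝ f' (f'')² dx + ε ∫_ℝ (f')² dx + βε ∫_ℝ (f'')² dx. In particular, if B = 2A/3 and C = −A/3 (so that A − B + C = 0 and B + 2C = 0), the first two terms on the right-hand side vanish. -/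
open MeasureTheory

lemma aux_int (g h : ℝ → ℝ) (hg : Continuous g) (hh : Continuous h) (hs : HasCompactSupport g) :
    Integrable (fun x => g x * h x) :=
  (hg.mul hh).integrable_of_hasCompactSupport (hs.mul_right)

/-- The key integral identity behind the `L²` energy estimate for the
Kudryashov–Sinelshchikov equation: multiplying the spatial operator by
`f - β f''` and integrating by parts. -/
theorem stmt_5 (f : ℝ → ℝ) (hf : ContDiff ℝ (⊤ : ℕ∞) f) (hsupp : HasCompactSupport f)
    (A B C β ε : ℝ) :
    ∫ x : ℝ, (f x - β * deriv (deriv f) x) *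
      (A * f x * deriv f x + β * deriv (deriv (deriv f)) x
        - B * β * deriv (fun y => f y * deriv (deriv f) y) x
        - C * β * deriv f x * deriv (deriv f) x
        - ε * deriv (deriv f) x)
    = -β * (A - B + C) * (∫ x : ℝ, f x * deriv f x * deriv (deriv f) x)
      + (β ^ 2 / 2) * (B + 2 * C) * (∫ x : ℝ, deriv f x * (deriv (deriv f) x) ^ 2)
      + ε * (∫ x : ℝ, (deriv f x) ^ 2)
      + β * ε * (∫ x : ℝ, (deriv (deriv f) x) ^ 2) := by
  have g1 := (contDiff_infty_iff_deriv.1 hf).2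
  have g2 := (contDiff_infty_iff_deriv.1 g1).2
  have h0 : ContDiff ℝ 3 f := contDiff_infty.1 hf 3
  have h1 : ContDiff ℝ 2 (deriv f) := contDiff_infty.1 g1 2
  have h2 : ContDiff ℝ 1 (deriv (deriv f)) := contDiff_infty.1 g2 1
  have h3 : Continuous (deriv (deriv (deriv f))) := h2.continuous_deriv le_rfl
  have sa := hsupp
  have sb := sa.deriv
  have sc := sb.deriv
  have da : ∀ x, HasDerivAt f (deriv f x) x :=
    fun x => (h0.differentiable (by norm_num) x).hasDerivAt
  have db : ∀ x, HasDerivAt (deriv f) (deriv (deriv f) x) x :=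
    fun x => (h1.differentiable (by norm_num) x).hasDerivAt
  have dc : ∀ x, HasDerivAt (deriv (deriv f)) (deriv (deriv (deriv f)) x) x :=
    fun x => (h2.differentiable (by norm_num) x).hasDerivAt
  have hprod : ∀ x, deriv (fun y => f y * deriv (deriv f) y) x
      = deriv f x * deriv (deriv f) x + f x * deriv (deriv (deriv f)) x :=
    fun x => ((da x).mul (dc x)).deriv
  simp only [hprod]
  have ca := h0.continuous
  have cb := h1.continuous
  have cc := h2.continuous
  clear g1 g2
  generalize deriv (deriv (deriv f)) = d at *
  generalize deriv (deriv f) = c at *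
  generalize deriv f = b at *
  have i1 : Integrable (fun x => f x * b x * c x) := by
    simpa only [mul_assoc] using aux_int f (fun x => b x * c x) ca (by fun_prop) sa
  have i2 : Integrable (fun x => b x * c x ^ 2) := aux_int b (fun x => c x ^ 2) cb (by fun_prop) sb
  have i3 : Integrable (fun x => b x ^ 2) := by
    simpa only [pow_two] using aux_int b b cb cb sb
  have i4 : Integrable (fun x => c x ^ 2) := by
    simpa only [pow_two] using aux_int c c cc cc sc
  have iL : Integrable (fun x => (f x - β * c x) *
      (A * f x * b x + β * d x - B * β * (b x * c x + f x * d x)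
        - C * β * b x * c x - ε * c x)) :=
    aux_int (fun x => f x - β * c x) _ (by fun_prop) (by fun_prop)
      (sa.sub (sc.mul_left (f := fun _ => β)))
  have j2 : Integrable (fun x => -β * (A - B + C) * (f x * b x * c x)
        + (β ^ 2 / 2) * (B + 2 * C) * (b x * c x ^ 2)) := (i1.const_mul _).add (i2.const_mul _)
  have j3 : Integrable (fun x => -β * (A - B + C) * (f x * b x * c x)
        + (β ^ 2 / 2) * (B + 2 * C) * (b x * c x ^ 2) + ε * b x ^ 2) := j2.add (i3.const_mul _)
  have iR : Integrable (fun x => -β * (A - B + C) * (f x * b x * c x)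
        + (β ^ 2 / 2) * (B + 2 * C) * (b x * c x ^ 2) + ε * b x ^ 2 + β * ε * c x ^ 2) :=
    j3.add (i4.const_mul _)
  have iG : Integrable (fun x => f x * (A / 3 * f x ^ 2 + β * c x - B * β * f x * c x - ε * b x
        + B * β ^ 2 / 2 * c x ^ 2) + b x * (-β / 2 * b x) + c x * (-β ^ 2 / 2 * c x)) :=
    ((aux_int f _ ca (by fun_prop) sa).add (aux_int b _ cb (by fun_prop) sb)).add
      (aux_int c _ cc (by fun_prop) sc)
  have key := integral_eq_zero_of_hasDerivAt_of_integrable (f' := fun x => (f x - β * c x) *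
      (A * f x * b x + β * d x - B * β * (b x * c x + f x * d x)
        - C * β * b x * c x - ε * c x) - (-β * (A - B + C) * (f x * b x * c x)
        + (β ^ 2 / 2) * (B + 2 * C) * (b x * c x ^ 2) + ε * b x ^ 2 + β * ε * c x ^ 2))
    (fun x => by
      have e1 := ((da x).pow 2).const_mul (A / 3)
      have e2 := (dc x).const_mul β
      have e3 := ((da x).const_mul (B * β)).mul (dc x)
      have e4 := (db x).const_mul ε
      have e5 := ((dc x).pow 2).const_mul (B * β ^ 2 / 2)
      have e6 := (db x).mul ((db x).const_mul (-β / 2))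
      have e7 := (dc x).mul ((dc x).const_mul (-β ^ 2 / 2))
      have this := (((da x).mul ((((e1.add e2).sub e3).sub e4).add e5)).add e6).add e7
      refine HasDerivAt.congr_deriv this ?_
      simp only [Pi.add_apply, Pi.sub_apply, Pi.mul_apply, Pi.pow_apply]
      norm_num
      ring) (iL.sub iR) iG
  rw [integral_sub iL iR, sub_eq_zero] at key
  rw [key, integral_add j3 (i4.const_mul _), integral_add j2 (i3.const_mul _),
    integral_add (i1.const_mul _) (i2.const_mul _)]
  simp only [integral_const_mul]
end

section
/- Let f : ℝ → ℝ be a smooth function with compact support, let A, K, β, ε be real numbers, and set B = 2A/3, C = −A/3. Then ∫_ℝ (K f³ − ε² f'') · (A f f' + β f''' − Bβ (f f'')' − Cβ f' f'' − ε f'') dx = 3Kε ∫_ℝ f² (f')² dx + ε³ ∫_ℝ (f'')² dx − Aε² ∫_ℝ f f' f'' dx − 3Kβ ∫_ℝ f² f' f'' dx + (7A/3) K β ∫_ℝ f³ f' f'' dx. -/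
open MeasureTheory

/-- The key integral identity behind the `L⁴` energy estimate for the
Kudryashov–Sinelshchikov equation with `B = 2A/3`, `C = -A/3`: multiplying the
spatial operator by `K f³ - ε² f''` and integrating by parts. -/
theorem stmt_6 (f : ℝ → ℝ) (hf : ContDiff ℝ (⊤ : ℕ∞) f) (hsupp : HasCompactSupport f)
    (A K β ε : ℝ) :
    ∫ x : ℝ, (K * (f x) ^ 3 - ε ^ 2 * deriv (deriv f) x) *
      (A * f x * deriv f x + β * deriv (deriv (deriv f)) x
        - (2 * A / 3) * β * deriv (fun y => f y * deriv (deriv f) y) x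
        - (-(A / 3)) * β * deriv f x * deriv (deriv f) x
        - ε * deriv (deriv f) x)
    = 3 * K * ε * (∫ x : ℝ, (f x) ^ 2 * (deriv f x) ^ 2)
      + ε ^ 3 * (∫ x : ℝ, (deriv (deriv f) x) ^ 2)
      - A * ε ^ 2 * (∫ x : ℝ, f x * deriv f x * deriv (deriv f) x)
      - 3 * K * β * (∫ x : ℝ, (f x) ^ 2 * deriv f x * deriv (deriv f) x)
      + (7 * A / 3) * K * β * (∫ x : ℝ, (f x) ^ 3 * deriv f x * deriv (deriv f) x) := by
  have hf0 : ContDiff ℝ (⊤ : ℕ∞) f := hf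
  have ha : ContDiff ℝ (⊤ : ℕ∞) (deriv f) := (contDiff_infty_iff_deriv.1 hf).2
  have hb : ContDiff ℝ (⊤ : ℕ∞) (deriv (deriv f)) := (contDiff_infty_iff_deriv.1 ha).2
  have hc : ContDiff ℝ (⊤ : ℕ∞) (deriv (deriv (deriv f))) := (contDiff_infty_iff_deriv.1 hb).2
  have da : ∀ x, HasDerivAt f (deriv f x) x := fun x =>
    ((contDiff_infty_iff_deriv.1 hf).1 x).hasDerivAt
  have db : ∀ x, HasDerivAt (deriv f) (deriv (deriv f) x) x := fun x =>
    ((contDiff_infty_iff_deriv.1 ha).1 x).hasDerivAt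
  have dc : ∀ x, HasDerivAt (deriv (deriv f)) (deriv (deriv (deriv f)) x) x := fun x =>
    ((contDiff_infty_iff_deriv.1 hb).1 x).hasDerivAt
  have hprod : ∀ x, deriv (fun y => f y * deriv (deriv f) y) x
      = deriv f x * deriv (deriv f) x + f x * deriv (deriv (deriv f)) x := fun x =>
    ((da x).mul (dc x)).deriv
  simp only [hprod]
  have sb : HasCompactSupport (deriv (deriv f)) := hsupp.deriv.deriv
  have ca := ha.continuous
  have cb := hb.continuous
  have cc := hc.continuous
  have cf := hf.continuous
  generalize deriv (deriv (deriv f)) = c at *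
  generalize deriv (deriv f) = b at *
  generalize deriv f = a at *
  have key : ∀ g : ℝ → ℝ, Continuous g → (∀ x, f x = 0 → b x = 0 → g x = 0) →
      Integrable g := by
    intro g hg h0
    refine hg.integrable_of_hasCompactSupport ?_
    refine HasCompactSupport.intro (hsupp.isCompact.union sb.isCompact) ?_
    intro x hx
    rw [Set.mem_union, not_or] at hx
    exact h0 x (image_eq_zero_of_notMem_tsupport hx.1) (image_eq_zero_of_notMem_tsupport hx.2)
  have i1 : Integrable (fun x => (f x) ^ 2 * (a x) ^ 2) :=
    key _ (by fun_prop) (by intro x h1 h2; simp [h1])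
  have i2 : Integrable (fun x => (b x) ^ 2) :=
    key _ (by fun_prop) (by intro x h1 h2; simp [h2])
  have i3 : Integrable (fun x => f x * a x * b x) :=
    key _ (by fun_prop) (by intro x h1 h2; simp [h1])
  have i4 : Integrable (fun x => (f x) ^ 2 * a x * b x) :=
    key _ (by fun_prop) (by intro x h1 h2; simp [h1])
  have i5 : Integrable (fun x => (f x) ^ 3 * a x * b x) :=
    key _ (by fun_prop) (by intro x h1 h2; simp [h1])
  have hG : ∀ x, HasDerivAt (fun x => K * A / 5 * f x ^ 5 + K * β * (f x ^ 3 * b x)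
      - 2 * A / 3 * K * β * (f x ^ 4 * b x) - K * ε * (f x ^ 3 * a x)
      - ε ^ 2 * β / 2 * b x ^ 2 + ε ^ 2 * β * A / 3 * (f x * b x ^ 2))
      (K * A * f x ^ 4 * a x + K * β * (3 * f x ^ 2 * a x * b x + f x ^ 3 * c x)
      - 2 * A / 3 * K * β * (4 * f x ^ 3 * a x * b x + f x ^ 4 * c x)
      - K * ε * (3 * f x ^ 2 * a x * a x + f x ^ 3 * b x)
      - ε ^ 2 * β * b x * c x
      + ε ^ 2 * β * A / 3 * (a x * b x ^ 2 + 2 * f x * b x * c x)) x := by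
    intro x
    have h := (((((((da x).pow 5).const_mul (K * A / 5)).add
      ((((da x).pow 3).mul (dc x)).const_mul (K * β))).sub
      ((((da x).pow 4).mul (dc x)).const_mul (2 * A / 3 * K * β))).sub
      ((((da x).pow 3).mul (db x)).const_mul (K * ε))).sub
      (((dc x).pow 2).const_mul (ε ^ 2 * β / 2))).add
      (((da x).mul ((dc x).pow 2)).const_mul (ε ^ 2 * β * A / 3))
    refine h.congr_deriv ?_
    simp only [Pi.pow_apply]
    push_cast
    ring
  have hz := integral_eq_zero_of_hasDerivAt_of_integrable hG
    (key _ (by fun_prop) (by intro x h1 h2; simp [h1, h2]))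
    (key _ (by fun_prop) (by intro x h1 h2; simp [h1, h2]))
  have iG := key (fun x => K * A * f x ^ 4 * a x + K * β * (3 * f x ^ 2 * a x * b x + f x ^ 3 * c x)
      - 2 * A / 3 * K * β * (4 * f x ^ 3 * a x * b x + f x ^ 4 * c x)
      - K * ε * (3 * f x ^ 2 * a x * a x + f x ^ 3 * b x)
      - ε ^ 2 * β * b x * c x
      + ε ^ 2 * β * A / 3 * (a x * b x ^ 2 + 2 * f x * b x * c x))
    (by fun_prop) (by intro x h1 h2; simp [h1, h2])
  have j1 := i1.const_mul (3 * K * ε)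
  have j2 := i2.const_mul (ε ^ 3)
  have j3 := i3.const_mul (A * ε ^ 2)
  have j4 := i4.const_mul (3 * K * β)
  have j5 := i5.const_mul (7 * A / 3 * K * β)
  rw [← integral_const_mul, ← integral_const_mul, ← integral_const_mul, ← integral_const_mul,
    ← integral_const_mul, ← integral_add j1 j2, ← integral_sub (by exact j1.add j2) j3,
    ← integral_sub (by exact (j1.add j2).sub j3) j4,
    ← integral_add (by exact ((j1.add j2).sub j3).sub j4) j5]
  rw [← sub_eq_zero, ← hz, sub_eq_iff_eq_add,
    ← integral_add iG (by exact (((j1.add j2).sub j3).sub j4).add j5)]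
  congr 1
  funext x
  ring
end

section
/- There exists a constant M > 0, depending only on A and C₀, such that for every t ≥ 0 one has ‖u(t,·)‖⁴_{L⁴(ℝ)} ≤ M and ε²‖∂ₓu(t,·)‖²_{L²(ℝ)} ≤ M. -/
open MeasureTheory

noncomputable def ksPx (f : ℝ → ℝ → ℝ) : ℝ → ℝ → ℝ := fun t x => deriv (f t) x
noncomputable def ksPt (f : ℝ → ℝ → ℝ) : ℝ → ℝ → ℝ := fun t x => deriv (fun τ => f τ x) t

def KsNice (R : ℝ) (f : ℝ → ℝ → ℝ) : Prop :=
  ContDiff ℝ (⊤ : ℕ∞) (Function.uncurry f) ∧ ∀ t x, R < |x| → f t x = 0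

lemma ks_hasDerivAt_x {f : ℝ → ℝ → ℝ} (hf : ContDiff ℝ (⊤ : ℕ∞) (Function.uncurry f)) (t x : ℝ) :
    HasDerivAt (f t) (fderiv ℝ (Function.uncurry f) (t, x) (0, 1)) x := by
  have h1 : HasFDerivAt (Function.uncurry f) (fderiv ℝ (Function.uncurry f) (t, x)) (t, x) :=
    (hf.differentiable (by simp) _).hasFDerivAt
  have h2 : HasDerivAt (fun y : ℝ => (t, y)) ((0:ℝ), (1:ℝ)) x :=
    (hasDerivAt_const x t).prodMk (hasDerivAt_id x)
  exact h1.comp_hasDerivAt x h2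

lemma ks_hasDerivAt_t {f : ℝ → ℝ → ℝ} (hf : ContDiff ℝ (⊤ : ℕ∞) (Function.uncurry f)) (t x : ℝ) :
    HasDerivAt (fun τ => f τ x) (fderiv ℝ (Function.uncurry f) (t, x) (1, 0)) t := by
  have h1 : HasFDerivAt (Function.uncurry f) (fderiv ℝ (Function.uncurry f) (t, x)) (t, x) :=
    (hf.differentiable (by simp) _).hasFDerivAt
  have h2 : HasDerivAt (fun y : ℝ => (y, x)) ((1:ℝ), (0:ℝ)) t :=
    (hasDerivAt_id t).prodMk (hasDerivAt_const t x)
  exact h1.comp_hasDerivAt (f := fun y : ℝ => (y, x)) t h2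

lemma ksPx_eq {f : ℝ → ℝ → ℝ} (hf : ContDiff ℝ (⊤ : ℕ∞) (Function.uncurry f)) :
    Function.uncurry (ksPx f) = fun p => fderiv ℝ (Function.uncurry f) p (0, 1) := by
  ext ⟨t, x⟩
  exact (ks_hasDerivAt_x hf t x).deriv

lemma ksPt_eq {f : ℝ → ℝ → ℝ} (hf : ContDiff ℝ (⊤ : ℕ∞) (Function.uncurry f)) :
    Function.uncurry (ksPt f) = fun p => fderiv ℝ (Function.uncurry f) p (1, 0) := by
  ext ⟨t, x⟩
  exact (ks_hasDerivAt_t hf t x).deriv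

lemma KsNice.px {R : ℝ} {f : ℝ → ℝ → ℝ} (hf : KsNice R f) : KsNice R (ksPx f) := by
  refine ⟨?_, ?_⟩
  · rw [ksPx_eq hf.1]
    exact (hf.1.fderiv_right (m := (⊤ : ℕ∞)) (by simp)).clm_apply contDiff_const
  · intro t x hx
    have : f t =ᶠ[nhds x] fun _ => 0 := by
      filter_upwards [(isOpen_lt continuous_const continuous_abs).mem_nhds hx] with y hy
      exact hf.2 t y hy
    simp [ksPx, this.deriv_eq]

lemma KsNice.pt {R : ℝ} {f : ℝ → ℝ → ℝ} (hf : KsNice R f) : KsNice R (ksPt f) := by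
  refine ⟨?_, ?_⟩
  · rw [ksPt_eq hf.1]
    exact (hf.1.fderiv_right (m := (⊤ : ℕ∞)) (by simp)).clm_apply contDiff_const
  · intro t x hx
    have : (fun τ => f τ x) = fun _ => 0 := by
      ext τ
      exact hf.2 τ x hx
    simp [ksPt, this]

lemma KsNice.hx {R : ℝ} {f : ℝ → ℝ → ℝ} (hf : KsNice R f) (t x : ℝ) :
    HasDerivAt (f t) (ksPx f t x) x := (ks_hasDerivAt_x hf.1 t x).differentiableAt.hasDerivAt

lemma KsNice.ht {R : ℝ} {f : ℝ → ℝ → ℝ} (hf : KsNice R f) (t x : ℝ) :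
    HasDerivAt (fun τ => f τ x) (ksPt f t x) t :=
  (ks_hasDerivAt_t hf.1 t x).differentiableAt.hasDerivAt

lemma KsNice.cont {R : ℝ} {f : ℝ → ℝ → ℝ} (hf : KsNice R f) (t : ℝ) : Continuous (f t) :=
  hf.1.continuous.comp (Continuous.prodMk_right t)

lemma KsNice.symm {R : ℝ} {f : ℝ → ℝ → ℝ} (hf : KsNice R f) (t x : ℝ) :
    ksPt (ksPx f) t x = ksPx (ksPt f) t x := by
  have e1 : ksPt (ksPx f) t x = fderiv ℝ (Function.uncurry (ksPx f)) (t, x) (1, 0) :=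
    congrFun (ksPt_eq hf.px.1) (t, x)
  have e2 : ksPx (ksPt f) t x = fderiv ℝ (Function.uncurry (ksPt f)) (t, x) (0, 1) :=
    congrFun (ksPx_eq hf.pt.1) (t, x)
  have hd : DifferentiableAt ℝ (fderiv ℝ (Function.uncurry f)) (t, x) :=
    (hf.1.fderiv_right (m := (⊤ : ℕ∞)) (by simp)).differentiable (by simp) _
  rw [e1, e2, ksPx_eq hf.1, ksPt_eq hf.1, fderiv_clm_apply hd (by fun_prop),
    fderiv_clm_apply hd (by fun_prop)]
  have hs : IsSymmSndFDerivAt ℝ (Function.uncurry f) (t, x) :=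
    (hf.1.contDiffAt).isSymmSndFDerivAt (by
      rw [minSmoothness_of_isRCLikeNormedField]
      exact WithTop.coe_le_coe.2 (le_top : (2 : ℕ∞) ≤ ⊤))
  simp
  exact hs _ _

lemma ks_integrable {R : ℝ} {g : ℝ → ℝ} (hc : Continuous g) (h0 : ∀ x, R < |x| → g x = 0) :
    Integrable g := by
  apply hc.integrable_of_hasCompactSupport
  apply HasCompactSupport.intro (K := Set.Icc (-R) R) isCompact_Icc
  intro x hx
  apply h0
  by_contra h
  exact hx (abs_le.mp (not_lt.mp h))

lemma KsNice.hasDerivAt_integral {R : ℝ} {f : ℝ → ℝ → ℝ} (hf : KsNice R f) (t : ℝ) :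
    HasDerivAt (fun τ => ∫ x, f τ x) (∫ x, ksPt f t x) t := by
  obtain ⟨C, hC⟩ := ((isCompact_Icc (a := t - 1) (b := t + 1)).prod
    (isCompact_Icc (a := -R) (b := R))).exists_bound_of_continuousOn
    (f := Function.uncurry (ksPt f)) hf.pt.1.continuous.continuousOn
  refine (hasDerivAt_integral_of_dominated_loc_of_deriv_le (F := f) (F' := ksPt f)
    (s := Set.Icc (t - 1) (t + 1)) (bound := (Set.Icc (-R) R).indicator fun _ => C)
    (Icc_mem_nhds (by linarith) (by linarith)) ?_ ?_ ?_ ?_ ?_ ?_).2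
  · exact Filter.Eventually.of_forall fun τ => (hf.cont τ).aestronglyMeasurable
  · exact ks_integrable (hf.cont t) (hf.2 t)
  · exact (hf.pt.cont t).aestronglyMeasurable
  · refine Filter.Eventually.of_forall fun x τ hτ => ?_
    by_cases hx : x ∈ Set.Icc (-R) R
    · rw [Set.indicator_of_mem hx]
      exact hC (τ, x) ⟨hτ, hx⟩
    · rw [Set.indicator_of_notMem hx, hf.pt.2 τ x]
      · simp
      · by_contra h
        exact hx (abs_le.mp (not_lt.mp h))
  · exact (integrable_indicator_iff measurableSet_Icc).2 (by simp)
  · exact Filter.Eventually.of_forall fun x τ _ => hf.ht τ x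

/-- decay criterion: `∂ₜ g = ∂ₓ Φ + S` with `S ≤ 0`. -/
lemma KsNice.decr {R : ℝ} {g : ℝ → ℝ → ℝ} (hg : KsNice R g) (t : ℝ) (Φ S : ℝ → ℝ)
    (hΦ : ∀ x, HasDerivAt Φ (ksPt g t x - S x) x) (hΦ0 : ∀ x, R < |x| → Φ x = 0)
    (hS : Continuous S) (hS0 : ∀ x, R < |x| → S x = 0) (hneg : ∀ x, S x ≤ 0) :
    (∫ x, ksPt g t x) ≤ 0 := by
  have i1 := ks_integrable (hg.pt.cont t) (hg.pt.2 t)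
  have i2 := ks_integrable hS hS0
  have hc : Continuous Φ := continuous_iff_continuousAt.2 fun x => (hΦ x).continuousAt
  have h := integral_eq_zero_of_hasDerivAt_of_integrable hΦ (i1.sub i2) (ks_integrable hc hΦ0)
  rw [integral_sub i1 i2] at h
  have := integral_nonpos (μ := volume) hneg
  linarith

lemma KsNice.sup {R : ℝ} {f : ℝ → ℝ → ℝ} (hf : KsNice R f) (t x l : ℝ) (hl : 0 < l) :
    f t x ^ 2 ≤ l * (∫ y, f t y ^ 2) + l⁻¹ * ∫ y, ksPx f t y ^ 2 := by
  have c0 := hf.cont t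
  have c1 := hf.px.cont t
  have i0 : Integrable (fun y => l * f t y ^ 2) :=
    ks_integrable (R := R) (by fun_prop) (by intro y hy; simp [hf.2 t y hy])
  have i1 : Integrable (fun y => l⁻¹ * ksPx f t y ^ 2) :=
    ks_integrable (R := R) (by fun_prop) (by intro y hy; simp [hf.px.2 t y hy])
  have i2 : Integrable (fun y => 2 * f t y * ksPx f t y) :=
    ks_integrable (R := R) (by fun_prop) (by intro y hy; simp [hf.px.2 t y hy])
  have i3 : Integrable (fun y => f t y ^ 2) :=
    ks_integrable (R := R) (by fun_prop) (by intro y hy; simp [hf.2 t y hy])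
  have hd : ∀ y, HasDerivAt (fun y => f t y ^ 2) (2 * f t y * ksPx f t y) y := by
    intro y
    refine ((hf.hx t y).fun_pow 2).congr_deriv ?_
    norm_num
  have hlim : Filter.Tendsto (fun y => f t y ^ 2) Filter.atBot (nhds 0) := by
    apply tendsto_const_nhds.congr'
    filter_upwards [Filter.eventually_lt_atBot (-|R|)] with y hy
    rw [hf.2 t y]
    · simp
    · have := neg_le_abs y
      have := le_abs_self R
      linarith
  have key := integral_Iic_of_hasDerivAt_of_tendsto' (a := x) (fun y _ => hd y) i2.integrableOn hlim
  rw [sub_zero] at key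
  rw [← key, ← integral_const_mul, ← integral_const_mul, ← integral_add i0 i1]
  calc _ ≤ ∫ y in Set.Iic x, (l * f t y ^ 2 + l⁻¹ * ksPx f t y ^ 2) := by
        apply integral_mono i2.integrableOn (i0.add i1).integrableOn
        intro y
        have : 0 ≤ l⁻¹ * (l * f t y - ksPx f t y) ^ 2 := by positivity
        have e : l⁻¹ * (l * f t y - ksPx f t y) ^ 2 = 
            l * f t y ^ 2 + l⁻¹ * ksPx f t y ^ 2 - 2 * f t y * ksPx f t y := by
          field_simp
          ring
        simp only [Pi.add_apply]
        linarith
    _ ≤ _ := by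
        apply setIntegral_le_integral (i0.add i1)
        exact Filter.Eventually.of_forall fun y => by
          simp only [Pi.zero_apply, Pi.add_apply]
          positivity

lemma ks_fence {G G' : ℝ → ℝ} {L : ℝ} (hG : ∀ t, HasDerivAt G (G' t) t) (h0 : G 0 < L)
    (hd : ∀ t, 0 ≤ t → G t ≤ L → G' t ≤ 0) (t : ℝ) (ht : 0 ≤ t) : G t ≤ L := by
  set δ := (L - G 0) / (1 + t) with hδ
  have hδ0 : 0 < δ := div_pos (by linarith) (by linarith)
  have hδe : δ * (1 + t) = L - G 0 := by
    rw [hδ]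
    field_simp
  have hB : ∀ s, s ≤ t → G 0 + δ * s ≤ L := by
    intro s hs
    nlinarith
  have := image_le_of_deriv_right_lt_deriv_boundary (f := G) (f' := G') (a := 0) (b := t)
    (B := fun s => G 0 + δ * s) (B' := fun _ => δ)
    (fun s _ => (hG s).continuousAt.continuousWithinAt) (fun s _ => (hG s).hasDerivWithinAt)
    (by simp) (fun s => by simpa using ((hasDerivAt_id s).const_mul δ).const_add (G 0))
    (fun s hs he => lt_of_le_of_lt (hd s hs.1 (by rw [he]; exact hB s hs.2.le)) hδ0)
    (Set.right_mem_Icc.2 ht)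
  exact this.trans (hB t le_rfl)

/-- The pointwise form of the equation. -/
def KsPde (A ε β : ℝ) (u : ℝ → ℝ → ℝ) : Prop :=
  ∀ t : ℝ, 0 ≤ t → ∀ x : ℝ, ksPt u t x =
    - A * u t x * ksPx u t x - β * ksPx (ksPx (ksPx u)) t x
    + (2 * A / 3) * β * (ksPx u t x * ksPx (ksPx u) t x + u t x * ksPx (ksPx (ksPx u)) t x)
    - (A / 3) * β * ksPx u t x * ksPx (ksPx u) t x + ε * ksPx (ksPx u) t x

lemma ks_nice_comb {R : ℝ} {u : ℝ → ℝ → ℝ} (hu : KsNice R u) (a b c : ℝ) :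
    KsNice R (fun t x => a * u t x ^ 2 + b * u t x ^ 4 + c * ksPx u t x ^ 2) := by
  refine ⟨?_, fun t x hx => by simp [hu.2 t x hx, hu.px.2 t x hx]⟩
  have h1 := hu.1
  have h2 := hu.px.1
  have e : Function.uncurry (fun t x => a * u t x ^ 2 + b * u t x ^ 4 + c * ksPx u t x ^ 2) =
    fun p => a * (Function.uncurry u p) ^ 2 + b * (Function.uncurry u p) ^ 4 +
      c * (Function.uncurry (ksPx u) p) ^ 2 := by
    ext ⟨t, x⟩
    rfl
  rw [e]
  fun_prop

lemma ks_pt_comb {R : ℝ} {u : ℝ → ℝ → ℝ} (hu : KsNice R u) (a b c t x : ℝ) :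
    ksPt (fun t x => a * u t x ^ 2 + b * u t x ^ 4 + c * ksPx u t x ^ 2) t x =
      a * (2 * u t x * ksPt u t x) + b * (4 * u t x ^ 3 * ksPt u t x)
        + c * (2 * ksPx u t x * ksPx (ksPt u) t x) := by
  have h := ((((hu.ht t x).fun_pow 2).const_mul a).fun_add
    (((hu.ht t x).fun_pow 4).const_mul b)).fun_add (((hu.px.ht t x).fun_pow 2).const_mul c)
  rw [ksPt, h.deriv, hu.symm]
  norm_num

lemma ks_int_comb {R : ℝ} {u : ℝ → ℝ → ℝ} (hu : KsNice R u) (a b c t : ℝ) :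
    (∫ x, (a * u t x ^ 2 + b * u t x ^ 4 + c * ksPx u t x ^ 2)) =
      a * (∫ x, u t x ^ 2) + b * (∫ x, u t x ^ 4) + c * ∫ x, ksPx u t x ^ 2 := by
  have c0 := hu.cont t
  have c1 := hu.px.cont t
  have i0 : Integrable (fun y => a * u t y ^ 2) :=
    ks_integrable (R := R) (by fun_prop) (by intro y hy; simp [hu.2 t y hy])
  have i1 : Integrable (fun y => b * u t y ^ 4) :=
    ks_integrable (R := R) (by fun_prop) (by intro y hy; simp [hu.2 t y hy])
  have i2 : Integrable (fun y => c * ksPx u t y ^ 2) :=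
    ks_integrable (R := R) (by fun_prop) (by intro y hy; simp [hu.px.2 t y hy])
  have i01 : Integrable (fun y => a * u t y ^ 2 + b * u t y ^ 4) := i0.add i1
  rw [integral_add i01 i2, integral_add i0 i1, integral_const_mul, integral_const_mul,
    integral_const_mul]

lemma ks_energy {R A ε β : ℝ} {u : ℝ → ℝ → ℝ} (hu : KsNice R u) (hε : 0 < ε) (hβ : 0 < β)
    (hp : KsPde A ε β u) (t : ℝ) (ht : 0 ≤ t) :
    (∫ x, ksPt (fun t x => 1 * u t x ^ 2 + 0 * u t x ^ 4 + β * ksPx u t x ^ 2) t x) ≤ 0 := by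
  have c1 := hu.px.cont t
  have c2 := hu.px.px.cont t
  refine (ks_nice_comb hu 1 0 β).decr t
    (fun x => 2 * β * (ksPx u t x * ksPt u t x) - 2 * A / 3 * u t x ^ 3
      - 2 * β * (u t x * ksPx (ksPx u) t x) + β * ksPx u t x ^ 2
      + 2 * β * (2 * A / 3) * (u t x ^ 2 * ksPx (ksPx u) t x)
      + 2 * ε * (u t x * ksPx u t x) + β ^ 2 * ksPx (ksPx u) t x ^ 2
      - β ^ 2 * (2 * A / 3) * (u t x * ksPx (ksPx u) t x ^ 2))
    (fun x => - (2 * ε * ksPx u t x ^ 2 + 2 * β * ε * ksPx (ksPx u) t x ^ 2)) ?_ ?_ ?_ ?_ ?_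
  · intro x
    have d0 := hu.hx t x
    have d1 := hu.px.hx t x
    have d2 := hu.px.px.hx t x
    have dw := hu.pt.hx t x
    have h := ((((((((d1.fun_mul dw).const_mul (2 * β)).fun_sub ((d0.fun_pow 3).const_mul (2 * A / 3))).fun_sub
      ((d0.fun_mul d2).const_mul (2 * β))).fun_add ((d1.fun_pow 2).const_mul β)).fun_add
      (((d0.fun_pow 2).fun_mul d2).const_mul (2 * β * (2 * A / 3)))).fun_add
      ((d0.fun_mul d1).const_mul (2 * ε))).fun_add ((d2.fun_pow 2).const_mul (β ^ 2))).fun_sub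
      ((d0.fun_mul (d2.fun_pow 2)).const_mul (β ^ 2 * (2 * A / 3)))
    refine h.congr_deriv ?_
    rw [ks_pt_comb hu, hp t ht x]
    norm_num
    ring
  · intro x hx
    simp [hu.2 t x hx, hu.px.2 t x hx, hu.px.px.2 t x hx]
  · fun_prop
  · intro x hx
    simp [hu.px.2 t x hx, hu.px.px.2 t x hx]
  · intro x
    have : 0 ≤ 2 * ε * ksPx u t x ^ 2 + 2 * β * ε * ksPx (ksPx u) t x ^ 2 := by positivity
    linarith

lemma ks_alg {A ε β a b c : ℝ} (hA : A ≠ 0) (hε : 0 < ε) (hβ : 0 < β) (h1 : β ≤ ε ^ 2 / 4)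
    (h2 : A ^ 2 * β * a ^ 2 ≤ ε ^ 2 / 4) :
    12 * A ^ 2 * β * a ^ 2 * b * c - 28 * A / 3 * A ^ 2 * β * a ^ 3 * b * c
      + 2 * A * ε ^ 2 * a * b * c - 12 * A ^ 2 * ε * a ^ 2 * b ^ 2 - 2 * ε ^ 3 * c ^ 2 ≤ 0 := by
  set q := 12 * A * β * a - 28 / 3 * A ^ 2 * β * a ^ 2 + 2 * ε ^ 2 with hq
  have hs : (A * β * a) ^ 2 ≤ (ε ^ 2 / 4) ^ 2 := by
    have : (A * β * a) ^ 2 = β * (A ^ 2 * β * a ^ 2) := by ring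
    rw [this, sq (ε ^ 2 / 4)]
    exact mul_le_mul h1 h2 (by positivity) (by positivity)
  have hab := abs_le.1 (abs_le_of_sq_le_sq hs (by positivity))
  have h3 : 0 ≤ A ^ 2 * β * a ^ 2 := by positivity
  have hε2 : 0 < ε ^ 2 := by positivity
  have q1 : q ≤ 9 * ε ^ 2 := by rw [hq]; nlinarith [hab.1, hab.2]
  have q2 : -(9 * ε ^ 2) ≤ q := by rw [hq]; nlinarith [hab.1, hab.2]
  have q3 : q ^ 2 ≤ (9 * ε ^ 2) ^ 2 := sq_le_sq' q2 q1
  have e : 12 * A ^ 2 * β * a ^ 2 * b * c - 28 * A / 3 * A ^ 2 * β * a ^ 3 * b * c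
      + 2 * A * ε ^ 2 * a * b * c - 12 * A ^ 2 * ε * a ^ 2 * b ^ 2 - 2 * ε ^ 3 * c ^ 2
      = q * ((A * a * b) * c) - 12 * ε * (A * a * b) ^ 2 - 2 * ε ^ 3 * c ^ 2 := by
    rw [hq]; ring
  rw [e]
  generalize A * a * b = X
  have hq' : q * (X * c) ≤ 9 * ε ^ 2 * |X * c| := by
    calc q * (X * c) ≤ |q * (X * c)| := le_abs_self _
      _ = |q| * |X * c| := abs_mul _ _
      _ ≤ _ := by
        gcongr
        exact abs_le.2 ⟨q2, q1⟩
  have : 9 * ε ^ 2 * |X * c| ≤ 12 * ε * X ^ 2 + 2 * ε ^ 3 * c ^ 2 := by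
    rw [abs_mul, ← sq_abs X, ← sq_abs c]
    have : 0 ≤ ε * (12 * |X| ^ 2 + 2 * (ε * |c|) ^ 2 - 9 * (|X| * (ε * |c|))) := by
      apply mul_nonneg hε.le
      nlinarith [sq_nonneg (|X| - 3 / 8 * (ε * |c|)), sq_nonneg (ε * |c|)]
    nlinarith
  linarith

lemma ks_G {R A ε β : ℝ} {u : ℝ → ℝ → ℝ} (hu : KsNice R u) (hA : A ≠ 0) (hε : 0 < ε) (hβ : 0 < β)
    (hp : KsPde A ε β u) (t : ℝ) (ht : 0 ≤ t) (h1 : β ≤ ε ^ 2 / 4)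
    (h2 : ∀ x, A ^ 2 * β * u t x ^ 2 ≤ ε ^ 2 / 4) :
    (∫ x, ksPt (fun t x => 0 * u t x ^ 2 + A ^ 2 * u t x ^ 4 + ε ^ 2 * ksPx u t x ^ 2) t x)
      ≤ 0 := by
  have c0 := hu.cont t
  have c1 := hu.px.cont t
  have c2 := hu.px.px.cont t
  refine (ks_nice_comb hu 0 (A ^ 2) (ε ^ 2)).decr t
    (fun x => 2 * ε ^ 2 * (ksPx u t x * ksPt u t x) - 4 * A ^ 2 * A / 5 * u t x ^ 5
      - 4 * A ^ 2 * β * (u t x ^ 3 * ksPx (ksPx u) t x)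
      + 4 * A ^ 2 * β * (2 * A / 3) * (u t x ^ 4 * ksPx (ksPx u) t x)
      + 4 * A ^ 2 * ε * (u t x ^ 3 * ksPx u t x) + ε ^ 2 * β * ksPx (ksPx u) t x ^ 2
      - ε ^ 2 * β * (2 * A / 3) * (u t x * ksPx (ksPx u) t x ^ 2))
    (fun x => 12 * A ^ 2 * β * u t x ^ 2 * ksPx u t x * ksPx (ksPx u) t x
      - 28 * A / 3 * A ^ 2 * β * u t x ^ 3 * ksPx u t x * ksPx (ksPx u) t x
      + 2 * A * ε ^ 2 * u t x * ksPx u t x * ksPx (ksPx u) t x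
      - 12 * A ^ 2 * ε * u t x ^ 2 * ksPx u t x ^ 2 - 2 * ε ^ 3 * ksPx (ksPx u) t x ^ 2)
    ?_ ?_ ?_ ?_ ?_
  · intro x
    have d0 := hu.hx t x
    have d1 := hu.px.hx t x
    have d2 := hu.px.px.hx t x
    have dw := hu.pt.hx t x
    have h := (((((((d1.fun_mul dw).const_mul (2 * ε ^ 2)).fun_sub
      ((d0.fun_pow 5).const_mul (4 * A ^ 2 * A / 5))).fun_sub
      (((d0.fun_pow 3).fun_mul d2).const_mul (4 * A ^ 2 * β))).fun_add
      (((d0.fun_pow 4).fun_mul d2).const_mul (4 * A ^ 2 * β * (2 * A / 3)))).fun_add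
      (((d0.fun_pow 3).fun_mul d1).const_mul (4 * A ^ 2 * ε))).fun_add
      ((d2.fun_pow 2).const_mul (ε ^ 2 * β))).fun_sub
      ((d0.fun_mul (d2.fun_pow 2)).const_mul (ε ^ 2 * β * (2 * A / 3)))
    refine h.congr_deriv ?_
    rw [ks_pt_comb hu, hp t ht x]
    norm_num
    ring
  · intro x hx
    simp [hu.2 t x hx, hu.px.2 t x hx, hu.px.px.2 t x hx]
  · fun_prop
  · intro x hx
    simp [hu.2 t x hx, hu.px.2 t x hx, hu.px.px.2 t x hx]
  · intro x
    exact ks_alg hA hε hβ h1 (h2 x)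

lemma ks_int_nonneg (g : ℝ → ℝ) : 0 ≤ ∫ x, g x ^ 2 := integral_nonneg fun x => by positivity

lemma ks_int_nonneg4 (g : ℝ → ℝ) : 0 ≤ ∫ x, g x ^ 4 := integral_nonneg fun x => by positivity

lemma ks_energy_bound {R A ε β C₀ : ℝ} {u : ℝ → ℝ → ℝ} (hu : KsNice R u) (hε : 0 < ε) (hβ : 0 < β)
    (hp : KsPde A ε β u) (h0 : (∫ x, u 0 x ^ 2) + β * (∫ x, ksPx u 0 x ^ 2) ≤ C₀)
    (t : ℝ) (ht : 0 ≤ t) : (∫ x, u t x ^ 2) + β * (∫ x, ksPx u t x ^ 2) ≤ C₀ := by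
  refine le_of_forall_gt_imp_ge_of_dense fun L hL => ?_
  have := ks_fence (L := L) (fun t => (ks_nice_comb hu 1 0 β).hasDerivAt_integral t)
    (by rw [ks_int_comb hu]; linarith) (fun t ht _ => ks_energy hu hε hβ hp t ht) t ht
  rw [ks_int_comb hu] at this
  linarith

lemma ks_good {R A ε β C₀ L : ℝ} {u : ℝ → ℝ → ℝ} (hu : KsNice R u) (hA : A ≠ 0) (hC : 0 < C₀)
    (hL0 : 0 < L) (hε : 0 < ε) (hβ : 0 < β)
    (hp : KsPde A ε β u) (hE : ∀ t, 0 ≤ t → (∫ x, u t x ^ 2) + β * (∫ x, ksPx u t x ^ 2) ≤ C₀)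
    (hL : A ^ 2 * (∫ x, u 0 x ^ 4) + ε ^ 2 * (∫ x, ksPx u 0 x ^ 2) < L)
    (hβ' : β * (Real.sqrt C₀ * A ^ 2) ≤ ε ^ 4)
    (h1 : β ≤ ε ^ 2 / 4)
    (h : A ^ 2 * (Real.sqrt β * C₀) ≤ ε ^ 2 / 4 ∨ ε * Real.sqrt L ≤ 1 / 8) (t : ℝ) (ht : 0 ≤ t) :
    A ^ 2 * (∫ x, u t x ^ 4) + ε ^ 2 * (∫ x, ksPx u t x ^ 2) ≤ L := by
  have := ks_fence (L := L) (fun t => (ks_nice_comb hu 0 (A ^ 2) (ε ^ 2)).hasDerivAt_integral t)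
    (by rw [ks_int_comb hu]; linarith) (fun t ht hG => ks_G hu hA hε hβ hp t ht h1 ?_) t ht
  · rw [ks_int_comb hu] at this
    linarith
  intro x
  rw [ks_int_comb hu] at hG
  have hA2 : 0 < A ^ 2 := by positivity
  have hEt := hE t ht
  have n0 := ks_int_nonneg (u t)
  have n1 := ks_int_nonneg (ksPx u t)
  have n4 := ks_int_nonneg4 (u t)
  generalize (∫ x, u t x ^ 4) = I4 at *
  rcases h with h | h
  · have hk : 0 < Real.sqrt β := Real.sqrt_pos.2 hβ
    have hk2 : Real.sqrt β ^ 2 = β := Real.sq_sqrt hβ.le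
    have hs := hu.sup t x (Real.sqrt β)⁻¹ (by positivity)
    rw [inv_inv] at hs
    generalize Real.sqrt β = k at *
    generalize (∫ x, u t x ^ 2) = I2 at *
    generalize (∫ x, ksPx u t x ^ 2) = J at *
    have : β * u t x ^ 2 ≤ k * C₀ := by
      calc β * u t x ^ 2 ≤ β * (k⁻¹ * I2 + k * J) := by gcongr
        _ = k * (I2 + β * J) := by
          rw [← hk2]; field_simp
        _ ≤ k * C₀ := by gcongr
    calc A ^ 2 * β * u t x ^ 2 = A ^ 2 * (β * u t x ^ 2) := by ring
      _ ≤ A ^ 2 * (k * C₀) := by gcongr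
      _ ≤ _ := h
  · have hs0 : 0 < Real.sqrt C₀ := Real.sqrt_pos.2 hC
    have hs2 : Real.sqrt C₀ ^ 2 = C₀ := Real.sq_sqrt hC.le
    have hr0 : 0 < Real.sqrt L := Real.sqrt_pos.2 hL0
    have hr2 : Real.sqrt L ^ 2 = L := Real.sq_sqrt hL0.le
    have hs := hu.sup t x (Real.sqrt L / (ε * Real.sqrt C₀)) (by positivity)
    generalize Real.sqrt C₀ = s at *
    generalize Real.sqrt L = r at *
    generalize (∫ x, u t x ^ 2) = I2 at *
    generalize (∫ x, ksPx u t x ^ 2) = J at *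
    have hI : I2 ≤ s ^ 2 := by
      rw [hs2]
      have : 0 ≤ β * J := by positivity
      linarith
    have hJ : J ≤ r ^ 2 / ε ^ 2 := by
      rw [le_div_iff₀ (by positivity), hr2]
      have : 0 ≤ A ^ 2 * I4 := by positivity
      linarith
    have hu2 : u t x ^ 2 ≤ 2 * r * s / ε := by
      calc u t x ^ 2 ≤ _ := hs
        _ ≤ r / (ε * s) * s ^ 2 + (r / (ε * s))⁻¹ * (r ^ 2 / ε ^ 2) := by gcongr
        _ = _ := by
          field_simp
          ring
    calc A ^ 2 * β * u t x ^ 2 ≤ A ^ 2 * β * (2 * r * s / ε) := by gcongr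
      _ = (β * (s * A ^ 2)) * (2 * r / ε) := by ring
      _ ≤ ε ^ 4 * (2 * r / ε) := by gcongr
      _ = 2 * ε ^ 2 * (ε * r) := by
        field_simp
      _ ≤ 2 * ε ^ 2 * (1 / 8) := by gcongr
      _ = _ := by ring

lemma ks_bad {R ε β C₀ κ ε₀ : ℝ} {u : ℝ → ℝ → ℝ} (hu : KsNice R u) (hC : 0 < C₀)
    (hε : 0 < ε) (hβ : 0 < β) (hκ : 0 < κ) (hε₀ : 0 < ε₀) (hle : ε₀ ≤ ε)
    (hk : κ * ε ≤ Real.sqrt β) (t : ℝ)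
    (hE : (∫ x, u t x ^ 2) + β * (∫ x, ksPx u t x ^ 2) ≤ C₀) :
    (∫ x, u t x ^ 4) ≤ C₀ ^ 2 / (κ * ε₀) ∧ ε ^ 2 * (∫ x, ksPx u t x ^ 2) ≤ C₀ / κ ^ 2 := by
  have n0 := ks_int_nonneg (u t)
  have n1 := ks_int_nonneg (ksPx u t)
  have hk0 : 0 < Real.sqrt β := Real.sqrt_pos.2 hβ
  have hk2 : Real.sqrt β ^ 2 = β := Real.sq_sqrt hβ.le
  have c0 := hu.cont t
  have hsup : ∀ x, u t x ^ 2 ≤ C₀ / (κ * ε₀) := by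
    intro x
    have hs := hu.sup t x (Real.sqrt β)⁻¹ (by positivity)
    rw [inv_inv] at hs
    calc u t x ^ 2 ≤ _ := hs
      _ = ((∫ x, u t x ^ 2) + Real.sqrt β ^ 2 * (∫ x, ksPx u t x ^ 2)) / Real.sqrt β := by
        field_simp
      _ ≤ C₀ / (κ * ε₀) := by
        rw [hk2]
        gcongr
        exact le_trans (by gcongr) hk
  have hI2 : (∫ x, u t x ^ 2) ≤ C₀ := by
    have : 0 ≤ β * ∫ x, ksPx u t x ^ 2 := by positivity
    linarith
  refine ⟨?_, ?_⟩
  · calc (∫ x, u t x ^ 4) ≤ ∫ x, C₀ / (κ * ε₀) * u t x ^ 2 := by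
          apply integral_mono
          · exact ks_integrable (R := R) (by fun_prop) (by intro y hy; simp [hu.2 t y hy])
          · exact ks_integrable (R := R) (by fun_prop) (by intro y hy; simp [hu.2 t y hy])
          · intro x
            have : u t x ^ 4 = u t x ^ 2 * u t x ^ 2 := by ring
            simp only [this]
            gcongr
            exact hsup x
      _ = C₀ / (κ * ε₀) * ∫ x, u t x ^ 2 := integral_const_mul _ _
      _ ≤ C₀ / (κ * ε₀) * C₀ := by gcongr
      _ = _ := by ring
  · rw [le_div_iff₀ (by positivity)]
    calc ε ^ 2 * (∫ x, ksPx u t x ^ 2) * κ ^ 2 = (κ * ε) ^ 2 * (∫ x, ksPx u t x ^ 2) := by ring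
      _ ≤ Real.sqrt β ^ 2 * (∫ x, ksPx u t x ^ 2) := by gcongr
      _ ≤ C₀ := by rw [hk2]; linarith




/-- Uniform bounds: the family `u` is bounded in `L^∞(L⁴)` and `ε ∂ₓ u` in `L^∞(L²)`. -/
theorem stmt_8 (A C₀ : ℝ) (hA : A ≠ 0) (hC₀pos : 0 < C₀) :
    ∃ M : ℝ, 0 < M ∧
      ∀ (ε β : ℝ) (u : ℝ → ℝ → ℝ),
        0 < ε → 0 < β →
        ContDiff ℝ (⊤ : ℕ∞) (Function.uncurry u) →
        (∃ R > (0:ℝ), ∀ t x : ℝ, R ≤ |x| → u t x = 0) →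
        (∀ t : ℝ, 0 ≤ t → ∀ x : ℝ,
          deriv (fun τ => u τ x) t
            + A * u t x * deriv (u t) x
            + β * deriv (deriv (deriv (u t))) x
            - (2 * A / 3) * β * deriv (fun y => u t y * deriv (deriv (u t)) y) x
            - (-(A / 3)) * β * deriv (u t) x * deriv (deriv (u t)) x
            - ε * deriv (deriv (u t)) x = 0) →
        ((∫ x : ℝ, (u 0 x) ^ 2) + (∫ x : ℝ, (u 0 x) ^ 4)
            + (β + ε ^ 2) * (∫ x : ℝ, (deriv (u 0) x) ^ 2) ≤ C₀) →
        β ≤ ε ^ 4 / (Real.sqrt C₀ * A ^ 2) →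
        ∀ t : ℝ, 0 ≤ t →
          (∫ x : ℝ, (u t x) ^ 4) ≤ M ∧
          ε ^ 2 * (∫ x : ℝ, (deriv (u t) x) ^ 2) ≤ M := by
  set L : ℝ := (A ^ 2 + 1) * C₀ + 1 with hL
  have hA2 : 0 < A ^ 2 := by positivity
  have hL0 : 0 < L := by positivity
  have hs0 : 0 < Real.sqrt C₀ := Real.sqrt_pos.2 hC₀pos
  have hr0 : 0 < Real.sqrt L := Real.sqrt_pos.2 hL0
  obtain ⟨ε₀, hε₀, hε₁, hε₂⟩ : ∃ ε₀ : ℝ, 0 < ε₀ ∧ ε₀ * Real.sqrt L ≤ 1 / 8 ∧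
      ε₀ ^ 2 ≤ Real.sqrt C₀ * A ^ 2 / 4 := by
    refine ⟨min (1 / (8 * Real.sqrt L)) (Real.sqrt (Real.sqrt C₀ * A ^ 2 / 4)), ?_, ?_, ?_⟩
    · exact lt_min (by positivity) (Real.sqrt_pos.2 (by positivity))
    · calc _ ≤ 1 / (8 * Real.sqrt L) * Real.sqrt L := by
            gcongr
            exact min_le_left _ _
        _ = 1 / 8 := by field_simp
    · calc _ ≤ Real.sqrt (Real.sqrt C₀ * A ^ 2 / 4) ^ 2 := by
            gcongr
            exact min_le_right _ _
        _ = _ := Real.sq_sqrt (by positivity)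
  obtain ⟨κ, hκ, hκ1, hκ2⟩ : ∃ κ : ℝ, 0 < κ ∧ κ ≤ 1 / 2 ∧ A ^ 2 * C₀ * κ ≤ ε₀ / 4 := by
    refine ⟨min (1 / 2) (ε₀ / (4 * A ^ 2 * C₀)), lt_min (by norm_num) (by positivity),
      min_le_left _ _, ?_⟩
    calc _ ≤ A ^ 2 * C₀ * (ε₀ / (4 * A ^ 2 * C₀)) := by
          gcongr
          exact min_le_right _ _
      _ = _ := by field_simp
  have m1 : 0 < L / A ^ 2 := by positivity
  have m2 : 0 < C₀ / κ ^ 2 := by positivity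
  have m3 : 0 < C₀ ^ 2 / (κ * ε₀) := by positivity
  refine ⟨L + L / A ^ 2 + C₀ / κ ^ 2 + C₀ ^ 2 / (κ * ε₀), by positivity, ?_⟩
  intro ε β u hε hβ hsm hsupp hpde hinit hβε t ht
  obtain ⟨R, hR, hsupp⟩ := hsupp
  have hu : KsNice R u := ⟨hsm, fun t x hx => hsupp t x hx.le⟩
  have hp : KsPde A ε β u := by
    intro t ht x
    have h := hpde t ht x
    have hd : deriv (fun y => u t y * deriv (deriv (u t)) y) x =
        ksPx u t x * ksPx (ksPx u) t x + u t x * ksPx (ksPx (ksPx u)) t x :=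
      ((hu.hx t x).fun_mul (hu.px.px.hx t x)).deriv
    rw [hd] at h
    change ksPt u t x + A * u t x * ksPx u t x + β * ksPx (ksPx (ksPx u)) t x - _ -
      (-(A / 3)) * β * ksPx u t x * ksPx (ksPx u) t x - ε * ksPx (ksPx u) t x = 0 at h
    linarith
  change (∫ x, u 0 x ^ 2) + (∫ x, u 0 x ^ 4) + (β + ε ^ 2) * (∫ x, ksPx u 0 x ^ 2) ≤ C₀ at hinit
  change _ ∧ ε ^ 2 * (∫ x, ksPx u t x ^ 2) ≤ _
  have z2 := ks_int_nonneg (u 0)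
  have z4 := ks_int_nonneg4 (u 0)
  have zx := ks_int_nonneg (ksPx u 0)
  have zx1 : 0 ≤ β * ∫ x, ksPx u 0 x ^ 2 := by positivity
  have zx2 : 0 ≤ ε ^ 2 * ∫ x, ksPx u 0 x ^ 2 := by positivity
  have hE := ks_energy_bound (C₀ := C₀) hu hε hβ hp (by linarith)
  have hGL : A ^ 2 * (∫ x, u 0 x ^ 4) + ε ^ 2 * (∫ x, ksPx u 0 x ^ 2) < L := by
    have : A ^ 2 * (∫ x, u 0 x ^ 4) ≤ A ^ 2 * C₀ := by
      gcongr
      linarith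
    rw [hL]
    linarith
  have hβ' : β * (Real.sqrt C₀ * A ^ 2) ≤ ε ^ 4 := (le_div_iff₀ (by positivity)).1 hβε
  by_cases hbad : ε₀ ≤ ε ∧ κ * ε ≤ Real.sqrt β
  · obtain ⟨b1, b2⟩ := ks_bad hu hC₀pos hε hβ hκ hε₀ hbad.1 hbad.2 t (hE t ht)
    constructor <;> linarith
  · have hk2 : Real.sqrt β ^ 2 = β := Real.sq_sqrt hβ.le
    have hg : β ≤ ε ^ 2 / 4 ∧
        (A ^ 2 * (Real.sqrt β * C₀) ≤ ε ^ 2 / 4 ∨ ε * Real.sqrt L ≤ 1 / 8) := by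
      by_cases hle : ε₀ ≤ ε
      · have hk : Real.sqrt β ≤ κ * ε := by
          by_contra hcon
          exact hbad ⟨hle, (not_le.1 hcon).le⟩
        refine ⟨?_, Or.inl ?_⟩
        · calc β = Real.sqrt β ^ 2 := hk2.symm
            _ ≤ (1 / 2 * ε) ^ 2 := by
              gcongr
              exact hk.trans (by gcongr)
            _ = _ := by ring
        · calc A ^ 2 * (Real.sqrt β * C₀) ≤ A ^ 2 * (κ * ε * C₀) := by gcongr
            _ = (A ^ 2 * C₀ * κ) * ε := by ring
            _ ≤ (ε₀ / 4) * ε := by gcongr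
            _ ≤ (ε / 4) * ε := by gcongr
            _ = _ := by ring
      · have hlt : ε ≤ ε₀ := (not_le.1 hle).le
        refine ⟨?_, Or.inr ?_⟩
        · have hsA : 0 < Real.sqrt C₀ * A ^ 2 := by positivity
          refine le_of_mul_le_mul_right ?_ hsA
          calc β * (Real.sqrt C₀ * A ^ 2) ≤ ε ^ 4 := hβ'
            _ = ε ^ 2 * ε ^ 2 := by ring
            _ ≤ ε ^ 2 * ε₀ ^ 2 := by gcongr
            _ ≤ ε ^ 2 * (Real.sqrt C₀ * A ^ 2 / 4) := by gcongr
            _ = _ := by ring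
        · exact le_trans (by gcongr) hε₁
    have hfin := ks_good hu hA hC₀pos hL0 hε hβ hp hE hGL hβ' hg.1 hg.2 t ht
    have n4 : 0 ≤ A ^ 2 * (∫ x, u t x ^ 4) := mul_nonneg hA2.le (ks_int_nonneg4 (u t))
    have nx : 0 ≤ ε ^ 2 * (∫ x, ksPx u t x ^ 2) :=
      mul_nonneg (by positivity) (ks_int_nonneg (ksPx u t))
    constructor
    · have : (∫ x, u t x ^ 4) ≤ L / A ^ 2 := by
        rw [le_div_iff₀ hA2]
        linarith
      linarith
    · linarith
end

section
/- There exists a constant M > 0, depending only on A and C₀, such that for every t ≥ 0 one has ε ∫₀ᵗ ‖u(s,·)∂ₓu(s,·)‖²_{L²(ℝ)} ds ≤ M and ε³ ∫₀ᵗ ‖∂ₓ²u(s,·)‖²_{L²(ℝ)} ds ≤ M. -/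
open MeasureTheory

namespace KSaux

/-- Differentiation under the integral sign on a compact interval. -/
theorem leibniz {f g : ℝ → ℝ → ℝ} (r : ℝ)
    (hf : Continuous (Function.uncurry f)) (hg : Continuous (Function.uncurry g))
    (h : ∀ t x, HasDerivAt (fun τ => f τ x) (g t x) t) (t : ℝ) :
    HasDerivAt (fun τ => ∫ x in (-r)..r, f τ x) (∫ x in (-r)..r, g t x) t := by
  have hK : IsCompact (Set.Icc (t - 1) (t + 1) ×ˢ Set.uIcc (-r) r) :=
    isCompact_Icc.prod isCompact_uIcc
  obtain ⟨M, hM⟩ := hK.exists_bound_of_continuousOn hg.continuousOn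
  have hfx : ∀ τ, Continuous (f τ) := fun τ => hf.comp (by fun_prop : Continuous fun x => (τ, x))
  have hgx : ∀ τ, Continuous (g τ) := fun τ => hg.comp (by fun_prop : Continuous fun x => (τ, x))
  refine (intervalIntegral.hasDerivAt_integral_of_dominated_loc_of_deriv_le
    (F := f) (F' := g) (bound := fun _ => M) (s := Set.Icc (t - 1) (t + 1))
    (Icc_mem_nhds (by linarith) (by linarith)) ?_ ((hfx t).intervalIntegrable _ _)
    (hgx t).aestronglyMeasurable ?_ (by simp) ?_).2
  · exact Filter.Eventually.of_forall fun τ => (hfx τ).aestronglyMeasurable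
  · refine Filter.Eventually.of_forall fun x hx τ hτ => ?_
    exact hM (τ, x) ⟨hτ, Set.uIoc_subset_uIcc hx⟩
  · exact Filter.Eventually.of_forall fun x _ τ _ => h τ x

theorem int_congr_exact {f h g G : ℝ → ℝ} (r : ℝ) (hh : Continuous h) (hg : Continuous g)
    (hG : ∀ x, HasDerivAt G (g x) x) (h1 : G (-r) = 0) (h2 : G r = 0)
    (e : ∀ x, f x = h x + g x) : ∫ x in (-r)..r, f x = ∫ x in (-r)..r, h x := by
  have : ∫ x in (-r)..r, g x = 0 := by
    rw [intervalIntegral.integral_eq_sub_of_hasDerivAt (fun x _ => hG x)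
      (hg.intervalIntegrable _ _), h1, h2, sub_zero]
  simp_rw [e]
  rw [intervalIntegral.integral_add (hh.intervalIntegrable _ _) (hg.intervalIntegrable _ _), this,
    add_zero]

structure KS (A ε β r : ℝ) (v0 v1 v2 v3 w z : ℝ → ℝ → ℝ) : Prop where
  r0 : 0 < r
  c0 : Continuous (Function.uncurry v0)
  c1 : Continuous (Function.uncurry v1)
  c2 : Continuous (Function.uncurry v2)
  c3 : Continuous (Function.uncurry v3)
  cw : Continuous (Function.uncurry w)
  cz : Continuous (Function.uncurry z)
  d0 : ∀ t x, HasDerivAt (v0 t) (v1 t x) x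
  d1 : ∀ t x, HasDerivAt (v1 t) (v2 t x) x
  d2 : ∀ t x, HasDerivAt (v2 t) (v3 t x) x
  dw : ∀ t x, HasDerivAt (w t) (z t x) x
  t0 : ∀ t x, HasDerivAt (fun τ => v0 τ x) (w t x) t
  t1 : ∀ t x, HasDerivAt (fun τ => v1 τ x) (z t x) t
  b0 : ∀ t, v0 t (-r) = 0 ∧ v0 t r = 0
  b1 : ∀ t, v1 t (-r) = 0 ∧ v1 t r = 0
  b2 : ∀ t, v2 t (-r) = 0 ∧ v2 t r = 0
  pde : ∀ t, 0 ≤ t → ∀ x, w t x = -A * v0 t x * v1 t x - β * v3 t x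
    + (A / 3) * β * v1 t x * v2 t x + (2 * A / 3) * β * v0 t x * v3 t x + ε * v2 t x

section
variable {A ε β r : ℝ} {v0 v1 v2 v3 w z : ℝ → ℝ → ℝ}

theorem sl {f : ℝ → ℝ → ℝ} (hf : Continuous (Function.uncurry f)) (t : ℝ) : Continuous (f t) :=
  hf.comp (by fun_prop : Continuous fun x => (t, x))

theorem KS.dI0 (H : KS A ε β r v0 v1 v2 v3 w z) (t : ℝ) (ht : 0 ≤ t) :
    HasDerivAt (fun τ => ∫ x in (-r)..r, (v0 τ x) ^ 2)
      (∫ x in (-r)..r, (-2 * A * β * (v0 t x * v1 t x * v2 t x) - 2 * ε * (v1 t x) ^ 2)) t := by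
  have c0 := sl H.c0 t
  have c1 := sl H.c1 t
  have c2 := sl H.c2 t
  have c3 := sl H.c3 t
  have C0 := H.c0
  have CW := H.cw
  simp only [Function.uncurry_def] at C0 CW
  have L := leibniz (f := fun τ x => (v0 τ x) ^ 2) (g := fun τ x => 2 * v0 τ x * w τ x) r
    (by simp only [Function.uncurry_def]; fun_prop)
    (by simp only [Function.uncurry_def]; fun_prop)
    (fun s x => by
      have := (H.t0 s x).pow 2
      exact this.congr_deriv (by simp)) t
  refine L.congr_deriv ?_
  refine int_congr_exact (G := fun x => -2 * A / 3 * v0 t x ^ 3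
      - 2 * β * (v0 t x * v2 t x - v1 t x ^ 2 / 2) + 4 * A / 3 * β * (v0 t x ^ 2 * v2 t x)
      + 2 * ε * (v0 t x * v1 t x))
    (g := fun x => -2 * A * v0 t x ^ 2 * v1 t x - 2 * β * v0 t x * v3 t x
      + 4 * A / 3 * β * (2 * v0 t x * v1 t x * v2 t x + v0 t x ^ 2 * v3 t x)
      + 2 * ε * (v1 t x * v1 t x + v0 t x * v2 t x)) r (by fun_prop) (by fun_prop) ?_ ?_ ?_ ?_
  · intro x
    have e0 := H.d0 t x
    have e1 := H.d1 t x
    have e2 := H.d2 t x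
    have := ((((e0.pow 3).const_mul (-2 * A / 3)).sub (((e0.mul e2).sub
      ((e1.pow 2).div_const 2)).const_mul (2 * β))).add
      (((e0.pow 2).mul e2).const_mul (4 * A / 3 * β))).add ((e0.mul e1).const_mul (2 * ε))
    refine this.congr_deriv ?_
    simp
    ring
  · simp [H.b0 t, H.b1 t]
  · simp [H.b0 t, H.b1 t]
  · intro x
    rw [H.pde t ht x]
    ring

theorem KS.dI1 (H : KS A ε β r v0 v1 v2 v3 w z) (t : ℝ) (ht : 0 ≤ t) :
    HasDerivAt (fun τ => ∫ x in (-r)..r, (v1 τ x) ^ 2)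
      (∫ x in (-r)..r, (2 * A * (v0 t x * v1 t x * v2 t x) - 2 * ε * (v2 t x) ^ 2)) t := by
  have c0 := sl H.c0 t
  have c1 := sl H.c1 t
  have c2 := sl H.c2 t
  have c3 := sl H.c3 t
  have cw := sl H.cw t
  have cz := sl H.cz t
  have C0 := H.c1
  have CW := H.cz
  simp only [Function.uncurry_def] at C0 CW
  have L := leibniz (f := fun τ x => (v1 τ x) ^ 2) (g := fun τ x => 2 * v1 τ x * z τ x) r
    (by simp only [Function.uncurry_def]; fun_prop)
    (by simp only [Function.uncurry_def]; fun_prop)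
    (fun s x => by
      have := (H.t1 s x).pow 2
      exact this.congr_deriv (by simp)) t
  refine L.congr_deriv ?_
  refine int_congr_exact (G := fun x => 2 * (v1 t x * w t x) + β * v2 t x ^ 2
      - 2 * A / 3 * β * (v0 t x * v2 t x ^ 2))
    (g := fun x => 2 * (v2 t x * w t x + v1 t x * z t x) + 2 * β * v2 t x * v3 t x
      - 2 * A / 3 * β * (v1 t x * v2 t x ^ 2 + v0 t x * (2 * v2 t x * v3 t x)))
      r (by fun_prop) (by fun_prop) ?_ ?_ ?_ ?_
  · intro x
    have e0 := H.d0 t x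
    have e1 := H.d1 t x
    have e2 := H.d2 t x
    have ew := H.dw t x
    have := (((e1.mul ew).const_mul 2).add ((e2.pow 2).const_mul β)).sub
      ((e0.mul (e2.pow 2)).const_mul (2 * A / 3 * β))
    refine this.congr_deriv ?_
    simp
    ring
  · simp [H.b0 t, H.b1 t, H.b2 t]
  · simp [H.b0 t, H.b1 t, H.b2 t]
  · intro x
    rw [H.pde t ht x]
    ring

theorem KS.dL (H : KS A ε β r v0 v1 v2 v3 w z) (t : ℝ) (ht : 0 ≤ t) :
    HasDerivAt (fun τ => ∫ x in (-r)..r, (v0 τ x) ^ 4)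
      (∫ x in (-r)..r, (β * (12 * v0 t x - 28 * A / 3 * v0 t x ^ 2) * (v0 t x * v1 t x * v2 t x)
        - 12 * ε * (v0 t x * v1 t x) ^ 2)) t := by
  have c0 := sl H.c0 t
  have c1 := sl H.c1 t
  have c2 := sl H.c2 t
  have c3 := sl H.c3 t
  have C0 := H.c0
  have CW := H.cw
  simp only [Function.uncurry_def] at C0 CW
  have L := leibniz (f := fun τ x => (v0 τ x) ^ 4) (g := fun τ x => 4 * v0 τ x ^ 3 * w τ x) r
    (by simp only [Function.uncurry_def]; fun_prop)
    (by simp only [Function.uncurry_def]; fun_prop)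
    (fun s x => by
      have := (H.t0 s x).pow 4
      exact this.congr_deriv (by simp)) t
  refine L.congr_deriv ?_
  refine int_congr_exact (G := fun x => -4 * A / 5 * v0 t x ^ 5
      - 4 * β * (v0 t x ^ 3 * v2 t x) + 8 * A / 3 * β * (v0 t x ^ 4 * v2 t x)
      + 4 * ε * (v0 t x ^ 3 * v1 t x))
    (g := fun x => -4 * A * v0 t x ^ 4 * v1 t x
      - 4 * β * (3 * v0 t x ^ 2 * v1 t x * v2 t x + v0 t x ^ 3 * v3 t x)
      + 8 * A / 3 * β * (4 * v0 t x ^ 3 * v1 t x * v2 t x + v0 t x ^ 4 * v3 t x)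
      + 4 * ε * (3 * v0 t x ^ 2 * v1 t x * v1 t x + v0 t x ^ 3 * v2 t x))
      r (by fun_prop) (by fun_prop) ?_ ?_ ?_ ?_
  · intro x
    have e0 := H.d0 t x
    have e1 := H.d1 t x
    have e2 := H.d2 t x
    have := ((((e0.pow 5).const_mul (-4 * A / 5)).sub (((e0.pow 3).mul e2).const_mul (4 * β))).add
      (((e0.pow 4).mul e2).const_mul (8 * A / 3 * β))).add (((e0.pow 3).mul e1).const_mul (4 * ε))
    refine this.congr_deriv ?_
    simp
    ring
  · simp [H.b0 t, H.b1 t]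
  · simp [H.b0 t, H.b1 t]
  · intro x
    rw [H.pde t ht x]
    ring

/-- The energy identity. -/
theorem KS.dE (H : KS A ε β r v0 v1 v2 v3 w z) (t : ℝ) (ht : 0 ≤ t) :
    HasDerivAt (fun τ => (∫ x in (-r)..r, (v0 τ x) ^ 2) + β * ∫ x in (-r)..r, (v1 τ x) ^ 2)
      (-2 * ε * (∫ x in (-r)..r, (v1 t x) ^ 2)
        - 2 * β * ε * (∫ x in (-r)..r, (v2 t x) ^ 2)) t := by
  have c0 := sl H.c0 t
  have c1 := sl H.c1 t
  have c2 := sl H.c2 t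
  refine ((H.dI0 t ht).add ((H.dI1 t ht).const_mul β)).congr_deriv ?_
  symm
  rw [← intervalIntegral.integral_const_mul, ← intervalIntegral.integral_const_mul,
    ← intervalIntegral.integral_const_mul,
    ← intervalIntegral.integral_sub, ← intervalIntegral.integral_add]
  · congr 1
    ext x
    ring
  all_goals
    apply Continuous.intervalIntegrable
    fun_prop

/-- Pointwise bound. -/
theorem KS.sup (H : KS A ε β r v0 v1 v2 v3 w z) (hε : 0 < ε) (t x : ℝ)
    (hx : x ∈ Set.Icc (-r) r) :
    ε * v0 t x ^ 2 ≤ (∫ y in (-r)..r, (v0 t y) ^ 2) + ε ^ 2 * ∫ y in (-r)..r, (v1 t y) ^ 2 := by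
  have c0 := sl H.c0 t
  have c1 := sl H.c1 t
  have h1 : ∫ y in (-r)..x, (2 * v0 t y * v1 t y) = v0 t x ^ 2 := by
    rw [intervalIntegral.integral_eq_sub_of_hasDerivAt (f := fun y => v0 t y ^ 2)
      (fun y _ => ((H.d0 t y).pow 2).congr_deriv (by simp))
      ((by fun_prop : Continuous _).intervalIntegrable _ _)]
    simp [H.b0 t]
  rw [← h1, ← intervalIntegral.integral_const_mul, ← intervalIntegral.integral_const_mul,
    ← intervalIntegral.integral_add ((by fun_prop : Continuous _).intervalIntegrable _ _)
      ((by fun_prop : Continuous _).intervalIntegrable _ _)]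
  calc _ ≤ ∫ y in (-r)..x, (v0 t y ^ 2 + ε ^ 2 * v1 t y ^ 2) := by
        apply intervalIntegral.integral_mono_on hx.1
        · exact (by fun_prop : Continuous _).intervalIntegrable _ _
        · exact (by fun_prop : Continuous _).intervalIntegrable _ _
        · intro y _
          nlinarith [sq_nonneg (v0 t y - ε * v1 t y)]
    _ ≤ _ := by
        apply intervalIntegral.integral_mono_interval le_rfl hx.1 hx.2
        · exact Filter.Eventually.of_forall fun y => by simp only [Pi.zero_apply]; positivity
        · exact (by fun_prop : Continuous _).intervalIntegrable _ _

theorem int_sq_nonneg (r : ℝ) (hr : 0 < r) (f : ℝ → ℝ) : 0 ≤ ∫ x in (-r)..r, f x ^ 2 :=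
  intervalIntegral.integral_nonneg (by linarith) fun x _ => sq_nonneg _

theorem cont_int {f : ℝ → ℝ → ℝ} (r : ℝ) (hf : Continuous (Function.uncurry f)) :
    Continuous fun t => ∫ x in (-r)..r, f t x :=
  intervalIntegral.continuous_parametric_intervalIntegral_of_continuous' hf _ _

/-- Integrating a differential inequality. -/
theorem int_diss {F F' P : ℝ → ℝ} (hF : ∀ t, 0 ≤ t → HasDerivAt F (F' t) t) (hP : Continuous P)
    (T : ℝ) (hT : 0 ≤ T) (h : ∀ t, 0 ≤ t → t ≤ T → F' t ≤ -P t) :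
    ∫ s in (0:ℝ)..T, P s ≤ F 0 - F T := by
  have := intervalIntegral.integral_le_sub_of_hasDeriv_right_of_le (g := fun t => -F t)
    (g' := fun t => -F' t) (φ := P) hT
    (fun t ht => (hF t ht.1).neg.continuousAt.continuousWithinAt)
    (fun t ht => (hF t ht.1.le).neg.hasDerivWithinAt)
    (hP.continuousOn.integrableOn_Icc) (fun t ht => by
      have := h t ht.1.le ht.2.le
      linarith)
  linarith

theorem KS.E_le (H : KS A ε β r v0 v1 v2 v3 w z) (hε : 0 < ε) (hβ : 0 < β) (T : ℝ) (hT : 0 ≤ T) :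
    (∫ x in (-r)..r, (v0 T x) ^ 2) + β * (∫ x in (-r)..r, (v1 T x) ^ 2) ≤
    (∫ x in (-r)..r, (v0 0 x) ^ 2) + β * (∫ x in (-r)..r, (v1 0 x) ^ 2) := by
  have := int_diss (P := fun _ => 0) H.dE continuous_const T hT (fun t _ _ => by
    have h1 := int_sq_nonneg r H.r0 (v1 t)
    have h2 := int_sq_nonneg r H.r0 (v2 t)
    have : 0 ≤ ε * ∫ x in (-r)..r, (v1 t x) ^ 2 := by positivity
    have : 0 ≤ β * ε * ∫ x in (-r)..r, (v2 t x) ^ 2 := by positivity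
    linarith)
  simp at this
  linarith

theorem KS.cX (H : KS A ε β r v0 v1 v2 v3 w z) :
    Continuous fun t => ∫ x in (-r)..r, (v0 t x * v1 t x) ^ 2 := by
  have C0 := H.c0
  have C1 := H.c1
  simp only [Function.uncurry_def] at C0 C1
  exact cont_int r (by simp only [Function.uncurry_def]; fun_prop)

theorem KS.cI2 (H : KS A ε β r v0 v1 v2 v3 w z) :
    Continuous fun t => ∫ x in (-r)..r, (v2 t x) ^ 2 := by
  have C0 := H.c2
  simp only [Function.uncurry_def] at C0
  exact cont_int r (by simp only [Function.uncurry_def]; fun_prop)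

/-- Large viscosity. -/
theorem KS.large (H : KS A ε β r v0 v1 v2 v3 w z) (hε : 0 < ε) (hβ : 0 < β) {ε₀ C₀ : ℝ}
    (hε₀ : 0 < ε₀) (hle : ε₀ ≤ ε) (hC : 0 < C₀)
    (hE : (∫ x in (-r)..r, (v0 0 x) ^ 2) + β * (∫ x in (-r)..r, (v1 0 x) ^ 2) ≤ C₀)
    (hY : ε ^ 2 * (∫ x in (-r)..r, (v1 0 x) ^ 2) ≤ C₀) (T : ℝ) (hT : 0 ≤ T) :
    ∫ s in (0:ℝ)..T, (A ^ 2 * ε * (∫ x in (-r)..r, (v0 s x * v1 s x) ^ 2)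
      + ε ^ 3 * ∫ x in (-r)..r, (v2 s x) ^ 2) ≤ 2 * C₀ * Real.exp (A ^ 2 / ε₀ * C₀) := by
  have hEt := fun t ht => (H.E_le hε hβ t ht).trans hE
  have cX := H.cX
  have cI2 := H.cI2
  have hd := fun t ht => (((H.dI1 t ht).const_mul (ε ^ 2)).const_add C₀).mul
    ((H.dE t ht).const_mul (A ^ 2 / ε₀)).exp
  have key := int_diss hd (P := fun s => A ^ 2 * ε * (∫ x in (-r)..r, (v0 s x * v1 s x) ^ 2)
      + ε ^ 3 * ∫ x in (-r)..r, (v2 s x) ^ 2) (by fun_prop) T hT ?_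
  · refine key.trans ?_
    have h1 := int_sq_nonneg r H.r0 (v1 T)
    have h2 : 0 ≤ (C₀ + ε ^ 2 * ∫ x in (-r)..r, (v1 T x) ^ 2) * Real.exp (A ^ 2 / ε₀ *
      ((∫ x in (-r)..r, (v0 T x) ^ 2) + β * (∫ x in (-r)..r, (v1 T x) ^ 2))) := by positivity
    have h3 : (C₀ + ε ^ 2 * ∫ x in (-r)..r, (v1 0 x) ^ 2) * Real.exp (A ^ 2 / ε₀ *
      ((∫ x in (-r)..r, (v0 0 x) ^ 2) + β * (∫ x in (-r)..r, (v1 0 x) ^ 2))) ≤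
      2 * C₀ * Real.exp (A ^ 2 / ε₀ * C₀) := by
      have : Real.exp (A ^ 2 / ε₀ * ((∫ x in (-r)..r, (v0 0 x) ^ 2)
        + β * (∫ x in (-r)..r, (v1 0 x) ^ 2))) ≤ Real.exp (A ^ 2 / ε₀ * C₀) := by gcongr
      apply mul_le_mul _ this (Real.exp_pos _).le (by positivity)
      linarith
    exact (sub_le_self _ h2).trans h3
  · intro t ht _
    have c0 := sl H.c0 t
    have c1 := sl H.c1 t
    have c2 := sl H.c2 t
    have h0 := int_sq_nonneg r H.r0 (v0 t)
    have h1 := int_sq_nonneg r H.r0 (v1 t)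
    have h2 := int_sq_nonneg r H.r0 (v2 t)
    have hX := int_sq_nonneg r H.r0 (fun x => v0 t x * v1 t x)
    have hEt' := hEt t ht
    have hsup := H.sup hε t
    have hXle : ε * (∫ x in (-r)..r, (v0 t x * v1 t x) ^ 2) ≤
        (C₀ + ε ^ 2 * ∫ x in (-r)..r, (v1 t x) ^ 2) * ∫ x in (-r)..r, (v1 t x) ^ 2 := by
      rw [← intervalIntegral.integral_const_mul, ← intervalIntegral.integral_const_mul]
      apply intervalIntegral.integral_mono_on (by linarith [H.r0])
      · exact (by fun_prop : Continuous _).intervalIntegrable _ _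
      · exact (by fun_prop : Continuous _).intervalIntegrable _ _
      · intro x hx
        have h3 := hsup x hx
        have h4 : ε * v0 t x ^ 2 ≤ C₀ + ε ^ 2 * ∫ x in (-r)..r, (v1 t x) ^ 2 := by
          have : 0 ≤ β * ∫ x in (-r)..r, (v1 t x) ^ 2 := by positivity
          linarith
        have := mul_le_mul_of_nonneg_right h4 (sq_nonneg (v1 t x))
        linarith
    have hJ : ε ^ 2 * (∫ x in (-r)..r, (2 * A * (v0 t x * v1 t x * v2 t x)
        - 2 * ε * (v2 t x) ^ 2)) ≤ A ^ 2 * ε * (∫ x in (-r)..r, (v0 t x * v1 t x) ^ 2)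
        - ε ^ 3 * ∫ x in (-r)..r, (v2 t x) ^ 2 := by
      rw [← intervalIntegral.integral_const_mul, ← intervalIntegral.integral_const_mul,
        ← intervalIntegral.integral_const_mul, ← intervalIntegral.integral_sub
          ((by fun_prop : Continuous _).intervalIntegrable _ _)
          ((by fun_prop : Continuous _).intervalIntegrable _ _)]
      apply intervalIntegral.integral_mono_on (by linarith [H.r0])
      · exact (by fun_prop : Continuous _).intervalIntegrable _ _
      · exact (by fun_prop : Continuous _).intervalIntegrable _ _
      · intro x hx
        nlinarith [mul_nonneg hε.le (sq_nonneg (A * (v0 t x * v1 t x) - ε * v2 t x))]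
    generalize (∫ x in (-r)..r, (2 * A * (v0 t x * v1 t x * v2 t x)
        - 2 * ε * (v2 t x) ^ 2)) = J at *
    generalize (∫ x in (-r)..r, (v0 t x * v1 t x) ^ 2) = X at *
    generalize (∫ x in (-r)..r, (v2 t x) ^ 2) = I2 at *
    generalize (∫ x in (-r)..r, (v1 t x) ^ 2) = I1 at *
    generalize (∫ x in (-r)..r, (v0 t x) ^ 2) = I0 at *
    have he : 1 ≤ Real.exp (A ^ 2 / ε₀ * (I0 + β * I1)) := Real.one_le_exp (by positivity)
    generalize Real.exp (A ^ 2 / ε₀ * (I0 + β * I1)) = e at *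
    have hq : 2 * A ^ 2 * ε * X ≤ (C₀ + ε ^ 2 * I1) * (A ^ 2 / ε₀ * (2 * ε * I1)) := by
      calc 2 * A ^ 2 * ε * X = 2 * A ^ 2 * (ε * X) := by ring
        _ ≤ 2 * A ^ 2 * ((C₀ + ε ^ 2 * I1) * I1) := by gcongr
        _ = (C₀ + ε ^ 2 * I1) * (A ^ 2 / ε₀ * (2 * ε₀ * I1)) := by field_simp
        _ ≤ _ := by gcongr
    have hq2 : 0 ≤ (C₀ + ε ^ 2 * I1) * (A ^ 2 / ε₀ * (2 * β * ε * I2)) := by positivity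
    have hb : ε ^ 2 * J + (C₀ + ε ^ 2 * I1) * (A ^ 2 / ε₀ * (-2 * ε * I1 - 2 * β * ε * I2)) ≤
        -(A ^ 2 * ε * X + ε ^ 3 * I2) := by linarith
    have hp : 0 ≤ A ^ 2 * ε * X + ε ^ 3 * I2 := by positivity
    calc _ = e * (ε ^ 2 * J + (C₀ + ε ^ 2 * I1) *
          (A ^ 2 / ε₀ * (-2 * ε * I1 - 2 * β * ε * I2))) := by ring
      _ ≤ e * (-(A ^ 2 * ε * X + ε ^ 3 * I2)) := by gcongr
      _ ≤ _ := by nlinarith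

theorem pointwise {A ε B p q : ℝ} (hε : 0 < ε) (hB : |B| ≤ 3 * |A| * ε ^ 2) :
    B * (p * q) - 12 * A ^ 2 * ε * p ^ 2 - 2 * ε ^ 3 * q ^ 2 ≤
      -(A ^ 2 * ε * p ^ 2 + ε ^ 3 * q ^ 2) := by
  have h1 : B * (p * q) ≤ 3 * |A| * ε ^ 2 * (|p| * |q|) := by
    calc B * (p * q) ≤ |B * (p * q)| := le_abs_self _
      _ = |B| * (|p| * |q|) := by rw [abs_mul, abs_mul]
      _ ≤ _ := by gcongr
  have h2 := mul_nonneg hε.le (sq_nonneg (3 / 2 * (|A| * |p|) - ε * |q|))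
  have h3 : 0 ≤ ε * (A ^ 2 * p ^ 2) := by positivity
  have e : ε * (3 / 2 * (|A| * |p|) - ε * |q|) ^ 2 = 9 / 4 * (ε * (A ^ 2 * p ^ 2))
      - 3 * |A| * ε ^ 2 * (|p| * |q|) + ε ^ 3 * q ^ 2 := by
    rw [← sq_abs A, ← sq_abs p, ← sq_abs q]
    ring
  rw [e] at h2
  linarith

/-- Small viscosity. -/
theorem KS.small (H : KS A ε β r v0 v1 v2 v3 w z) (hε : 0 < ε) (hβ : 0 < β) {C₀ c Q K₀ : ℝ}
    (hC : 0 < C₀) (hc : 0 < c) (hε1 : ε ≤ 1) (hβc : β ≤ c * ε ^ 4)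
    (hQ : Q = 6 + (6 + 10 * |A|) * (C₀ + K₀)) (hεQ : ε * (|A| * c * Q) ≤ 1)
    (hE : (∫ x in (-r)..r, (v0 0 x) ^ 2) + β * (∫ x in (-r)..r, (v1 0 x) ^ 2) ≤ C₀)
    (hF : A ^ 2 * (∫ x in (-r)..r, (v0 0 x) ^ 4) + ε ^ 2 * (∫ x in (-r)..r, (v1 0 x) ^ 2)
      ≤ K₀ - 1) (T : ℝ) (hT : 0 ≤ T) :
    ∫ s in (0:ℝ)..T, (A ^ 2 * ε * (∫ x in (-r)..r, (v0 s x * v1 s x) ^ 2)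
      + ε ^ 3 * ∫ x in (-r)..r, (v2 s x) ^ 2) ≤ K₀ := by
  have hEt := fun t ht => (H.E_le hε hβ t ht).trans hE
  have cX := H.cX
  have cI2 := H.cI2
  have hd := fun t ht => ((H.dL t ht).const_mul (A ^ 2)).add ((H.dI1 t ht).const_mul (ε ^ 2))
  have hL : ∀ t, 0 ≤ ∫ x in (-r)..r, (v0 t x) ^ 4 := fun t =>
    intervalIntegral.integral_nonneg (by linarith [H.r0]) fun x _ => by positivity
  have step : ∀ t, 0 ≤ t → A ^ 2 * (∫ x in (-r)..r, (v0 t x) ^ 4)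
      + ε ^ 2 * (∫ x in (-r)..r, (v1 t x) ^ 2) ≤ K₀ →
      A ^ 2 * (∫ x in (-r)..r, (β * (12 * v0 t x - 28 * A / 3 * v0 t x ^ 2)
        * (v0 t x * v1 t x * v2 t x) - 12 * ε * (v0 t x * v1 t x) ^ 2))
      + ε ^ 2 * (∫ x in (-r)..r, (2 * A * (v0 t x * v1 t x * v2 t x)
        - 2 * ε * (v2 t x) ^ 2)) ≤
      -(A ^ 2 * ε * (∫ x in (-r)..r, (v0 t x * v1 t x) ^ 2)
      + ε ^ 3 * ∫ x in (-r)..r, (v2 t x) ^ 2) := by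
    intro t ht hK
    have c0 := sl H.c0 t
    have c1 := sl H.c1 t
    have c2 := sl H.c2 t
    have h1 := int_sq_nonneg r H.r0 (v1 t)
    have hL' := hL t
    have hEt' := hEt t ht
    have hsup := H.sup hε t
    rw [← intervalIntegral.integral_const_mul, ← intervalIntegral.integral_const_mul,
      ← intervalIntegral.integral_const_mul, ← intervalIntegral.integral_const_mul,
      ← intervalIntegral.integral_add
          ((by fun_prop : Continuous _).intervalIntegrable _ _)
          ((by fun_prop : Continuous _).intervalIntegrable _ _),
      ← intervalIntegral.integral_add
          ((by fun_prop : Continuous _).intervalIntegrable _ _)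
          ((by fun_prop : Continuous _).intervalIntegrable _ _),
      ← intervalIntegral.integral_neg]
    apply intervalIntegral.integral_mono_on (by linarith [H.r0])
    · exact (by fun_prop : Continuous _).intervalIntegrable _ _
    · exact (by fun_prop : Continuous _).intervalIntegrable _ _
    · intro x hx
      have h3 := hsup x hx
      have h4 : ε * v0 t x ^ 2 ≤ C₀ + K₀ := by
        have : 0 ≤ β * ∫ x in (-r)..r, (v1 t x) ^ 2 := by positivity
        have : 0 ≤ A ^ 2 * ∫ x in (-r)..r, (v0 t x) ^ 4 := by positivity
        linarith
      generalize v0 t x = a at *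
      generalize v1 t x = b at *
      generalize v2 t x = d at *
      have h5 : |12 * a - 28 * A / 3 * a ^ 2| ≤ 6 + (6 + 10 * |A|) * a ^ 2 := by
        have e1 : |12 * a - 28 * A / 3 * a ^ 2| ≤ 12 * |a| + 28 / 3 * |A| * a ^ 2 := by
          refine (abs_sub _ _).trans (le_of_eq ?_)
          simp only [abs_mul, abs_div, abs_pow, sq_abs]
          norm_num
          left
          ring
        have e2 := sq_nonneg (|a| - 1)
        have e3 : 0 ≤ |A| * a ^ 2 := by positivity
        nlinarith [sq_abs a]
      have h6 : |A| * β * |12 * a - 28 * A / 3 * a ^ 2| ≤ ε ^ 2 := by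
        calc |A| * β * |12 * a - 28 * A / 3 * a ^ 2|
            ≤ |A| * (c * ε ^ 4) * (6 + (6 + 10 * |A|) * a ^ 2) := by gcongr
          _ = |A| * c * ε ^ 3 * (6 * ε + (6 + 10 * |A|) * (ε * a ^ 2)) := by ring
          _ ≤ |A| * c * ε ^ 3 * (6 * 1 + (6 + 10 * |A|) * (C₀ + K₀)) := by gcongr
          _ = ε ^ 2 * (ε * (|A| * c * Q)) := by rw [hQ]; ring
          _ ≤ ε ^ 2 * 1 := by gcongr
          _ = ε ^ 2 := mul_one _
      have hB : |A ^ 2 * β * (12 * a - 28 * A / 3 * a ^ 2) + 2 * A * ε ^ 2| ≤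
          3 * |A| * ε ^ 2 := by
        refine (abs_add_le _ _).trans ?_
        have e1 : |A ^ 2 * β * (12 * a - 28 * A / 3 * a ^ 2)| =
            |A| * (|A| * β * |12 * a - 28 * A / 3 * a ^ 2|) := by
          rw [abs_mul, abs_mul, abs_of_pos hβ, abs_pow]; ring
        have e2 : |2 * A * ε ^ 2| = 2 * |A| * ε ^ 2 := by
          rw [abs_mul, abs_mul, abs_of_pos (by positivity : 0 < ε ^ 2)]; norm_num
        rw [e1, e2]
        have := mul_le_mul_of_nonneg_left h6 (abs_nonneg A)
        linarith
      have := pointwise (p := a * b) (q := d) hε hB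
      linarith
  have hbar : ∀ t, 0 ≤ t → t ≤ T → A ^ 2 * (∫ x in (-r)..r, (v0 t x) ^ 4)
      + ε ^ 2 * (∫ x in (-r)..r, (v1 t x) ^ 2) ≤ K₀ := by
    have hη : (0:ℝ) < 1 / (T + 1) := by positivity
    have hB : ∀ t, t ≤ T → K₀ - 1 + 1 / (T + 1) * t ≤ K₀ := by
      intro t ht
      have : 1 / (T + 1) * t ≤ 1 / (T + 1) * (T + 1) := by gcongr; linarith
      rw [one_div_mul_cancel (by positivity)] at this
      linarith
    intro t ht htT
    refine le_trans ?_ (hB t htT)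
    refine image_le_of_deriv_right_lt_deriv_boundary
      (f := fun t => A ^ 2 * (∫ x in (-r)..r, (v0 t x) ^ 4)
      + ε ^ 2 * (∫ x in (-r)..r, (v1 t x) ^ 2)) (a := 0) (b := T)
      (B := fun t => K₀ - 1 + 1 / (T + 1) * t) (B' := fun _ => 1 / (T + 1))
      (fun s hs => (hd s hs.1).continuousAt.continuousWithinAt)
      (fun s hs => (hd s hs.1).hasDerivWithinAt) ?_ ?_ ?_ ⟨ht, htT⟩
    · simpa using hF
    · intro s
      exact (((hasDerivAt_id s).const_mul (1 / (T + 1))).const_add (K₀ - 1)).congr_deriv (by simp)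
    · intro s hs he
      refine lt_of_le_of_lt (step s hs.1 ?_) ?_
      · exact le_of_eq_of_le he (hB s hs.2.le)
      · refine lt_of_le_of_lt ?_ hη
        have h2 := int_sq_nonneg r H.r0 (v2 s)
        have hX := int_sq_nonneg r H.r0 (fun x => v0 s x * v1 s x)
        have : 0 ≤ A ^ 2 * ε * (∫ x in (-r)..r, (v0 s x * v1 s x) ^ 2)
          + ε ^ 3 * ∫ x in (-r)..r, (v2 s x) ^ 2 := by positivity
        linarith
  have key := int_diss hd (P := fun s => A ^ 2 * ε * (∫ x in (-r)..r, (v0 s x * v1 s x) ^ 2)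
      + ε ^ 3 * ∫ x in (-r)..r, (v2 s x) ^ 2) (by fun_prop) T hT
      (fun t ht htT => step t ht (hbar t ht htT))
  refine key.trans ?_
  have h1 := int_sq_nonneg r H.r0 (v1 T)
  have hL' := hL T
  have : 0 ≤ A ^ 2 * (∫ x in (-r)..r, (v0 T x) ^ 4)
      + ε ^ 2 * (∫ x in (-r)..r, (v1 T x) ^ 2) := by positivity
  simp only [Pi.add_apply]
  linarith

/-- The two bounds from the combined one. -/
theorem KS.split (H : KS A ε β r v0 v1 v2 v3 w z) (hA : A ≠ 0) (hε : 0 < ε) {M : ℝ} (T : ℝ)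
    (hT : 0 ≤ T)
    (h : ∫ s in (0:ℝ)..T, (A ^ 2 * ε * (∫ x in (-r)..r, (v0 s x * v1 s x) ^ 2)
      + ε ^ 3 * ∫ x in (-r)..r, (v2 s x) ^ 2) ≤ M) :
    ε * (∫ s in (0:ℝ)..T, ∫ x in (-r)..r, (v0 s x * v1 s x) ^ 2) ≤ M / A ^ 2 ∧
    ε ^ 3 * (∫ s in (0:ℝ)..T, ∫ x in (-r)..r, (v2 s x) ^ 2) ≤ M := by
  have cX := H.cX
  have cI2 := H.cI2
  rw [intervalIntegral.integral_add ((by fun_prop : Continuous _).intervalIntegrable _ _)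
    ((by fun_prop : Continuous _).intervalIntegrable _ _), intervalIntegral.integral_const_mul,
    intervalIntegral.integral_const_mul] at h
  have h1 : 0 ≤ ∫ s in (0:ℝ)..T, ∫ x in (-r)..r, (v0 s x * v1 s x) ^ 2 :=
    intervalIntegral.integral_nonneg hT fun s _ => int_sq_nonneg r H.r0 _
  have h2 : 0 ≤ ∫ s in (0:ℝ)..T, ∫ x in (-r)..r, (v2 s x) ^ 2 :=
    intervalIntegral.integral_nonneg hT fun s _ => int_sq_nonneg r H.r0 _
  have h3 : 0 ≤ A ^ 2 * ε * ∫ s in (0:ℝ)..T, ∫ x in (-r)..r, (v0 s x * v1 s x) ^ 2 := by positivity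
  have h4 : 0 ≤ ε ^ 3 * ∫ s in (0:ℝ)..T, ∫ x in (-r)..r, (v2 s x) ^ 2 := by positivity
  constructor
  · rw [le_div_iff₀ (by positivity)]
    linarith
  · linarith

end

section
open Function

theorem contDiff_dx {f : ℝ → ℝ → ℝ} (hf : ContDiff ℝ (⊤ : ℕ∞) (uncurry f)) :
    ContDiff ℝ (⊤ : ℕ∞) (uncurry fun t x => deriv (f t) x) ∧
    (∀ t x, HasDerivAt (f t) (deriv (f t) x) x) ∧
    ∀ t x, deriv (f t) x = fderiv ℝ (uncurry f) (t, x) (0, 1) := by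
  have hd : ∀ t x, HasDerivAt (f t) (fderiv ℝ (uncurry f) (t, x) (0, 1)) x := by
    intro t x
    have h1 := (hf.differentiable (by simp) (t, x)).hasFDerivAt
    have h2 : HasDerivAt (fun y : ℝ => (t, y)) ((0:ℝ), (1:ℝ)) x :=
      (hasDerivAt_const x t).prodMk (hasDerivAt_id x)
    exact h1.comp_hasDerivAt x h2
  have e : ∀ t x, deriv (f t) x = fderiv ℝ (uncurry f) (t, x) (0, 1) := fun t x => (hd t x).deriv
  refine ⟨?_, fun t x => (hd t x).differentiableAt.hasDerivAt, e⟩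
  have : (uncurry fun t x => deriv (f t) x) = fun p => fderiv ℝ (uncurry f) p (0, 1) := by
    ext ⟨t, x⟩
    exact e t x
  rw [this]
  exact (hf.fderiv_right (m := (⊤ : ℕ∞)) (by simp)).clm_apply contDiff_const

theorem contDiff_dt {f : ℝ → ℝ → ℝ} (hf : ContDiff ℝ (⊤ : ℕ∞) (uncurry f)) :
    ContDiff ℝ (⊤ : ℕ∞) (uncurry fun t x => deriv (fun τ => f τ x) t) ∧
    (∀ t x, HasDerivAt (fun τ => f τ x) (deriv (fun τ => f τ x) t) t) ∧
    ∀ t x, deriv (fun τ => f τ x) t = fderiv ℝ (uncurry f) (t, x) (1, 0) := by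
  have hd : ∀ t x, HasDerivAt (fun τ => f τ x) (fderiv ℝ (uncurry f) (t, x) (1, 0)) t := by
    intro t x
    have h1 := (hf.differentiable (by simp) (t, x)).hasFDerivAt
    have h2 : HasDerivAt (fun y : ℝ => (y, x)) ((1:ℝ), (0:ℝ)) t :=
      (hasDerivAt_id t).prodMk (hasDerivAt_const t x)
    exact h1.comp_hasDerivAt t h2
  have e : ∀ t x, deriv (fun τ => f τ x) t = fderiv ℝ (uncurry f) (t, x) (1, 0) :=
    fun t x => (hd t x).deriv
  refine ⟨?_, fun t x => (hd t x).differentiableAt.hasDerivAt, e⟩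
  have : (uncurry fun t x => deriv (fun τ => f τ x) t) = fun p => fderiv ℝ (uncurry f) p (1, 0) := by
    ext ⟨t, x⟩
    exact e t x
  rw [this]
  exact (hf.fderiv_right (m := (⊤ : ℕ∞)) (by simp)).clm_apply contDiff_const

theorem mixed {f : ℝ → ℝ → ℝ} (hf : ContDiff ℝ (⊤ : ℕ∞) (uncurry f)) (t x : ℝ) :
    deriv (fun τ => deriv (f τ) x) t = deriv (fun y => deriv (fun τ => f τ y) t) x := by
  have hx := contDiff_dx hf
  have ht := contDiff_dt hf
  rw [(contDiff_dt hx.1).2.2 t x, (contDiff_dx ht.1).2.2 t x]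
  have e1 : (uncurry fun t x => deriv (f t) x) = fun p => fderiv ℝ (uncurry f) p (0, 1) := by
    ext ⟨t, x⟩
    exact hx.2.2 t x
  have e2 : (uncurry fun t x => deriv (fun τ => f τ x) t) =
      fun p => fderiv ℝ (uncurry f) p (1, 0) := by
    ext ⟨t, x⟩
    exact ht.2.2 t x
  have hD : DifferentiableAt ℝ (fderiv ℝ (uncurry f)) (t, x) :=
    (hf.fderiv_right (m := (⊤ : ℕ∞)) (by simp)).differentiable (by simp) _
  have hs : IsSymmSndFDerivAt ℝ (uncurry f) (t, x) :=
    hf.contDiffAt.isSymmSndFDerivAt (by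
      rw [minSmoothness_of_isRCLikeNormedField]
      exact WithTop.coe_le_coe.2 (le_top : (2 : ℕ∞) ≤ ⊤))
  rw [e1, e2, fderiv_clm_apply hD (by fun_prop), fderiv_clm_apply hD (by fun_prop)]
  simpa using hs (1, 0) (0, 1)

theorem dx_zero {f : ℝ → ℝ} {R : ℝ} (h : ∀ x, R < |x| → f x = 0) (x : ℝ) (hx : R < |x|) :
    deriv f x = 0 := by
  have : f =ᶠ[nhds x] fun _ => 0 := by
    filter_upwards [(isOpen_lt continuous_const continuous_abs).mem_nhds hx] with y hy
    exact h y hy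
  rw [this.deriv_eq]
  simp

theorem int_eq {f : ℝ → ℝ} {R : ℝ} (h : ∀ x, R < |x| → f x = 0) :
    ∫ x, f x = ∫ x in (-(R + 1))..(R + 1), f x := by
  symm
  apply intervalIntegral.integral_eq_integral_of_support_subset
  intro x hx
  have : |x| ≤ R := by
    by_contra hc
    exact hx (h x (not_le.1 hc))
  rw [abs_le] at this
  constructor <;> linarith

end
end KSaux

/-- Uniform bounds: `√ε u ∂ₓu` and `ε√ε ∂ₓ²u` are bounded in `L²(ℝ⁺×ℝ)`. -/
theorem stmt_9 (A C₀ : ℝ) (hA : A ≠ 0) (hC₀pos : 0 < C₀) :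
    ∃ M : ℝ, 0 < M ∧
      ∀ (ε β : ℝ) (u : ℝ → ℝ → ℝ),
        0 < ε → 0 < β →
        ContDiff ℝ (⊤ : ℕ∞) (Function.uncurry u) →
        (∃ R > (0:ℝ), ∀ t x : ℝ, R ≤ |x| → u t x = 0) →
        (∀ t : ℝ, 0 ≤ t → ∀ x : ℝ,
          deriv (fun τ => u τ x) t
            + A * u t x * deriv (u t) x
            + β * deriv (deriv (deriv (u t))) x
            - (2 * A / 3) * β * deriv (fun y => u t y * deriv (deriv (u t)) y) x
            - (-(A / 3)) * β * deriv (u t) x * deriv (deriv (u t)) x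
            - ε * deriv (deriv (u t)) x = 0) →
        ((∫ x : ℝ, (u 0 x) ^ 2) + (∫ x : ℝ, (u 0 x) ^ 4)
            + (β + ε ^ 2) * (∫ x : ℝ, (deriv (u 0) x) ^ 2) ≤ C₀) →
        β ≤ ε ^ 4 / (Real.sqrt C₀ * A ^ 2) →
        ∀ t : ℝ, 0 ≤ t →
          ε * (∫ s in (0:ℝ)..t, ∫ x : ℝ, (u s x * deriv (u s) x) ^ 2) ≤ M ∧
          ε ^ 3 * (∫ s in (0:ℝ)..t, ∫ x : ℝ, (deriv (deriv (u s)) x) ^ 2) ≤ M := by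
  obtain ⟨c, hc⟩ : ∃ c, c = (Real.sqrt C₀ * A ^ 2)⁻¹ := ⟨_, rfl⟩
  have hc0 : 0 < c := by rw [hc]; have := Real.sqrt_pos.2 hC₀pos; positivity
  obtain ⟨K₀, hK₀⟩ : ∃ K, K = C₀ * (A ^ 2 + 1) + 1 := ⟨_, rfl⟩
  have hK0 : 0 < K₀ := by rw [hK₀]; positivity
  obtain ⟨Q, hQ⟩ : ∃ Q, Q = 6 + (6 + 10 * |A|) * (C₀ + K₀) := ⟨_, rfl⟩
  have hQ0 : 0 < Q := by rw [hQ]; positivity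
  have hW : 0 < |A| * c * Q := by positivity
  obtain ⟨ε₀, hε₀⟩ : ∃ e, e = min 1 (1 / (|A| * c * Q)) := ⟨_, rfl⟩
  have hε0 : 0 < ε₀ := by rw [hε₀]; positivity
  obtain ⟨M₁, hM₁⟩ : ∃ M, M = 2 * C₀ * Real.exp (A ^ 2 / ε₀ * C₀) + K₀ := ⟨_, rfl⟩
  have hM0 : 0 < M₁ := by rw [hM₁]; positivity
  refine ⟨M₁ / A ^ 2 + M₁, by positivity, ?_⟩
  intro ε β u hε hβ hu ⟨R, hR, hsupp⟩ hpde hinit hβle t ht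
  obtain ⟨s1, d0, -⟩ := KSaux.contDiff_dx hu
  obtain ⟨s2, d1, -⟩ := KSaux.contDiff_dx s1
  obtain ⟨s3, d2, -⟩ := KSaux.contDiff_dx s2
  obtain ⟨sw, t0, -⟩ := KSaux.contDiff_dt hu
  obtain ⟨sz, t1, -⟩ := KSaux.contDiff_dt s1
  obtain ⟨-, dw, -⟩ := KSaux.contDiff_dx sw
  have z0 : ∀ t x, R < |x| → u t x = 0 := fun t x hx => hsupp t x hx.le
  have z1 : ∀ t x, R < |x| → deriv (u t) x = 0 := fun t x hx => KSaux.dx_zero (z0 t) x hx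
  have z2 : ∀ t x, R < |x| → deriv (deriv (u t)) x = 0 :=
    fun t x hx => KSaux.dx_zero (z1 t) x hx
  have ab1 : R < |(-(R + 1))| := by rw [abs_neg, abs_of_pos (by linarith)]; linarith
  have ab2 : R < |R + 1| := by rw [abs_of_pos (by linarith)]; linarith
  have H : KSaux.KS A ε β (R + 1) u (fun t x => deriv (u t) x)
      (fun t x => deriv (deriv (u t)) x) (fun t x => deriv (deriv (deriv (u t))) x)
      (fun t x => deriv (fun τ => u τ x) t) (fun t x => deriv (fun τ => deriv (u τ) x) t) :=
    { r0 := by linarith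
      c0 := hu.continuous
      c1 := s1.continuous
      c2 := s2.continuous
      c3 := s3.continuous
      cw := sw.continuous
      cz := sz.continuous
      d0 := d0
      d1 := d1
      d2 := d2
      dw := fun t x => (dw t x).congr_deriv (KSaux.mixed hu t x).symm
      t0 := t0
      t1 := t1
      b0 := fun t => ⟨z0 t _ ab1, z0 t _ ab2⟩
      b1 := fun t => ⟨z1 t _ ab1, z1 t _ ab2⟩
      b2 := fun t => ⟨z2 t _ ab1, z2 t _ ab2⟩
      pde := fun t ht x => by
        have h := hpde t ht x
        have hm : deriv (fun y => u t y * deriv (deriv (u t)) y) x =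
            deriv (u t) x * deriv (deriv (u t)) x + u t x * deriv (deriv (deriv (u t))) x :=
          ((d0 t x).mul (d2 t x)).deriv
        rw [hm] at h
        linarith }
  rw [KSaux.int_eq (R := R) (fun x hx => by rw [z0 0 x hx]; simp),
    KSaux.int_eq (f := fun x => u 0 x ^ 4) (R := R) (fun x hx => by rw [z0 0 x hx]; simp),
    KSaux.int_eq (f := fun x => deriv (u 0) x ^ 2) (R := R)
      (fun x hx => by rw [z1 0 x hx]; simp)] at hinit
  have eX : ∀ s, ∫ x : ℝ, (u s x * deriv (u s) x) ^ 2 =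
      ∫ x in (-(R + 1))..(R + 1), (u s x * deriv (u s) x) ^ 2 := fun s =>
    KSaux.int_eq (fun x hx => by rw [z0 s x hx]; simp)
  have eI : ∀ s, ∫ x : ℝ, (deriv (deriv (u s)) x) ^ 2 =
      ∫ x in (-(R + 1))..(R + 1), (deriv (deriv (u s)) x) ^ 2 := fun s =>
    KSaux.int_eq (fun x hx => by rw [z2 s x hx]; simp)
  simp_rw [eX, eI]
  have i0 := KSaux.int_sq_nonneg (R + 1) H.r0 (u 0)
  have i1 := KSaux.int_sq_nonneg (R + 1) H.r0 (deriv (u 0))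
  have i4 : 0 ≤ ∫ x in (-(R + 1))..(R + 1), (u 0 x) ^ 4 :=
    intervalIntegral.integral_nonneg (by linarith) fun x _ => by positivity
  have j1 : 0 ≤ β * ∫ x in (-(R + 1))..(R + 1), (deriv (u 0) x) ^ 2 := by positivity
  have j2 : 0 ≤ ε ^ 2 * ∫ x in (-(R + 1))..(R + 1), (deriv (u 0) x) ^ 2 := by positivity
  rw [add_mul] at hinit
  have main : ∫ s in (0:ℝ)..t, (A ^ 2 * ε * (∫ x in (-(R + 1))..(R + 1),
      (u s x * deriv (u s) x) ^ 2)
      + ε ^ 3 * ∫ x in (-(R + 1))..(R + 1), (deriv (deriv (u s)) x) ^ 2) ≤ M₁ := by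
    rcases le_total ε₀ ε with hle | hle
    · refine (H.large hε hβ hε0 hle hC₀pos (by linarith) (by linarith) t ht).trans ?_
      rw [hM₁]; linarith
    · refine (H.small (c := c) (Q := Q) hε hβ hC₀pos hc0 ?_ ?_ hQ ?_ (by linarith) ?_ t ht).trans ?_
      · exact hle.trans (hε₀ ▸ min_le_left _ _)
      · rw [hc]; rw [div_eq_mul_inv] at hβle; linarith
      · rw [← le_div_iff₀ hW]
        exact hle.trans (hε₀ ▸ min_le_right _ _)
      · rw [hK₀]
        have : A ^ 2 * (∫ x in (-(R + 1))..(R + 1), (u 0 x) ^ 4) ≤ A ^ 2 * C₀ := by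
          gcongr; linarith
        linarith
      · have : 0 < 2 * C₀ * Real.exp (A ^ 2 / ε₀ * C₀) := by positivity
        rw [hM₁]; linarith
  obtain ⟨f1, f2⟩ := H.split hA hε t ht main
  have : 0 < M₁ / A ^ 2 := by positivity
  exact ⟨f1.trans (by linarith), f2.trans (by linarith)⟩
end

section
/- There exists a constant M > 0, depending only on A and C₀, such that for every t ≥ 0 one has β ∫₀ᵗ ∫_ℝ |∂ₓu(s,x)| · |∂ₓ²u(s,x)| dx ds ≤ M ε². -/
open MeasureTheory
noncomputable def uX (f : ℝ → ℝ → ℝ) : ℝ → ℝ → ℝ := fun t x => deriv (f t) x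
noncomputable def uT (f : ℝ → ℝ → ℝ) : ℝ → ℝ → ℝ := fun t x => deriv (fun τ => f τ x) t
abbrev Sm (f : ℝ → ℝ → ℝ) : Prop := ContDiff ℝ (⊤ : ℕ∞) (Function.uncurry f)
lemma Sm.fd {f} (h : Sm f) (p : ℝ × ℝ) : HasFDerivAt (Function.uncurry f) (fderiv ℝ (Function.uncurry f) p) p :=
  ((h.differentiable (by simp)) p).hasFDerivAt
lemma Sm.dX' {f} (h : Sm f) (t x : ℝ) : HasDerivAt (f t) (fderiv ℝ (Function.uncurry f) (t,x) (0,1)) x := by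
  have h1 : HasDerivAt (fun y : ℝ => (t, y)) ((0:ℝ), (1:ℝ)) x := (hasDerivAt_const x t).prodMk (hasDerivAt_id x)
  exact (h.fd (t,x)).comp_hasDerivAt x h1
lemma Sm.dT' {f} (h : Sm f) (t x : ℝ) : HasDerivAt (fun τ => f τ x) (fderiv ℝ (Function.uncurry f) (t,x) (1,0)) t := by
  have h1 : HasDerivAt (fun y : ℝ => (y, x)) ((1:ℝ), (0:ℝ)) t := (hasDerivAt_id t).prodMk (hasDerivAt_const t x)
  exact (h.fd (t,x)).comp_hasDerivAt t h1
lemma Sm.dX {f} (h : Sm f) (t x : ℝ) : HasDerivAt (f t) (uX f t x) x :=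
  (h.dX' t x).differentiableAt.hasDerivAt
lemma Sm.dT {f} (h : Sm f) (t x : ℝ) : HasDerivAt (fun τ => f τ x) (uT f t x) t :=
  (h.dT' t x).differentiableAt.hasDerivAt
lemma Sm.uX_eq {f} (h : Sm f) : Function.uncurry (uX f) = fun p => fderiv ℝ (Function.uncurry f) p (0,1) := by
  funext ⟨t, x⟩; exact (h.dX' t x).deriv
lemma Sm.uT_eq {f} (h : Sm f) : Function.uncurry (uT f) = fun p => fderiv ℝ (Function.uncurry f) p (1,0) := by
  funext ⟨t, x⟩; exact (h.dT' t x).deriv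
lemma Sm.uX {f} (h : Sm f) : Sm (uX f) := by
  unfold Sm; rw [h.uX_eq]
  exact (h.fderiv_right (m := (⊤ : ℕ∞)) (by simp)).clm_apply contDiff_const
lemma Sm.uT {f} (h : Sm f) : Sm (uT f) := by
  unfold Sm; rw [h.uT_eq]
  exact (h.fderiv_right (m := (⊤ : ℕ∞)) (by simp)).clm_apply contDiff_const
lemma Sm.cont {f} (h : Sm f) : Continuous (Function.uncurry f) := ContDiff.continuous h
lemma Sm.contX {f} (h : Sm f) (t : ℝ) : Continuous (f t) := h.cont.comp (by fun_prop : Continuous fun x : ℝ => (t, x))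

lemma Sm.comm {f} (h : Sm f) (t x : ℝ) : _root_.uT (_root_.uX f) t x = _root_.uX (_root_.uT f) t x := by
  have h2 : DifferentiableAt ℝ (fderiv ℝ (Function.uncurry f)) (t,x) :=
    (h.fderiv_right (m := (⊤ : ℕ∞)) (by simp)).differentiable (by simp) _
  have hs : IsSymmSndFDerivAt ℝ (Function.uncurry f) (t,x) := by
    apply ContDiffAt.isSymmSndFDerivAt (n := (⊤ : ℕ∞)) (ContDiff.contDiffAt h)
    rw [minSmoothness_of_isRCLikeNormedField]
    exact WithTop.coe_le_coe.2 le_top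
  have e1 : _root_.uT (_root_.uX f) t x = fderiv ℝ (fderiv ℝ (Function.uncurry f)) (t,x) (1,0) (0,1) := by
    rw [show _root_.uT (_root_.uX f) t x = _ from (h.uX.dT' t x).deriv, h.uX_eq]
    rw [fderiv_clm_apply h2 (by fun_prop)]; simp
  have e2 : _root_.uX (_root_.uT f) t x = fderiv ℝ (fderiv ℝ (Function.uncurry f)) (t,x) (0,1) (1,0) := by
    rw [show _root_.uX (_root_.uT f) t x = _ from (h.uT.dX' t x).deriv, h.uT_eq]
    rw [fderiv_clm_apply h2 (by fun_prop)]; simp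
  rw [e1, e2]; exact hs _ _

abbrev Vn (R : ℝ) (f : ℝ → ℝ → ℝ) : Prop := ∀ t x : ℝ, R < |x| → f t x = 0
lemma Vn.uX {R f} (h : Vn R f) : Vn R (uX f) := by
  intro t x hx
  have : f t =ᶠ[nhds x] fun _ => 0 := by
    filter_upwards [(isOpen_lt continuous_const continuous_abs).mem_nhds hx] with y hy using h t y hy
  show deriv (f t) x = 0
  rw [this.deriv_eq]; simp
lemma Vn.uT {R f} (h : Vn R f) : Vn R (uT f) := by
  intro t x hx
  show deriv (fun τ => f τ x) t = 0
  simp [h _ x hx]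

lemma int_eq {R : ℝ} (g : ℝ → ℝ) (h : ∀ x, R < |x| → g x = 0) :
    ∫ x, g x = ∫ x in (-(R+1))..(R+1), g x := by
  symm
  apply intervalIntegral.integral_eq_integral_of_support_subset
  intro x hx
  have : |x| ≤ R := by
    by_contra hc; exact hx (h x (not_le.1 hc))
  rw [abs_le] at this
  constructor <;> linarith

lemma int_hasDeriv (f f' : ℝ → ℝ → ℝ) (a b : ℝ) (hab : a ≤ b) (hf : Continuous (Function.uncurry f))
    (hf' : Continuous (Function.uncurry f')) (hd : ∀ t x, HasDerivAt (fun τ => f τ x) (f' t x) t) (t : ℝ) :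
    HasDerivAt (fun t => ∫ x in a..b, f t x) (∫ x in a..b, f' t x) t := by
  have cX : ∀ (g : ℝ → ℝ → ℝ) , Continuous (Function.uncurry g) → ∀ t, Continuous (g t) :=
    fun g hg t => hg.comp (by fun_prop : Continuous fun x : ℝ => (t, x))
  obtain ⟨C, hC⟩ := ((isCompact_Icc (a := t-1) (b := t+1)).prod (isCompact_Icc (a := a) (b := b))).exists_bound_of_continuousOn hf'.continuousOn
  refine (intervalIntegral.hasDerivAt_integral_of_dominated_loc_of_deriv_le (bound := fun _ => C)
    (s := Set.Icc (t-1) (t+1)) (Icc_mem_nhds (by linarith) (by linarith)) ?_ ?_ ?_ ?_ ?_ ?_).2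
  · exact Filter.Eventually.of_forall fun s => (cX f hf s).aestronglyMeasurable
  · exact (cX f hf t).intervalIntegrable _ _
  · exact (cX f' hf' t).aestronglyMeasurable
  · refine Filter.Eventually.of_forall fun x hx s hs => ?_
    rw [Set.uIoc_of_le hab] at hx
    exact hC (s, x) ⟨hs, hx.1.le, hx.2⟩
  · exact intervalIntegrable_const
  · exact Filter.Eventually.of_forall fun x hx s hs => hd s x

lemma int_exact {r : ℝ} (f g G : ℝ → ℝ) (hf : Continuous f) (hg : Continuous g)
    (hG : ∀ x, HasDerivAt G (f x - g x) x) (h1 : G r = 0) (h2 : G (-r) = 0) :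
    ∫ x in (-r)..r, f x = ∫ x in (-r)..r, g x := by
  have h := intervalIntegral.integral_eq_sub_of_hasDerivAt (a := -r) (b := r) (f := G)
    (fun x _ => hG x) ((hf.sub hg).intervalIntegrable _ _)
  rw [intervalIntegral.integral_sub (hf.intervalIntegrable _ _) (hg.intervalIntegrable _ _), h1, h2] at h
  linarith

lemma sup_bound {r : ℝ} (hr : 0 ≤ r) (a0 a1 : ℝ → ℝ) (c0 : Continuous a0) (c1 : Continuous a1)
    (h0 : ∀ x, HasDerivAt a0 (a1 x) x) (z : a0 (-r) = 0) (x : ℝ) (hx : x ∈ Set.Icc (-r) r) :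
    a0 x ^ 4 ≤ 4 * (∫ x in (-r)..r, a0 x ^ 2) * (∫ x in (-r)..r, a1 x ^ 2) := by
  set n := ∫ x in (-r)..r, a0 x ^ 2
  set y := ∫ x in (-r)..r, a1 x ^ 2
  have key : ∀ l : ℝ, 0 ≤ n * (l * l) + (-(a0 x ^ 2)) * l + y := by
    intro l
    have e1 : ∫ s in (-r)..x, 2 * l * a0 s * a1 s = l * a0 x ^ 2 := by
      rw [intervalIntegral.integral_eq_sub_of_hasDerivAt (f := fun s => l * a0 s ^ 2)]
      · simp [z]
      · intro s _
        have := ((h0 s).pow 2).const_mul l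
        exact this.congr_deriv (by simp; ring)
      · exact Continuous.intervalIntegrable (by fun_prop) _ _
    have e2 : ∫ s in (-r)..x, 2 * l * a0 s * a1 s ≤ ∫ s in (-r)..x, (l^2 * a0 s ^ 2 + a1 s ^ 2) := by
      apply intervalIntegral.integral_mono_on hx.1
      · exact Continuous.intervalIntegrable (by fun_prop) _ _
      · exact Continuous.intervalIntegrable (by fun_prop) _ _
      · intro s _; nlinarith [sq_nonneg (l * a0 s - a1 s)]
    have e3 : ∫ s in (-r)..x, (l^2 * a0 s ^ 2 + a1 s ^ 2) ≤ ∫ s in (-r)..r, (l^2 * a0 s ^ 2 + a1 s ^ 2) := by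
      apply intervalIntegral.integral_mono_interval le_rfl hx.1 hx.2
      · exact Filter.Eventually.of_forall fun s => by positivity
      · exact Continuous.intervalIntegrable (by fun_prop) _ _
    have e4 : ∫ s in (-r)..r, (l^2 * a0 s ^ 2 + a1 s ^ 2) = l^2 * n + y := by
      rw [intervalIntegral.integral_add, intervalIntegral.integral_const_mul]
      · exact Continuous.intervalIntegrable (by fun_prop) _ _
      · exact Continuous.intervalIntegrable (by fun_prop) _ _
    nlinarith
  have := discrim_le_zero key
  unfold discrim at this
  nlinarith

lemma pointwise (A k ε β p m q y : ℝ) (hk : 0 < k) (hε : 0 < ε) (hβ : 0 < β)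
    (hb : β * (k * A^2) ≤ ε^4) (hp : p^4 ≤ 4 * k^2 * y) (hy : β * y ≤ k^2) (hy0 : 0 ≤ y) :
    A^2 * (-12*ε*p^2*m^2 + 12*β*p^2*m*q - 28/3*A*β*p^3*m*q) + 2*A*ε^2*p*m*q - 2*ε^3*q^2
      ≤ (-(3/2)*ε^3 + (18*A^2+72*k^3)*(β*ε) + 88*A^2*k*(β*ε)*(ε^2*y)) * q^2 := by
  have s1 : 2*A*ε^2*p*m*q ≤ 1/2*ε^3*q^2 + 2*A^2*ε*p^2*m^2 := by
    have : 0 ≤ 1/2*ε*(ε*q-2*A*p*m)^2 := by positivity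
    nlinarith
  have s4 : 36*A^2*β*p^2 ≤ (18*A^2+72*k^3)*ε^2 := by
    have h1 : A^2*β^2*p^4 ≤ 4*k^3*ε^4 := by
      calc A^2*β^2*p^4 ≤ A^2*β^2*(4 * k^2 * y) := by gcongr
        _ = 4*k^2*A^2*β*(β*y) := by ring
        _ ≤ 4*k^2*A^2*β*(k^2) := by gcongr
        _ = 4*k^3*(β * (k * A^2)) := by ring
        _ ≤ _ := by gcongr
    have h2 : ε^2*(36*A^2*β*p^2) ≤ ε^2*((18*A^2+72*k^3)*ε^2) := by
      nlinarith [sq_nonneg (A*(ε^2-β*p^2))]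
    exact le_of_mul_le_mul_left h2 (by positivity)
  have s5 : 196/9*A^4*β*p^4 ≤ 88*A^2*k*ε^4*y := by
    calc 196/9*A^4*β*p^4 ≤ 22*A^4*β*p^4 := by gcongr; norm_num
      _ ≤ 22*A^4*β*(4*k^2*y) := by gcongr
      _ = 88*A^2*k*y*(β * (k * A^2)) := by ring
      _ ≤ 88*A^2*k*y*ε^4 := by gcongr
      _ = _ := by ring
  have t2 : ε*(A^2*(12*β*p^2*m*q)) ≤ ε*(A^2*ε*p^2*m^2 + (18*A^2+72*k^3)*(β*ε)*q^2) := by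
    have : (36*A^2*β*p^2)*(β*q^2) ≤ ((18*A^2+72*k^3)*ε^2)*(β*q^2) := by gcongr
    nlinarith [sq_nonneg (A*p*(ε*m-6*β*q))]
  have t3 : ε*(A^2*(-28/3*A*β*p^3*m*q)) ≤ ε*(A^2*ε*p^2*m^2 + 88*A^2*k*(β*ε)*(ε^2*y)*q^2) := by
    have : (196/9*A^4*β*p^4)*(β*q^2) ≤ (88*A^2*k*ε^4*y)*(β*q^2) := by gcongr
    nlinarith [sq_nonneg (A*p*(ε*m+14/3*A*β*p*q))]
  have t2' := le_of_mul_le_mul_left t2 hε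
  have t3' := le_of_mul_le_mul_left t3 hε
  have : 0 ≤ A^2*ε*p^2*m^2 := by positivity
  nlinarith

lemma energy_id {r A β ε : ℝ} (a0 a1 a2 a3 b : ℝ → ℝ)
    (c0 : Continuous a0) (c1 : Continuous a1) (c2 : Continuous a2) (c3 : Continuous a3)
    (h0 : ∀ x, HasDerivAt a0 (a1 x) x) (h1 : ∀ x, HasDerivAt a1 (a2 x) x) (h2 : ∀ x, HasDerivAt a2 (a3 x) x)
    (z0 : a0 r = 0) (z0' : a0 (-r) = 0) (z1 : a1 r = 0) (z1' : a1 (-r) = 0) (z2 : a2 r = 0) (z2' : a2 (-r) = 0)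
    (hb : ∀ x, b x = -A*a0 x*a1 x - β*a3 x + 2*A/3*β*(a1 x*a2 x+a0 x*a3 x) - A/3*β*a1 x*a2 x + ε*a2 x) :
    ∫ x in (-r)..r, (2*a0 x*b x - 2*β*a2 x*b x) = ∫ x in (-r)..r, (-2*ε*a1 x^2 - 2*β*ε*a2 x^2) := by
  obtain rfl : b = fun x => _ := funext hb
  apply int_exact _ _ (fun x => -(2*A/3)*a0 x^3 + (-2*β)*(a0 x*a2 x) + β*a1 x^2 + 2*ε*(a0 x*a1 x)
    + 4*A/3*β*(a0 x^2*a2 x) + β^2*a2 x^2 + (-(2*A/3)*β^2)*(a0 x*a2 x^2)) (by fun_prop) (by fun_prop)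
  · intro x
    have := (((((((h0 x).pow 3).const_mul (-(2*A/3))).add (((h0 x).mul (h2 x)).const_mul (-2*β))).add
      (((h1 x).pow 2).const_mul β)).add (((h0 x).mul (h1 x)).const_mul (2*ε))).add
      ((((h0 x).pow 2).mul (h2 x)).const_mul (4*A/3*β))).add (((h2 x).pow 2).const_mul (β^2)) |>.add
      (((h0 x).mul ((h2 x).pow 2)).const_mul (-(2*A/3)*β^2))
    exact this.congr_deriv (by simp; ring)
  · simp [z0, z1, z2]
  · simp [z0', z1', z2']

lemma four_id {r A β ε : ℝ} (a0 a1 a2 a3 b : ℝ → ℝ)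
    (c0 : Continuous a0) (c1 : Continuous a1) (c2 : Continuous a2) (c3 : Continuous a3)
    (h0 : ∀ x, HasDerivAt a0 (a1 x) x) (h1 : ∀ x, HasDerivAt a1 (a2 x) x) (h2 : ∀ x, HasDerivAt a2 (a3 x) x)
    (z0 : a0 r = 0) (z0' : a0 (-r) = 0) (z2 : a2 r = 0) (z2' : a2 (-r) = 0)
    (hb : ∀ x, b x = -A*a0 x*a1 x - β*a3 x + 2*A/3*β*(a1 x*a2 x+a0 x*a3 x) - A/3*β*a1 x*a2 x + ε*a2 x) :
    ∫ x in (-r)..r, (A^2*(4*a0 x^3*b x) - ε^2*(2*a2 x*b x)) = ∫ x in (-r)..r,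
      (A^2 * (-12*ε*a0 x^2*a1 x^2 + 12*β*a0 x^2*a1 x*a2 x - 28/3*A*β*a0 x^3*a1 x*a2 x) + 2*A*ε^2*a0 x*a1 x*a2 x - 2*ε^3*a2 x^2) := by
  obtain rfl : b = fun x => _ := funext hb
  apply int_exact _ _ (fun x => A^2*(-4*A/5)*a0 x^5 + A^2*(-4*β)*(a0 x^3*a2 x) + A^2*(8*A/3*β)*(a0 x^4*a2 x)
    + A^2*(4*ε)*(a0 x^3*a1 x) + ε^2*β*a2 x^2 + (-(2*A/3)*β*ε^2)*(a0 x*a2 x^2)) (by fun_prop) (by fun_prop)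
  · intro x
    have := ((((((h0 x).pow 5).const_mul (A^2*(-4*A/5))).add ((((h0 x).pow 3).mul (h2 x)).const_mul (A^2*(-4*β)))).add
      ((((h0 x).pow 4).mul (h2 x)).const_mul (A^2*(8*A/3*β)))).add ((((h0 x).pow 3).mul (h1 x)).const_mul (A^2*(4*ε)))).add
      (((h2 x).pow 2).const_mul (ε^2*β)) |>.add
      (((h0 x).mul ((h2 x).pow 2)).const_mul (-(2*A/3)*β*ε^2))
    exact this.congr_deriv (by simp; ring)
  · simp [z0, z2]
  · simp [z0', z2']

lemma u_sq_deriv {r : ℝ} (hr : 0 ≤ r) (u : ℝ → ℝ → ℝ) (hu : Sm u) (z : ∀ t, uX u t r = 0) (z' : ∀ t, uX u t (-r) = 0)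
    (t : ℝ) : HasDerivAt (fun t => ∫ x in (-r)..r, uX u t x ^ 2)
      (∫ x in (-r)..r, -(2 * uX (uX u) t x * uT u t x)) t := by
  have cX := hu.uX.cont
  have cXT := hu.uX.uT.cont
  have e : ∫ x in (-r)..r, -(2 * uX (uX u) t x * uT u t x) = ∫ x in (-r)..r, 2 * uX u t x * uT (uX u) t x := by
    symm
    have := hu.uX.contX t
    have := hu.uX.uX.contX t
    have := hu.uT.contX t
    have := hu.uX.uT.contX t
    apply int_exact _ _ (fun x => 2 * (uX u t x * uT u t x)) (by fun_prop) (by fun_prop)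
    · intro x
      refine (((hu.uX.dX t x).mul (hu.uT.dX t x)).const_mul 2).congr_deriv ?_
      rw [hu.comm]; ring
    · simp [z]
    · simp [z']
  rw [e]
  apply int_hasDeriv (fun t x => uX u t x ^ 2) (fun t x => 2 * uX u t x * uT (uX u) t x) _ _ (by linarith)
  · exact cX.pow 2
  · exact (continuous_const.mul cX).mul cXT
  · intro t x
    exact ((hu.uX.dT t x).pow 2).congr_deriv (by simp)

lemma u_pow_deriv {r : ℝ} (hr : 0 ≤ r) (u : ℝ → ℝ → ℝ) (hu : Sm u) (j : ℕ)
    (t : ℝ) : HasDerivAt (fun t => ∫ x in (-r)..r, u t x ^ (j+1))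
      (∫ x in (-r)..r, (j+1) * u t x ^ j * uT u t x) t := by
  have cX := hu.cont
  have cXT := hu.uT.cont
  apply int_hasDeriv (fun t x => u t x ^ (j+1)) (fun t x => (j+1) * u t x ^ j * uT u t x) _ _ (by linarith)
  · exact cX.pow _
  · exact (continuous_const.mul (cX.pow _)).mul cXT
  · intro t x
    exact ((hu.dT t x).pow (j+1)).congr_deriv (by simp)

set_option maxHeartbeats 2000000 in
lemma core (A C₀ ε β r : ℝ) (u : ℝ → ℝ → ℝ) (hA : A ≠ 0) (hC₀ : 0 < C₀) (hε : 0 < ε) (hβ : 0 < β) (hr : 0 ≤ r)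
    (hu : Sm u) (z0 : ∀ t, u t r = 0) (z0' : ∀ t, u t (-r) = 0)
    (z1 : ∀ t, uX u t r = 0) (z1' : ∀ t, uX u t (-r) = 0)
    (z2 : ∀ t, uX (uX u) t r = 0) (z2' : ∀ t, uX (uX u) t (-r) = 0)
    (hb : ∀ t, 0 ≤ t → ∀ x, uT u t x = -A*u t x*uX u t x - β*uX (uX (uX u)) t x
      + 2*A/3*β*(uX u t x*uX (uX u) t x+u t x*uX (uX (uX u)) t x) - A/3*β*uX u t x*uX (uX u) t x + ε*uX (uX u) t x)
    (hin : (∫ x in (-r)..r, u 0 x ^ 2) + (∫ x in (-r)..r, u 0 x ^ 4) + (β + ε^2) * (∫ x in (-r)..r, uX u 0 x ^ 2) ≤ C₀)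
    (hβε : β ≤ ε ^ 4 / (Real.sqrt C₀ * A ^ 2)) (t : ℝ) (ht : 0 ≤ t) :
    β * (∫ s in (0:ℝ)..t, ∫ x in (-r)..r, |uX u s x| * |uX (uX u) s x|) ≤
     (Real.exp (44 * A^2 * Real.sqrt C₀ * C₀) * ((A^2+1)*C₀ + ((18*A^2+72*Real.sqrt C₀^3)/2+1/2) * C₀) / (2 * (Real.sqrt C₀ * A^2))) * ε^2 := by
  set k := Real.sqrt C₀ with hk
  have hkpos : 0 < k := Real.sqrt_pos.2 hC₀
  have hkC : k^2 = C₀ := Real.sq_sqrt hC₀.le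
  have hA2 : 0 < A^2 := by positivity
  have hbk : β * (k * A^2) ≤ ε^4 := (le_div_iff₀ (by positivity)).1 hβε
  set n : ℝ → ℝ := fun t => ∫ x in (-r)..r, u t x ^ 2 with hn
  set P : ℝ → ℝ := fun t => ∫ x in (-r)..r, u t x ^ 4 with hP
  set y : ℝ → ℝ := fun t => ∫ x in (-r)..r, uX u t x ^ 2 with hy
  set z : ℝ → ℝ := fun t => ∫ x in (-r)..r, uX (uX u) t x ^ 2 with hz
  set J : ℝ → ℝ := fun t => ∫ x in (-r)..r, |uX u t x| * |uX (uX u) t x| with hJ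
  have hrr : -r ≤ r := by linarith
  have n0 : ∀ t, 0 ≤ n t := fun t => intervalIntegral.integral_nonneg hrr fun x _ => by positivity
  have P0 : ∀ t, 0 ≤ P t := fun t => intervalIntegral.integral_nonneg hrr fun x _ => by positivity
  have y0 : ∀ t, 0 ≤ y t := fun t => intervalIntegral.integral_nonneg hrr fun x _ => by positivity
  have zz0 : ∀ t, 0 ≤ z t := fun t => intervalIntegral.integral_nonneg hrr fun x _ => by positivity
  have c0 := hu.contX
  have c1 := hu.uX.contX
  have c2 := hu.uX.uX.contX
  have c3 := hu.uX.uX.uX.contX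
  have cb := hu.uT.contX
  have ii : ∀ {f : ℝ → ℝ}, Continuous f → IntervalIntegrable f volume (-r) r := fun h => h.intervalIntegrable _ _
  set n' : ℝ → ℝ := fun t => ∫ x in (-r)..r, 2 * u t x * uT u t x with hn'
  set P' : ℝ → ℝ := fun t => ∫ x in (-r)..r, 4 * u t x ^ 3 * uT u t x with hP'
  set y' : ℝ → ℝ := fun t => ∫ x in (-r)..r, -(2 * uX (uX u) t x * uT u t x) with hy'
  have dn : ∀ t, HasDerivAt n (n' t) t := by
    intro t
    have := u_pow_deriv hr u hu 1 t
    norm_num at this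
    exact this
  have dP : ∀ t, HasDerivAt P (P' t) t := by
    intro t
    have := u_pow_deriv hr u hu 3 t
    norm_num at this
    exact this
  have dy : ∀ t, HasDerivAt y (y' t) t := u_sq_deriv hr u hu z1 z1'
  have he' : ∀ t, 0 ≤ t → n' t + β * y' t = -2 * (ε * y t + β * ε * z t) := by
    intro t ht
    have := energy_id (r := r) (u t) (uX u t) (uX (uX u) t) (uX (uX (uX u)) t) (uT u t) (c0 t) (c1 t) (c2 t) (c3 t)
      (hu.dX t) (hu.uX.dX t) (hu.uX.uX.dX t) (z0 t) (z0' t) (z1 t) (z1' t) (z2 t) (z2' t) (hb t ht)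
    have c0 := c0 t
    have c1 := c1 t
    have c2 := c2 t
    have cb := cb t
    rw [hn', hy', hy, hz]
    simp only
    calc _ = ∫ x in (-r)..r, (2*u t x*uT u t x - 2*β*uX (uX u) t x*uT u t x) := by
          rw [← intervalIntegral.integral_const_mul, ← intervalIntegral.integral_add (ii (by fun_prop)) (ii (by fun_prop))]
          congr 1; ext x; ring
      _ = _ := this
      _ = _ := by
          rw [← intervalIntegral.integral_const_mul, ← intervalIntegral.integral_const_mul,
            ← intervalIntegral.integral_add (ii (by fun_prop)) (ii (by fun_prop)), ← intervalIntegral.integral_const_mul]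
          congr 1; ext x; ring
  set e : ℝ → ℝ := fun t => n t + β * y t with hedef
  have de : ∀ t, HasDerivAt e (n' t + β * y' t) t := fun t => (dn t).add ((dy t).const_mul β)
  have e0 : ∀ t, 0 ≤ e t := fun t => add_nonneg (n0 t) (mul_nonneg hβ.le (y0 t))
  have eanti : AntitoneOn e (Set.Ici 0) := by
    apply antitoneOn_of_deriv_nonpos (convex_Ici 0)
    · exact fun t _ => (de t).continuousAt.continuousWithinAt
    · exact fun t _ => (de t).differentiableAt.differentiableWithinAt
    · intro t ht
      rw [interior_Ici] at ht
      rw [(de t).deriv, he' t (le_of_lt ht)]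
      have := y0 t; have := zz0 t
      have : 0 ≤ ε * y t + β * ε * z t := by positivity
      linarith
  have hin0 : n 0 + P 0 + (β + ε^2) * y 0 ≤ C₀ := hin
  have hεy : 0 ≤ ε^2 * y 0 := mul_nonneg (by positivity) (y0 0)
  have hβy : 0 ≤ β * y 0 := mul_nonneg hβ.le (y0 0)
  have ee0 : e 0 ≤ C₀ := by
    have := P0 0
    simp only [hedef]; nlinarith
  have eC : ∀ t, 0 ≤ t → e t ≤ C₀ := fun t ht =>
    (eanti (Set.mem_Ici.2 le_rfl) (Set.mem_Ici.2 ht) ht).trans ee0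
  have hnC : ∀ t, 0 ≤ t → n t ≤ C₀ := fun t ht => by
    have := eC t ht
    have := mul_nonneg hβ.le (y0 t)
    simp only [hedef] at *; linarith
  have hyC : ∀ t, 0 ≤ t → β * y t ≤ C₀ := fun t ht => by
    have := eC t ht
    have := n0 t
    simp only [hedef] at *; linarith
  have hF' : ∀ t, 0 ≤ t → A^2 * P' t + ε^2 * y' t ≤
      (-(3/2)*ε^3 + (18*A^2+72*k^3)*(β*ε) + 88*A^2*k*(β*ε)*(ε^2*y t)) * z t := by
    intro t ht
    have := four_id (r := r) (u t) (uX u t) (uX (uX u) t) (uX (uX (uX u)) t) (uT u t) (c0 t) (c1 t) (c2 t) (c3 t)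
      (hu.dX t) (hu.uX.dX t) (hu.uX.uX.dX t) (z0 t) (z0' t) (z2 t) (z2' t) (hb t ht)
    have hs := sup_bound hr (u t) (uX u t) (c0 t) (c1 t) (hu.dX t) (z0' t)
    have c0 := c0 t
    have c1 := c1 t
    have c2 := c2 t
    have cb := cb t
    calc _ = ∫ x in (-r)..r, (A^2*(4*u t x^3*uT u t x) - ε^2*(2*uX (uX u) t x*uT u t x)) := by
          rw [hP', hy']
          simp only
          rw [← intervalIntegral.integral_const_mul, ← intervalIntegral.integral_const_mul,
            ← intervalIntegral.integral_add (ii (by fun_prop)) (ii (by fun_prop))]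
          congr 1; ext x; ring
      _ = _ := this
      _ ≤ ∫ x in (-r)..r, (-(3/2)*ε^3 + (18*A^2+72*k^3)*(β*ε) + 88*A^2*k*(β*ε)*(ε^2*y t)) * uX (uX u) t x ^ 2 := by
          apply intervalIntegral.integral_mono_on hrr (ii (by fun_prop)) (ii (by fun_prop))
          intro x hx
          apply pointwise A k ε β _ _ _ _ hkpos hε hβ hbk _ _ (y0 t)
          · refine (hs x hx).trans ?_
            rw [hkC]
            exact mul_le_mul_of_nonneg_right (mul_le_mul_of_nonneg_left (hnC t ht) (by norm_num)) (y0 t)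
          · rw [hkC]; exact hyC t ht
      _ = _ := by rw [intervalIntegral.integral_const_mul]
  set l := 44 * A^2 * k with hl
  set c1' := 18*A^2+72*k^3 with hc1
  set μ := c1'/2 + 1/2 with hμ
  have hl0 : 0 ≤ l := by positivity
  have hc10 : 0 ≤ c1' := by positivity
  have hμ0 : 0 ≤ μ := by positivity
  set F : ℝ → ℝ := fun t => A^2 * P t + ε^2 * y t with hF
  have dF : ∀ t, HasDerivAt F (A^2 * P' t + ε^2 * y' t) t := fun t => ((dP t).const_mul _).add ((dy t).const_mul _)
  have F0 : ∀ t, 0 ≤ F t := fun t => add_nonneg (mul_nonneg hA2.le (P0 t)) (mul_nonneg (by positivity) (y0 t))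
  set Φ : ℝ → ℝ := fun t => Real.exp (l * e t) * (F t + μ * e t) with hΦ
  have dΦ : ∀ t, HasDerivAt Φ (Real.exp (l * e t) * (l * (n' t + β * y' t)) * (F t + μ * e t) +
      Real.exp (l * e t) * (A^2 * P' t + ε^2 * y' t + μ * (n' t + β * y' t))) t := fun t =>
    (((de t).const_mul l).exp).mul ((dF t).add ((de t).const_mul μ))
  have hΦ' : ∀ t, 0 ≤ t → Real.exp (l * e t) * (l * (n' t + β * y' t)) * (F t + μ * e t) +
      Real.exp (l * e t) * (A^2 * P' t + ε^2 * y' t + μ * (n' t + β * y' t)) ≤ -(ε * y t + ε^3 * z t) := by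
    intro t ht
    have h1 := hF' t ht
    rw [he' t ht]
    have hyt := y0 t
    have hzt := zz0 t
    have hFt : ε^2 * y t ≤ F t := by
      have := mul_nonneg hA2.le (P0 t)
      simp only [hF]; linarith
    have h2 : 88*A^2*k*(β*ε)*(ε^2*y t) * z t ≤ 2 * l * (β*ε) * F t * z t := by
      rw [hl]
      have : 88*A^2*k*(β*ε)*(ε^2*y t) * z t ≤ 88*A^2*k*(β*ε)*(F t) * z t := by gcongr
      linarith
    have hB : l * (-2 * (ε * y t + β * ε * z t)) * (F t + μ * e t) +
        (A^2 * P' t + ε^2 * y' t + μ * (-2 * (ε * y t + β * ε * z t))) ≤ -(ε * y t + ε^3 * z t) := by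
      have hFt0 := F0 t
      have het := e0 t
      have q1 : 0 ≤ l * (ε * y t) * (F t + μ * e t) := by positivity
      have q2 : 0 ≤ l * (β * ε * z t) * (μ * e t) := by positivity
      have q3 : 0 ≤ c1' * (ε * y t) := by positivity
      have q4 : 0 ≤ β * ε * z t := by positivity
      have q5 : 0 ≤ ε^3 * z t := by positivity
      rw [hμ] at *
      nlinarith
    have hexp : 1 ≤ Real.exp (l * e t) := Real.one_le_exp (mul_nonneg hl0 (e0 t))
    have hneg : 0 ≤ ε * y t + ε^3 * z t := by positivity
    have g1 := mul_le_mul_of_nonneg_left hB (Real.exp_pos (l * e t)).le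
    have g2 := mul_le_mul_of_nonneg_right hexp hneg
    linarith
  have cJ : Continuous J := by
    apply intervalIntegral.continuous_parametric_intervalIntegral_of_continuous'
      (f := fun t x => |uX u t x| * |uX (uX u) t x|)
    exact (hu.uX.cont.abs).mul (hu.uX.uX.cont.abs)
  have hJb : ∀ t, 2 * (k * A^2) * (β * J t) ≤ ε^2 * (ε * y t + ε^3 * z t) := by
    intro t
    have c1 := c1 t
    have c2 := c2 t
    have hyt := y0 t
    have hzt := zz0 t
    have j1 : 2 * ε^2 * J t ≤ ε * y t + ε^3 * z t := by
      rw [hJ, hy, hz]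
      simp only
      rw [← intervalIntegral.integral_const_mul, ← intervalIntegral.integral_const_mul, ← intervalIntegral.integral_const_mul,
            ← intervalIntegral.integral_add (ii (by fun_prop)) (ii (by fun_prop))]
      apply intervalIntegral.integral_mono_on hrr (ii (by fun_prop)) (ii (by fun_prop))
      intro x _
      have : 0 ≤ ε * (|uX u t x| - ε * |uX (uX u) t x|)^2 := by positivity
      rw [← sq_abs (uX u t x), ← sq_abs (uX (uX u) t x)]
      nlinarith
    have J0 : 0 ≤ J t := intervalIntegral.integral_nonneg hrr fun x _ => by positivity
    calc 2 * (k * A^2) * (β * J t) = 2 * J t * (β * (k * A^2)) := by ring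
      _ ≤ 2 * J t * ε^4 := by gcongr
      _ = ε^2 * (2 * ε^2 * J t) := by ring
      _ ≤ _ := by gcongr
  set Ψ : ℝ → ℝ := fun t => 2 * (k * A^2) * β * (∫ s in (0:ℝ)..t, J s) + ε^2 * Φ t with hΨ
  have dI : ∀ t, HasDerivAt (fun t => ∫ s in (0:ℝ)..t, J s) (J t) t := fun t =>
    intervalIntegral.integral_hasDerivAt_right (cJ.intervalIntegrable _ _)
      cJ.stronglyMeasurable.stronglyMeasurableAtFilter cJ.continuousAt
  have dΨ := fun t => ((dI t).const_mul (2 * (k * A^2) * β)).add ((dΦ t).const_mul (ε^2))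
  have Ψanti : AntitoneOn Ψ (Set.Ici 0) := by
    apply antitoneOn_of_deriv_nonpos (convex_Ici 0)
    · exact fun t _ => (dΨ t).continuousAt.continuousWithinAt
    · exact fun t _ => (dΨ t).differentiableAt.differentiableWithinAt
    · intro t ht
      rw [interior_Ici] at ht
      rw [show deriv Ψ t = _ from (dΨ t).deriv]
      have h1 := mul_le_mul_of_nonneg_left (hΦ' t (le_of_lt ht)) (sq_nonneg ε)
      have h2 := hJb t
      linarith
  have hfin := Ψanti (Set.mem_Ici.2 le_rfl) (Set.mem_Ici.2 ht) ht
  have hΦt : 0 ≤ Φ t := mul_nonneg (Real.exp_pos _).le (add_nonneg (F0 t) (mul_nonneg hμ0 (e0 t)))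
  have hF00 : F 0 ≤ (A^2+1) * C₀ := by
    have h1 : P 0 ≤ C₀ := by have := n0 0; nlinarith
    have h2 : ε^2 * y 0 ≤ C₀ := by have := n0 0; have := P0 0; nlinarith
    simp only [hF]
    nlinarith
  have hΦ0 : Φ 0 ≤ Real.exp (l * C₀) * ((A^2+1)*C₀ + μ * C₀) := by
    have := F0 0
    have := e0 0
    simp only [hΦ]
    gcongr
  simp only [hΨ, intervalIntegral.integral_same] at hfin
  rw [div_mul_eq_mul_div, le_div_iff₀ (by positivity)]
  have h3 := mul_le_mul_of_nonneg_left hΦ0 (sq_nonneg ε)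
  have h4 := mul_nonneg (sq_nonneg ε) hΦt
  linarith

/-- Estimate `β ∫₀ᵗ ‖∂ₓu ∂ₓ²u‖_{L¹} ds ≤ M ε²`. -/
theorem stmt_10 (A C₀ : ℝ) (hA : A ≠ 0) (hC₀pos : 0 < C₀) :
    ∃ M : ℝ, 0 < M ∧
      ∀ (ε β : ℝ) (u : ℝ → ℝ → ℝ),
        0 < ε → 0 < β →
        ContDiff ℝ (⊤ : ℕ∞) (Function.uncurry u) →
        (∃ R > (0:ℝ), ∀ t x : ℝ, R ≤ |x| → u t x = 0) →
        (∀ t : ℝ, 0 ≤ t → ∀ x : ℝ,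
          deriv (fun τ => u τ x) t
            + A * u t x * deriv (u t) x
            + β * deriv (deriv (deriv (u t))) x
            - (2 * A / 3) * β * deriv (fun y => u t y * deriv (deriv (u t)) y) x
            - (-(A / 3)) * β * deriv (u t) x * deriv (deriv (u t)) x
            - ε * deriv (deriv (u t)) x = 0) →
        ((∫ x : ℝ, (u 0 x) ^ 2) + (∫ x : ℝ, (u 0 x) ^ 4)
            + (β + ε ^ 2) * (∫ x : ℝ, (deriv (u 0) x) ^ 2) ≤ C₀) →
        β ≤ ε ^ 4 / (Real.sqrt C₀ * A ^ 2) →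
        ∀ t : ℝ, 0 ≤ t →
          β * (∫ s in (0:ℝ)..t, ∫ x : ℝ, |deriv (u s) x| * |deriv (deriv (u s)) x|) ≤ M * ε ^ 2 := by
  refine ⟨(Real.exp (44 * A^2 * Real.sqrt C₀ * C₀) * ((A^2+1)*C₀ + ((18*A^2+72*Real.sqrt C₀^3)/2+1/2) * C₀)
    / (2 * (Real.sqrt C₀ * A^2))), by positivity, ?_⟩
  intro ε β u hε hβ hu' ⟨R, hR, hsup⟩ hpde hin hβε t ht
  have hu : Sm u := hu'
  have v0 : Vn R u := fun t x hx => hsup t x hx.le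
  have v1 := v0.uX
  have v2 := v1.uX
  have hr : 0 ≤ R + 1 := by linarith
  have r1 : R < |R + 1| := by rw [abs_of_nonneg hr]; linarith
  have r2 : R < |-(R + 1)| := by rw [abs_neg]; exact r1
  have key := core A C₀ ε β (R+1) u hA hC₀pos hε hβ hr hu (fun t => v0 t _ r1) (fun t => v0 t _ r2)
    (fun t => v1 t _ r1) (fun t => v1 t _ r2) (fun t => v2 t _ r1) (fun t => v2 t _ r2) ?_ ?_ hβε t ht
  · convert key using 4 with s
    exact int_eq (R := R) (fun x => |uX u s x| * |uX (uX u) s x|) (fun x hx => by simp [v1 s x hx])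
  · intro t ht x
    have h := hpde t ht x
    have hm : deriv (fun y => u t y * deriv (deriv (u t)) y) x =
        uX u t x * uX (uX u) t x + u t x * uX (uX (uX u)) t x :=
      ((hu.dX t x).mul (hu.uX.uX.dX t x)).deriv
    rw [hm] at h
    have h' : uT u t x + A * u t x * uX u t x + β * uX (uX (uX u)) t x
      - (2 * A / 3) * β * (uX u t x * uX (uX u) t x + u t x * uX (uX (uX u)) t x)
      - (-(A / 3)) * β * uX u t x * uX (uX u) t x - ε * uX (uX u) t x = 0 := h
    linarith
  · rw [← int_eq (R := R) (fun x => u 0 x ^ 2) (fun x hx => by simp [v0 0 x hx]),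
      ← int_eq (R := R) (fun x => u 0 x ^ 4) (fun x hx => by simp [v0 0 x hx]),
      ← int_eq (R := R) (fun x => uX u 0 x ^ 2) (fun x hx => by simp [v1 0 x hx])]
    exact hin
end
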